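/- Let S ∈ [0,T] and let B ⊆ ℝ^d be a Borel set such that for each x ∈ B there exists at most one solution γ of the ODE γ' = V(t,γ) on [0,T] with γ(S) = x. If μ is a probability measure concentrated on B, then there exists at most one nonnegative-measure-valued solution (μ_t) ∈ C([0,T], M⁺(ℝ^d)) of the continuity equation with μ_S = μ. -/

import Mathlib

open MeasureTheory Set
open scoped ENNReal NNReal Topology

noncomputable section

/-- A solution of the ODE `γ' = V(t,γ)` on `[0,T]`, in integral form. -/
def IsSolution {d : ℕ} (T : ℝ) (hT : 0 ≤ T)
    (V : ℝ → EuclideanSpace ℝ (Fin d) → EuclideanSpace ℝ (Fin d))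
    (γ : C(Set.Icc (0:ℝ) T, EuclideanSpace ℝ (Fin d))) : Prop :=
  ∀ t : Set.Icc (0:ℝ) T,
    γ t - γ ⟨0, Set.left_mem_Icc.mpr hT⟩ =
      ∫ s in (0:ℝ)..(t:ℝ), V s (γ (Set.projIcc 0 T hT s))

/-- A (nonnegative-)measure-valued solution of the continuity equation,
in weak (integral) form. -/
def IsMeasureSolution {d : ℕ} (T : ℝ)
    (V : ℝ → EuclideanSpace ℝ (Fin d) → EuclideanSpace ℝ (Fin d))
    (μ : ℝ → Measure (EuclideanSpace ℝ (Fin d))) : Prop :=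
  ∀ u : EuclideanSpace ℝ (Fin d) → ℝ, ContDiff ℝ (⊤ : ℕ∞) u → HasCompactSupport u →
    ∀ s ∈ Set.Icc (0:ℝ) T, ∀ t ∈ Set.Icc (0:ℝ) T,
      (∫ x, u x ∂μ t) - (∫ x, u x ∂μ s) =
        ∫ σ in s..t, ∫ x, fderiv ℝ u x (V σ x) ∂μ σ

/-!
Each solution `μ t` of the continuity equation lifts to a probability measure `ν` on paths whose
marginals are the `μ t` and which charges only solutions of the ODE. Two lifts of solutions with the
same value at time `S` are then concentrated on a set of paths on which evaluation at time `S` is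
injective, and have the same image under this evaluation; by the Lusin–Souslin theorem they are
equal, hence so are all their marginals.

To construct `ν`, first change time so that the field is bounded by `1`. Approximate `V` in
`L¹(dt μ t)` by a smooth field `c`, and test the continuity equation against functions transported
by the Euler steps of `c`: the image of `μ s` under an Euler step is close to `μ t` when tested
against Lipschitz functions. By Kantorovich duality there is a coupling of the two with small
transport cost. Gluing the couplings gives a random chain with marginals exactly `μ (k h)` whose
steps are nearly Euler steps; the laws of its polygonal interpolations are tight, and a limit of
them as `c → V` is the desired `ν`.
-/

namespace ContinuityEquation

open Filter ProbabilityTheory Metric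

/-! ### Smooth approximation -/

section Smoothing

variable {E F : Type*} [NormedAddCommGroup E] [NormedSpace ℝ E] [FiniteDimensional ℝ E]
  [NormedAddCommGroup F] [NormedSpace ℝ F] [CompleteSpace F]

theorem exists_contDiff_lipschitzWith_approx {f : E → F} {K : ℝ≥0} (hf : LipschitzWith K f)
    {ε : ℝ} (hε : 0 < ε) :
    ∃ u : E → F, ContDiff ℝ (⊤ : ℕ∞) u ∧ LipschitzWith K u ∧ (∀ x, ‖u x - f x‖ ≤ ε) ∧
      (HasCompactSupport f → HasCompactSupport u) := by
  borelize E
  let μ : Measure E := Measure.addHaar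
  have hr : 0 < ε / (K + 1) := by positivity
  let φ : ContDiffBump (0 : E) := ⟨ε / (K + 1) / 2, ε / (K + 1), half_pos hr, half_lt_self hr⟩
  have hli : LocallyIntegrable f μ := hf.continuous.locallyIntegrable
  have hcs : HasCompactSupport (φ.normed μ) := φ.hasCompactSupport_normed
  have hce : ConvolutionExists (φ.normed μ) f (.lsmul ℝ ℝ) μ :=
    hcs.convolutionExists_left _ φ.continuous_normed hli
  refine ⟨_, hcs.contDiff_convolution_left (.lsmul ℝ ℝ) φ.contDiff_normed hli, ?_, fun x => ?_,
    hcs.convolution _⟩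
  · refine LipschitzWith.of_dist_le_mul fun x y => ?_
    rw [dist_eq_norm, convolution_def, convolution_def, ← integral_sub (hce x) (hce y)]
    calc _ ≤ ∫ t, φ.normed μ t * (K * dist x y) ∂μ := by
          refine norm_integral_le_of_norm_le (φ.integrable_normed.mul_const _)
            (Eventually.of_forall fun t => ?_)
          rw [ContinuousLinearMap.lsmul_apply, ContinuousLinearMap.lsmul_apply, ← smul_sub,
            norm_smul, Real.norm_of_nonneg (φ.nonneg_normed t), ← dist_eq_norm]
          refine mul_le_mul_of_nonneg_left ?_ (φ.nonneg_normed t)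
          exact (hf.dist_le_mul _ _).trans_eq (by rw [dist_sub_right])
      _ = K * dist x y := by rw [integral_mul_const, φ.integral_normed, one_mul]
  · rw [← dist_eq_norm]
    refine φ.dist_normed_convolution_le hf.continuous.aestronglyMeasurable fun y hy => ?_
    calc dist (f y) (f x) ≤ K * dist y x := hf.dist_le_mul y x
      _ ≤ (K + 1) * (ε / (K + 1)) := by
          gcongr
          · linarith
          · exact (mem_ball.1 hy).le
      _ = ε := by field_simp

theorem exists_contDiff_tendsto_indicator {U : Set E} (hU : IsOpen U) :
    ∃ u : ℕ → E → ℝ, (∀ n, ContDiff ℝ (⊤ : ℕ∞) (u n)) ∧ (∀ n, HasCompactSupport (u n)) ∧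
      (∀ n x, u n x ∈ Icc (0 : ℝ) 1) ∧
      ∀ x, Tendsto (fun n => u n x) atTop (𝓝 (U.indicator (fun _ => (1 : ℝ)) x)) := by
  obtain ⟨f, hfs, hfc, hfr⟩ := hU.exists_contDiff_support_eq (n := (⊤ : ℕ∞))
  let χ : ℕ → ContDiffBump (0 : E) := fun n => ⟨n + 1, n + 2, by positivity, by linarith⟩
  refine ⟨fun n x => χ n x * Real.smoothTransition (n * f x), fun n => ?_, fun n => ?_,
    fun n x => ?_, fun x => ?_⟩
  · exact (χ n).contDiff.mul (Real.smoothTransition.contDiff.comp (contDiff_const.mul hfc))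
  · exact (χ n).hasCompactSupport.mul_right
  · exact ⟨mul_nonneg (χ n).nonneg (Real.smoothTransition.nonneg _),
      mul_le_one₀ (χ n).le_one (Real.smoothTransition.nonneg _) (Real.smoothTransition.le_one _)⟩
  · by_cases hx : x ∈ U
    · rw [indicator_of_mem hx]
      have hfx : 0 < f x := by
        rw [← hfs] at hx
        exact lt_of_le_of_ne (hfr ⟨x, rfl⟩).1 (Ne.symm hx)
      refine tendsto_const_nhds.congr' ?_
      have h1 : ∀ᶠ n : ℕ in atTop, 1 ≤ n * f x :=
        (tendsto_natCast_atTop_atTop.atTop_mul_const hfx).eventually_ge_atTop 1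
      have h2 : ∀ᶠ n : ℕ in atTop, ‖x‖ ≤ n := tendsto_natCast_atTop_atTop.eventually_ge_atTop _
      filter_upwards [h1, h2] with n hn1 hn2
      rw [Real.smoothTransition.one_of_one_le hn1, (χ n).one_of_mem_closedBall, mul_one]
      simp only [mem_closedBall, dist_zero_right, χ]
      linarith
    · rw [indicator_of_notMem hx]
      have : f x = 0 := by rw [← hfs] at hx; simpa using hx
      simp [this, Real.smoothTransition.zero_of_nonpos le_rfl]

theorem tendsto_integral_of_tendsto_indicator {α : Type*} [MeasurableSpace α] {μ : Measure α}
    [IsFiniteMeasure μ] {U : Set α} (hU : MeasurableSet U) {u : ℕ → α → ℝ}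
    (hm : ∀ n, AEStronglyMeasurable (u n) μ) (hI : ∀ n x, u n x ∈ Icc (0 : ℝ) 1)
    (hl : ∀ x, Tendsto (fun n => u n x) atTop (𝓝 (U.indicator (fun _ => (1 : ℝ)) x))) :
    Tendsto (fun n => ∫ x, u n x ∂μ) atTop (𝓝 (μ.real U)) := by
  have h := tendsto_integral_of_dominated_convergence (fun _ => (1 : ℝ)) hm (integrable_const _)
    (fun n => Eventually.of_forall fun x =>
      (Real.norm_of_nonneg (hI n x).1).trans_le (hI n x).2)
    (Eventually.of_forall hl)
  rwa [integral_indicator_const _ hU, smul_eq_mul, mul_one] at h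

variable [MeasurableSpace E] [BorelSpace E]

theorem measure_ext_of_forall_integral_contDiff {μ ν : Measure E} [IsFiniteMeasure μ]
    [IsFiniteMeasure ν]
    (h : ∀ u : E → ℝ, ContDiff ℝ (⊤ : ℕ∞) u → HasCompactSupport u → (∀ x, u x ∈ Icc (0 : ℝ) 1) →
      ∫ x, u x ∂μ = ∫ x, u x ∂ν) : μ = ν := by
  have hopen (U : Set E) (hU : IsOpen U) : μ U = ν U := by
    obtain ⟨u, hc, hs, hI, hl⟩ := exists_contDiff_tendsto_indicator hU
    have hμ := tendsto_integral_of_tendsto_indicator (μ := μ) hU.measurableSet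
      (fun n => (hc n).continuous.aestronglyMeasurable) hI hl
    have hν := tendsto_integral_of_tendsto_indicator (μ := ν) hU.measurableSet
      (fun n => (hc n).continuous.aestronglyMeasurable) hI hl
    exact (measureReal_eq_measureReal_iff).1
      (tendsto_nhds_unique hμ (hν.congr fun n => (h _ (hc n) (hs n) (hI n)).symm))
  exact ext_of_generate_finite _ (BorelSpace.measurable_eq (α := E)) isPiSystem_isOpen
    hopen (hopen _ isOpen_univ)

theorem measurable_of_forall_measurable_integral_contDiff {Ω : Type*} [MeasurableSpace Ω]
    {μ : Ω → Measure E} [∀ ω, IsFiniteMeasure (μ ω)]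
    (h : ∀ u : E → ℝ, ContDiff ℝ (⊤ : ℕ∞) u → HasCompactSupport u →
      Measurable fun ω => ∫ x, u x ∂μ ω) : Measurable μ := by
  have hopen (U : Set E) (hU : IsOpen U) : Measurable fun ω => μ ω U := by
    obtain ⟨u, hc, hs, hI, hl⟩ := exists_contDiff_tendsto_indicator hU
    have hreal : Measurable fun ω => (μ ω).real U :=
      measurable_of_tendsto_metrizable (fun n => h _ (hc n) (hs n))
        (tendsto_pi_nhds.2 fun ω => tendsto_integral_of_tendsto_indicator hU.measurableSet
          (fun n => (hc n).continuous.aestronglyMeasurable) hI hl)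
    have hof (ω) : ENNReal.ofReal ((μ ω).real U) = μ ω U := ofReal_measureReal
    simpa only [hof] using hreal.ennreal_ofReal
  exact Measurable.measure_of_isPiSystem (BorelSpace.measurable_eq (α := E)) isPiSystem_isOpen
    hopen (hopen _ isOpen_univ)

end Smoothing

/-! ### Time-dependent test functions -/

section RealFunctions

-- No integrability of `F` is assumed: the integral over a non-integrable piece is `0`, so there the
-- increment of `I` vanishes.
theorem continuousOn_of_sub_eq_intervalIntegral {a b : ℝ} {I F : ℝ → ℝ}
    (h : ∀ s ∈ Icc a b, ∀ t ∈ Icc a b, I t - I s = ∫ σ in s..t, F σ) :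
    ContinuousOn I (Icc a b) := by
  rcases lt_or_ge b a with hab | hab
  · simp [Icc_eq_empty_of_lt hab]
  have ha : a ∈ Icc a b := left_mem_Icc.2 hab
  have hb : b ∈ Icc a b := right_mem_Icc.2 hab
  by_cases hF : IntervalIntegrable F volume a b
  · have hprim := intervalIntegral.continuousOn_primitive_interval (a := a) (b := b)
      (hF.1.congr_set_ae (by rw [uIcc_of_le hab]; exact Ioc_ae_eq_Icc.symm))
    rw [uIcc_of_le hab] at hprim
    refine (continuousOn_const (c := I a).add hprim).congr fun t ht => ?_
    exact (add_eq_of_eq_sub' (h a ha t ht).symm).symm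
  · have hba : I b - I a = 0 := by rw [h a ha b hb, intervalIntegral.integral_undef hF]
    refine (continuousOn_const (c := I a)).congr fun t ht => ?_
    by_cases hat : IntervalIntegrable F volume a t
    · have htb : I b - I t = 0 := by
        rw [h t ht b hb, intervalIntegral.integral_undef fun htb => hF (hat.trans htb)]
      linarith
    · have hta : I t - I a = 0 := by rw [h a ha t ht, intervalIntegral.integral_undef hat]
      linarith

theorem intervalIntegral_triangle_swap {f : ℝ → ℝ → ℝ} {s t : ℝ} (hst : s ≤ t)
    (hf : IntegrableOn (Function.uncurry f) (Ioc s t ×ˢ Ioc s t)) :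
    ∫ a in s..t, ∫ σ in a..t, f a σ = ∫ σ in s..t, ∫ a in s..σ, f a σ := by
  have hswap := integral_integral_swap (μ := volume.restrict (Ioc s t))
    (ν := volume.restrict (Ioc s t)) (f := fun a σ => (Ioi a).indicator (f a) σ) <| by
      rw [Measure.prod_restrict, ← Measure.volume_eq_prod]
      exact hf.indicator (measurableSet_lt measurable_fst measurable_snd)
  rw [intervalIntegral.integral_of_le hst, intervalIntegral.integral_of_le hst]
  convert hswap using 1
  · refine setIntegral_congr_fun measurableSet_Ioc fun a ha => ?_
    simp only [setIntegral_indicator measurableSet_Ioi, Ioc_inter_Ioi, max_eq_right ha.1.le,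
      intervalIntegral.integral_of_le ha.2]
  · refine setIntegral_congr_fun measurableSet_Ioc fun σ hσ => ?_
    have hind (a : ℝ) : (Ioi a).indicator (f a) σ = (Iio σ).indicator (fun a => f a σ) a := by
      simp only [indicator_apply, mem_Ioi, mem_Iio]
    have hIoo : Ioc s t ∩ Iio σ = Ioo s σ := by
      ext a
      simp only [mem_inter_iff, mem_Ioc, mem_Iio, mem_Ioo]
      exact ⟨fun h => ⟨h.1.1, h.2⟩, fun h => ⟨⟨h.1, h.2.le.trans hσ.2⟩, h.2⟩⟩
    simp only [hind, setIntegral_indicator measurableSet_Iio, hIoo,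
      intervalIntegral.integral_of_le hσ.1.le, integral_Ioc_eq_integral_Ioo]

-- `F'` and `G` stand for the partial derivatives of `F`, and `G'` for the mixed one.
theorem sub_diag_eq_intervalIntegral {F F' G G' : ℝ → ℝ → ℝ} {s t : ℝ} (hst : s ≤ t)
    (hF : F t t - F s t = ∫ a in s..t, F' a t) (hG : F s t - F s s = ∫ σ in s..t, G s σ)
    (hF' : ∀ a ∈ Icc s t, F' a t - F' a a = ∫ σ in a..t, G' a σ)
    (hG' : ∀ σ ∈ Icc s t, G σ σ - G s σ = ∫ a in s..σ, G' a σ)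
    (hFt : IntervalIntegrable (fun a => F' a t) volume s t)
    (hFd : IntervalIntegrable (fun a => F' a a) volume s t)
    (hGs : IntervalIntegrable (fun σ => G s σ) volume s t)
    (hGd : IntervalIntegrable (fun σ => G σ σ) volume s t)
    (hGi : IntegrableOn (Function.uncurry G') (Ioc s t ×ˢ Ioc s t)) :
    F t t - F s s = ∫ σ in s..t, (F' σ σ + G σ σ) := by
  have hswap : ∫ a in s..t, (F' a t - F' a a) = ∫ σ in s..t, (G σ σ - G s σ) := by
    rw [intervalIntegral.integral_congr (g := fun a => ∫ σ in a..t, G' a σ) fun a ha =>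
        hF' a (uIcc_of_le hst ▸ ha),
      intervalIntegral.integral_congr (g := fun σ => ∫ a in s..σ, G' a σ) fun σ hσ =>
        hG' σ (uIcc_of_le hst ▸ hσ), intervalIntegral_triangle_swap hst hGi]
  rw [intervalIntegral.integral_sub hFt hFd, intervalIntegral.integral_sub hGd hGs] at hswap
  rw [intervalIntegral.integral_add hFd hGd]
  linarith

end RealFunctions

section Support

variable {E : Type*} [NormedAddCommGroup E] [MeasurableSpace E]

theorem abs_integral_le_of_support {μ : Measure E} [IsFiniteMeasure μ] {f : E → ℝ} {C R : ℝ}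
    (hC : ∀ x, |f x| ≤ C) (hR : ∀ x, R < ‖x‖ → f x = 0) :
    |∫ x, f x ∂μ| ≤ C * μ.real (closedBall 0 R) := by
  rw [← setIntegral_eq_integral_of_forall_compl_eq_zero (s := closedBall (0 : E) R)
    (fun x hx => hR x (by simpa using hx)), ← Real.norm_eq_abs]
  exact norm_setIntegral_le_of_norm_le_const (measure_lt_top _ _) fun x _ => hC x

theorem integrableOn_integral_kernel_of_support {α : Type*} [MeasurableSpace α]
    {ν : Measure α} {κ : Kernel α E} [IsSFiniteKernel κ] {A : Set α}
    (hA : MeasurableSet A) (hνA : ν A < ⊤) {f : α × E → ℝ} (hf : Measurable f) {C M R : ℝ}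
    (hκ : ∀ a, IsFiniteMeasure (κ a)) (hM : ∀ a ∈ A, (κ a).real (closedBall 0 R) ≤ M)
    (hC : ∀ a ∈ A, ∀ x, |f (a, x)| ≤ C) (hR : ∀ a ∈ A, ∀ x, R < ‖x‖ → f (a, x) = 0) :
    IntegrableOn (fun a => ∫ x, f (a, x) ∂κ a) A ν := by
  refine Measure.integrableOn_of_bounded (M := C * M) hνA.ne
    (StronglyMeasurable.integral_kernel_prod_right' hf.stronglyMeasurable).aestronglyMeasurable
    ((ae_restrict_iff' hA).2 (Eventually.of_forall fun a ha => ?_))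
  have hC0 : 0 ≤ C := (abs_nonneg _).trans (hC a ha 0)
  exact (abs_integral_le_of_support (hC a ha) (hR a ha)).trans
    (mul_le_mul_of_nonneg_left (hM a ha) hC0)

end Support

theorem integral_sub_eq_intervalIntegral_of_hasDerivAt {α : Type*} [MeasurableSpace α]
    {μ : Measure α} [IsFiniteMeasure μ] {f f' : ℝ × α → ℝ} {s t : ℝ} (hst : s ≤ t)
    (hf : ∀ a ∈ Icc s t, Integrable (fun x => f (a, x)) μ) (hf' : Measurable f') {C : ℝ}
    (hC : ∀ a ∈ Icc s t, ∀ x, |f' (a, x)| ≤ C)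
    (hd : ∀ x, ∀ a ∈ Icc s t, HasDerivAt (fun a => f (a, x)) (f' (a, x)) a) :
    (∫ x, f (t, x) ∂μ) - ∫ x, f (s, x) ∂μ = ∫ a in s..t, ∫ x, f' (a, x) ∂μ := by
  have h_int : Integrable (Function.uncurry fun a x => f' (a, x))
      ((volume.restrict (uIoc s t)).prod μ) := by
    rw [uIoc_of_le hst]
    have hae : ∀ᵐ p ∂(volume.restrict (Ioc s t)).prod μ, p.1 ∈ Ioc s t :=
      Measure.quasiMeasurePreserving_fst.ae (ae_restrict_mem measurableSet_Ioc)
    exact Integrable.of_bound hf'.aestronglyMeasurable C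
      (hae.mono fun p hp => hC p.1 (Ioc_subset_Icc_self hp) p.2)
  rw [intervalIntegral_integral_swap h_int, ← integral_sub (hf t (right_mem_Icc.2 hst))
    (hf s (left_mem_Icc.2 hst))]
  refine integral_congr_ae (Eventually.of_forall fun x => ?_)
  refine (intervalIntegral.integral_eq_sub_of_hasDerivAt
    (fun a ha => hd x a (uIcc_of_le hst ▸ ha)) ?_).symm
  rw [intervalIntegrable_iff_integrableOn_Ioc_of_le hst]
  refine Measure.integrableOn_of_bounded (M := C) (by simp)
    (hf'.comp measurable_prodMk_right).aestronglyMeasurable ?_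
  exact (ae_restrict_iff' measurableSet_Ioc).2
    (Eventually.of_forall fun a ha => hC a (Ioc_subset_Icc_self ha) x)

section Calculus

variable {E F : Type*} [NormedAddCommGroup E] [NormedAddCommGroup F] {s t R : ℝ}

theorem exists_norm_le_of_support [ProperSpace E] {f : ℝ × E → F} (hf : Continuous f)
    (hR : ∀ a ∈ Icc s t, ∀ x, R < ‖x‖ → f (a, x) = 0) :
    ∃ C, ∀ a ∈ Icc s t, ∀ x, ‖f (a, x)‖ ≤ C := by
  have hK : IsCompact (Icc s t ×ˢ closedBall (0 : E) R) := isCompact_Icc.prod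
    (isCompact_closedBall 0 R)
  obtain ⟨C, hC⟩ := hK.exists_bound_of_continuousOn hf.continuousOn
  refine ⟨|C|, fun a ha x => ?_⟩
  by_cases hx : R < ‖x‖
  · simp [hR a ha x hx]
  · exact (hC (a, x) ⟨ha, by simpa using hx⟩).trans (le_abs_self C)

theorem fderiv_eq_zero_of_support [NormedSpace ℝ E] [NormedSpace ℝ F] (hst : s < t) {f : ℝ × E → F}
    (hf : Differentiable ℝ f) (hR : ∀ a ∈ Icc s t, ∀ x, R < ‖x‖ → f (a, x) = 0) :
    ∀ a ∈ Icc s t, ∀ x, R < ‖x‖ → fderiv ℝ f (a, x) = 0 := by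
  intro a ha x hx
  have hopen : IsOpen {x : E | R < ‖x‖} := isOpen_lt continuous_const continuous_norm
  have hu : UniqueDiffWithinAt ℝ (Icc s t ×ˢ {x : E | R < ‖x‖}) (a, x) :=
    (uniqueDiffOn_Icc hst a ha).prod (hopen.uniqueDiffWithinAt hx)
  rw [← (hf (a, x)).fderivWithin hu, fderivWithin_congr (f := fun _ => 0)
    (fun p hp => hR p.1 hp.1 p.2 hp.2) (hR a ha x hx), fderivWithin_const_apply]

end Calculus

/-- The family of measures `μ t` solves the continuity equation `∂ₜμ + div (V μ) = 0` on the set of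
times `I`, weakly in space and in integrated form in time. -/
def IsWeakSolutionOn {E : Type*} [NormedAddCommGroup E] [NormedSpace ℝ E] [MeasurableSpace E]
    (I : Set ℝ) (V : ℝ → E → E) (μ : ℝ → Measure E) : Prop :=
  ∀ u : E → ℝ, ContDiff ℝ (⊤ : ℕ∞) u → HasCompactSupport u → ∀ s ∈ I, ∀ t ∈ I,
    (∫ x, u x ∂μ t) - (∫ x, u x ∂μ s) = ∫ σ in s..t, ∫ x, fderiv ℝ u x (V σ x) ∂μ σ

/-- A family of finite measures `κ t`, `t ∈ ℝ`, solving the continuity equation for the velocity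
field `V`. Speeds are normalised to be at most `1`; the general case is reduced to this one by a
change of time. -/
structure IsCESolution {E : Type*} [NormedAddCommGroup E] [NormedSpace ℝ E] [MeasurableSpace E]
    (V : ℝ → E → E) (κ : Kernel ℝ E) : Prop where
  measurable : Measurable (Function.uncurry V)
  norm_le : ∀ t x, ‖V t x‖ ≤ 1
  finite : ∀ t, IsFiniteMeasure (κ t)
  weak : IsWeakSolutionOn univ V κ

/-- The partial derivative of `φ` with respect to the time variable. -/
def timeDeriv {E : Type*} [NormedAddCommGroup E] [NormedSpace ℝ E] (φ : ℝ × E → ℝ) (p : ℝ × E) :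
    ℝ :=
  fderiv ℝ φ p (1, 0)

section TimeDependent

variable {E : Type*} [NormedAddCommGroup E] [NormedSpace ℝ E] {φ : ℝ × E → ℝ} {s t R : ℝ}

theorem contDiff_timeDeriv (hφ : ContDiff ℝ (⊤ : ℕ∞) φ) : ContDiff ℝ (⊤ : ℕ∞) (timeDeriv φ) :=
  (hφ.fderiv_right (m := (⊤ : ℕ∞)) (by simp)).clm_apply contDiff_const

theorem timeDeriv_eq_zero_of_support (hφ : ContDiff ℝ (⊤ : ℕ∞) φ) (hst : s < t)
    (hR : ∀ a ∈ Icc s t, ∀ x, R < ‖x‖ → φ (a, x) = 0) :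
    ∀ a ∈ Icc s t, ∀ x, R < ‖x‖ → timeDeriv φ (a, x) = 0 := fun a ha x hx => by
  rw [timeDeriv, fderiv_eq_zero_of_support hst (hφ.differentiable (by simp)) hR a ha x hx,
    zero_apply]

theorem hasDerivAt_timeDeriv (hφ : ContDiff ℝ (⊤ : ℕ∞) φ) (x : E) (a : ℝ) :
    HasDerivAt (fun a => φ (a, x)) (timeDeriv φ (a, x)) a :=
  (hφ.differentiable (by simp) (a, x)).hasFDerivAt.comp_hasDerivAt a
    ((hasDerivAt_id a).prodMk (hasDerivAt_const a x))

theorem hasFDerivAt_fderiv (hφ : ContDiff ℝ (⊤ : ℕ∞) φ) (p : ℝ × E) :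
    HasFDerivAt (fderiv ℝ φ) (fderiv ℝ (fderiv ℝ φ) p) p :=
  ((hφ.fderiv_right (m := (⊤ : ℕ∞)) (by simp)).differentiable (by simp) p).hasFDerivAt

theorem fderiv_timeDeriv_apply (hφ : ContDiff ℝ (⊤ : ℕ∞) φ) (p w : ℝ × E) :
    fderiv ℝ (timeDeriv φ) p w = fderiv ℝ (fderiv ℝ φ) p (1, 0) w := by
  have hsymm : IsSymmSndFDerivAt ℝ φ p :=
    hφ.contDiffAt.isSymmSndFDerivAt (by simpa using WithTop.coe_le_coe.2 (le_top (a := (2 : ℕ∞))))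
  have hd : HasFDerivAt (timeDeriv φ) _ p :=
    (hasFDerivAt_fderiv hφ p).clm_apply (hasFDerivAt_const ((1 : ℝ), (0 : E)) p)
  rw [hd.fderiv, ← hsymm.eq]
  simp

theorem hasDerivAt_fderiv_apply (hφ : ContDiff ℝ (⊤ : ℕ∞) φ) (x v : E) (a : ℝ) :
    HasDerivAt (fun a => fderiv ℝ φ (a, x) (0, v)) (fderiv ℝ (timeDeriv φ) (a, x) (0, v)) a := by
  have hd : HasFDerivAt (fun p => fderiv ℝ φ p (0, v)) _ (a, x) :=
    (hasFDerivAt_fderiv hφ (a, x)).clm_apply (hasFDerivAt_const ((0 : ℝ), v) (a, x))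
  have hline : HasDerivAt (fun a => (a, x)) ((1 : ℝ), (0 : E)) a :=
    (hasDerivAt_id a).prodMk (hasDerivAt_const a x)
  rw [fderiv_timeDeriv_apply hφ]
  convert! hd.comp_hasDerivAt a hline using 1
  simp

variable [FiniteDimensional ℝ E]

theorem exists_abs_fderiv_apply_le_of_support (hφ : ContDiff ℝ (⊤ : ℕ∞) φ) (hst : s < t)
    (hR : ∀ a ∈ Icc s t, ∀ x, R < ‖x‖ → φ (a, x) = 0) :
    ∃ C, ∀ a ∈ Icc s t, ∀ x v, ‖v‖ ≤ 1 → |fderiv ℝ φ (a, x) (0, v)| ≤ C := by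
  obtain ⟨C, hC⟩ := exists_norm_le_of_support (hφ.continuous_fderiv (by simp))
    (fderiv_eq_zero_of_support hst (hφ.differentiable (by simp)) hR)
  exact ⟨C, fun a ha x v hv => (ContinuousLinearMap.unit_le_opNorm _ _ (by simpa using hv)).trans
    (hC a ha x)⟩

variable [MeasurableSpace E] {V : ℝ → E → E} {κ : Kernel ℝ E}

theorem IsCESolution.integral_slice_sub (h : IsCESolution V κ) (hφ : ContDiff ℝ (⊤ : ℕ∞) φ)
    {a r r' : ℝ} (hR : ∀ x, R < ‖x‖ → φ (a, x) = 0) :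
    (∫ x, φ (a, x) ∂κ r') - ∫ x, φ (a, x) ∂κ r =
      ∫ σ in r..r', ∫ x, fderiv ℝ φ (a, x) (0, V σ x) ∂κ σ := by
  have hsupp : HasCompactSupport fun x => φ (a, x) :=
    .intro (isCompact_closedBall 0 R) fun x hx => hR x (by simpa using hx)
  have hd (x v : E) : fderiv ℝ (fun x => φ (a, x)) x v = fderiv ℝ φ (a, x) (0, v) := by
    have hcomp : HasFDerivAt (fun x => φ (a, x)) _ x :=
      (hφ.differentiable (by simp) (a, x)).hasFDerivAt.comp x (hasFDerivAt_prodMk_right a x)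
    rw [hcomp.fderiv, ContinuousLinearMap.comp_apply, ContinuousLinearMap.inr_apply]
  simpa only [hd] using h.weak (fun x => φ (a, x)) (hφ.comp (contDiff_prodMk_right a)) hsupp
    r trivial r' trivial

variable [BorelSpace E]

theorem measurable_fderiv_apply {α : Type*} [MeasurableSpace α] (hφ : ContDiff ℝ (⊤ : ℕ∞) φ)
    {p w : α → ℝ × E} (hp : Measurable p) (hw : Measurable w) :
    Measurable fun y => fderiv ℝ φ (p y) (w y) := by
  have hc : Continuous fun q : (ℝ × E) × ℝ × E => fderiv ℝ φ q.1 q.2 :=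
    ((hφ.continuous_fderiv (by simp)).comp continuous_fst).clm_apply continuous_snd
  exact hc.measurable.comp (hp.prodMk hw)

namespace IsCESolution

theorem exists_measureReal_closedBall_le (h : IsCESolution V κ) (a b R : ℝ) :
    ∃ M, ∀ t ∈ Icc a b, (κ t).real (closedBall 0 R) ≤ M := by
  have := h.finite
  let f : ContDiffBump (0 : E) := ⟨|R| + 1, |R| + 2, by positivity, by linarith⟩
  have hc : ContinuousOn (fun t => ∫ x, f x ∂κ t) (Icc a b) :=
    continuousOn_of_sub_eq_intervalIntegral fun s _ t _ =>
      h.weak f f.contDiff f.hasCompactSupport s trivial t trivial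
  obtain ⟨M, hM⟩ := isCompact_Icc.exists_bound_of_continuousOn hc
  refine ⟨M, fun t ht => ?_⟩
  calc (κ t).real (closedBall 0 R) = ∫ x, (closedBall (0 : E) R).indicator 1 x ∂κ t := by
        rw [integral_indicator_one measurableSet_closedBall]
    _ ≤ ∫ x, f x ∂κ t := by
        refine integral_mono ((integrable_const 1).indicator measurableSet_closedBall)
          (f.continuous.integrable_of_hasCompactSupport f.hasCompactSupport)
          (indicator_le' (fun x hx => ?_) fun x _ => f.nonneg)
        refine (f.one_of_mem_closedBall (closedBall_subset_closedBall ?_ hx)).ge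
        exact (le_abs_self R).trans (le_add_of_nonneg_right zero_le_one)
    _ ≤ M := (le_abs_self _).trans (hM t ht)

theorem integrableOn_integral [IsSFiniteKernel κ] (h : IsCESolution V κ) {α : Type*}
    [MeasurableSpace α] {ν : Measure α} {A : Set α} (hA : MeasurableSet A) (hνA : ν A < ⊤)
    {τ : α → ℝ} (hτ : Measurable τ) (hτA : MapsTo τ A (Icc s t))
    {f : α × E → ℝ} (hf : Measurable f) {C : ℝ} (hC : ∀ y ∈ A, ∀ x, |f (y, x)| ≤ C)
    (hR : ∀ y ∈ A, ∀ x, R < ‖x‖ → f (y, x) = 0) :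
    IntegrableOn (fun y => ∫ x, f (y, x) ∂κ (τ y)) A ν := by
  obtain ⟨M, hM⟩ := h.exists_measureReal_closedBall_le s t R
  exact integrableOn_integral_kernel_of_support (κ := κ.comap τ hτ) hA hνA hf
    (fun y => h.finite (τ y)) (fun y hy => hM (τ y) (hτA hy)) hC hR

theorem integrableOn_integral_fderiv [IsSFiniteKernel κ] (h : IsCESolution V κ)
    (hφ : ContDiff ℝ (⊤ : ℕ∞) φ) (hst : s < t) (hR : ∀ a ∈ Icc s t, ∀ x, R < ‖x‖ → φ (a, x) = 0)
    {α : Type*} [MeasurableSpace α] {ν : Measure α} {A : Set α} (hA : MeasurableSet A)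
    (hνA : ν A < ⊤) {a τ : α → ℝ} (ha : Measurable a) (haA : MapsTo a A (Icc s t))
    (hτ : Measurable τ) (hτA : MapsTo τ A (Icc s t)) :
    IntegrableOn (fun y => ∫ x, fderiv ℝ φ (a y, x) (0, V (τ y) x) ∂κ (τ y)) A ν := by
  obtain ⟨C, hC⟩ := exists_abs_fderiv_apply_le_of_support hφ hst hR
  refine h.integrableOn_integral (R := R) (f := fun q => fderiv ℝ φ (a q.1, q.2) (0, V (τ q.1) q.2))
    hA hνA hτ hτA (measurable_fderiv_apply hφ (by fun_prop) ?_)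
    (fun y hy x => hC _ (haA hy) x _ (h.norm_le _ _)) fun y hy x hx => ?_
  · exact measurable_const.prodMk
      (h.measurable.comp ((hτ.comp measurable_fst).prodMk measurable_snd))
  · rw [fderiv_eq_zero_of_support hst (hφ.differentiable (by simp)) hR _ (haA hy) x hx,
      zero_apply]

theorem integral_fderiv_sub (h : IsCESolution V κ)
    (hφ : ContDiff ℝ (⊤ : ℕ∞) φ) (hst : s < t) (hR : ∀ a ∈ Icc s t, ∀ x, R < ‖x‖ → φ (a, x) = 0)
    {σ : ℝ} (hσ : σ ∈ Icc s t) :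
    (∫ x, fderiv ℝ φ (σ, x) (0, V σ x) ∂κ σ) - ∫ x, fderiv ℝ φ (s, x) (0, V σ x) ∂κ σ =
      ∫ a in s..σ, ∫ x, fderiv ℝ (timeDeriv φ) (a, x) (0, V σ x) ∂κ σ := by
  have := h.finite σ
  have hsub : Icc s σ ⊆ Icc s t := Icc_subset_Icc_right hσ.2
  have hVσ : Measurable (V σ) := h.measurable.comp measurable_prodMk_left
  obtain ⟨C, hC⟩ := exists_abs_fderiv_apply_le_of_support hφ hst hR
  obtain ⟨C', hC'⟩ := exists_abs_fderiv_apply_le_of_support (contDiff_timeDeriv hφ) hst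
    (timeDeriv_eq_zero_of_support hφ hst hR)
  refine integral_sub_eq_intervalIntegral_of_hasDerivAt (C := C')
    (f := fun p => fderiv ℝ φ p (0, V σ p.2))
    (f' := fun p => fderiv ℝ (timeDeriv φ) p (0, V σ p.2)) hσ.1 (fun a ha => ?_)
    (measurable_fderiv_apply (contDiff_timeDeriv hφ) measurable_id (by fun_prop))
    (fun a ha x => hC' a (hsub ha) x _ (h.norm_le σ x))
    fun x a _ => hasDerivAt_fderiv_apply hφ x (V σ x) a
  exact .of_bound (measurable_fderiv_apply hφ measurable_prodMk_left
    (by fun_prop)).aestronglyMeasurable C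
    (Eventually.of_forall fun x => hC a (hsub ha) x _ (h.norm_le σ x))

theorem integral_fderiv_one_prodMk (h : IsCESolution V κ) (hφ : ContDiff ℝ (⊤ : ℕ∞) φ)
    (hst : s < t) (hR : ∀ a ∈ Icc s t, ∀ x, R < ‖x‖ → φ (a, x) = 0) {σ : ℝ} (hσ : σ ∈ Icc s t) :
    ∫ x, fderiv ℝ φ (σ, x) (1, V σ x) ∂κ σ =
      (∫ x, timeDeriv φ (σ, x) ∂κ σ) + ∫ x, fderiv ℝ φ (σ, x) (0, V σ x) ∂κ σ := by
  have := h.finite σ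
  have hVσ : Measurable (V σ) := h.measurable.comp measurable_prodMk_left
  have hslice : Continuous fun x => timeDeriv φ (σ, x) :=
    (contDiff_timeDeriv hφ).continuous.comp (by fun_prop)
  obtain ⟨C, hC⟩ := exists_norm_le_of_support (contDiff_timeDeriv hφ).continuous
    (timeDeriv_eq_zero_of_support hφ hst hR)
  obtain ⟨C', hC'⟩ := exists_abs_fderiv_apply_le_of_support hφ hst hR
  rw [← integral_add
    (.of_bound hslice.aestronglyMeasurable C (Eventually.of_forall (hC σ hσ)))
    (.of_bound (measurable_fderiv_apply hφ measurable_prodMk_left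
      (by fun_prop)).aestronglyMeasurable C'
      (Eventually.of_forall fun x => hC' σ hσ x _ (h.norm_le σ x)))]
  refine integral_congr_ae (Eventually.of_forall fun x => ?_)
  simp only [timeDeriv, ← map_add, Prod.mk_add_mk, add_zero, zero_add]

theorem intervalIntegrable_integral_timeDeriv [IsSFiniteKernel κ] (h : IsCESolution V κ)
    (hφ : ContDiff ℝ (⊤ : ℕ∞) φ) (hst : s < t) (hR : ∀ a ∈ Icc s t, ∀ x, R < ‖x‖ → φ (a, x) = 0)
    {τ : ℝ → ℝ} (hτ : Measurable τ) (hτm : MapsTo τ (Icc s t) (Icc s t)) :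
    IntervalIntegrable (fun a => ∫ x, timeDeriv φ (a, x) ∂κ (τ a)) volume s t := by
  have hφ' := (contDiff_timeDeriv hφ).continuous
  have hR' := timeDeriv_eq_zero_of_support hφ hst hR
  obtain ⟨C, hC⟩ := exists_norm_le_of_support hφ' hR'
  exact (intervalIntegrable_iff_integrableOn_Icc_of_le hst.le).2 <| h.integrableOn_integral
    (f := timeDeriv φ) measurableSet_Icc measure_Icc_lt_top hτ hτm hφ'.measurable hC hR'

theorem intervalIntegrable_integral_fderiv [IsSFiniteKernel κ] (h : IsCESolution V κ)
    (hφ : ContDiff ℝ (⊤ : ℕ∞) φ) (hst : s < t) (hR : ∀ a ∈ Icc s t, ∀ x, R < ‖x‖ → φ (a, x) = 0)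
    {a : ℝ → ℝ} (ha : Measurable a) (ham : MapsTo a (Icc s t) (Icc s t)) :
    IntervalIntegrable (fun σ => ∫ x, fderiv ℝ φ (a σ, x) (0, V σ x) ∂κ σ) volume s t :=
  (intervalIntegrable_iff_integrableOn_Icc_of_le hst.le).2 <| h.integrableOn_integral_fderiv hφ hst
    hR measurableSet_Icc measure_Icc_lt_top ha ham measurable_id (mapsTo_id _)

-- Moving the time in the test function and the time in the measure separately, each of the two
-- motions has an integral formula; their mixed terms cancel by Fubini on a triangle.
theorem integral_sub_integral_of_time_dependent [IsSFiniteKernel κ] (h : IsCESolution V κ)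
    (hφ : ContDiff ℝ (⊤ : ℕ∞) φ) (hst : s ≤ t)
    (hR : ∀ a ∈ Icc s t, ∀ x, R < ‖x‖ → φ (a, x) = 0) :
    (∫ x, φ (t, x) ∂κ t) - ∫ x, φ (s, x) ∂κ s =
      ∫ σ in s..t, ∫ x, fderiv ℝ φ (σ, x) (1, V σ x) ∂κ σ := by
  obtain rfl | hlt := hst.eq_or_lt
  · simp
  have := h.finite t
  have hφ' := contDiff_timeDeriv hφ
  have hR' := timeDeriv_eq_zero_of_support hφ hlt hR
  have hs : s ∈ Icc s t := left_mem_Icc.2 hst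
  have ht : t ∈ Icc s t := right_mem_Icc.2 hst
  obtain ⟨C, hC⟩ := exists_norm_le_of_support hφ.continuous hR
  obtain ⟨C', hC'⟩ := exists_norm_le_of_support hφ'.continuous hR'
  have hG' := h.integrableOn_integral_fderiv (ν := (volume : Measure (ℝ × ℝ))) hφ' hlt hR'
    (measurableSet_Ioc (a := s) (b := t) |>.prod (measurableSet_Ioc (a := s) (b := t)))
    (by simp [Measure.volume_eq_prod, ENNReal.mul_lt_top]) measurable_fst
    (fun p hp => Ioc_subset_Icc_self hp.1) measurable_snd (fun p hp => Ioc_subset_Icc_self hp.2)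
  have key := sub_diag_eq_intervalIntegral (F := fun a b => ∫ x, φ (a, x) ∂κ b)
    (F' := fun a b => ∫ x, timeDeriv φ (a, x) ∂κ b)
    (G := fun a σ => ∫ x, fderiv ℝ φ (a, x) (0, V σ x) ∂κ σ)
    (G' := fun a σ => ∫ x, fderiv ℝ (timeDeriv φ) (a, x) (0, V σ x) ∂κ σ) hst
    (integral_sub_eq_intervalIntegral_of_hasDerivAt (f := φ) hst
      (fun a ha => .of_bound (hφ.continuous.comp (by fun_prop)).aestronglyMeasurable C
        (Eventually.of_forall (hC a ha)))
      hφ'.continuous.measurable hC' fun x a _ => hasDerivAt_timeDeriv hφ x a)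
    (h.integral_slice_sub hφ (hR s hs)) (fun a ha => h.integral_slice_sub hφ' (hR' a ha))
    (fun σ hσ => h.integral_fderiv_sub hφ hlt hR hσ)
    (h.intervalIntegrable_integral_timeDeriv hφ hlt hR measurable_const fun _ _ => ht)
    (h.intervalIntegrable_integral_timeDeriv hφ hlt hR measurable_id (mapsTo_id _))
    (h.intervalIntegrable_integral_fderiv hφ hlt hR measurable_const fun _ _ => hs)
    (h.intervalIntegrable_integral_fderiv hφ hlt hR measurable_id (mapsTo_id _)) hG'
  rw [key]
  exact intervalIntegral.integral_congr fun σ hσ =>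
    (h.integral_fderiv_one_prodMk hφ hlt hR (uIcc_of_le hst ▸ hσ)).symm

end IsCESolution

end TimeDependent

/-! ### Conservation of mass -/

section Ball

variable {E : Type*} [NormedAddCommGroup E] [MeasurableSpace E] {μ ν : Measure E}

theorem measure_univ_le_of_closedBall {m : ℝ≥0∞} (h : ∀ R : ℝ, μ (closedBall 0 R) ≤ m) :
    μ univ ≤ m := by
  have hmono : Monotone fun n : ℕ => closedBall (0 : E) n := fun a b hab =>
    closedBall_subset_closedBall (by exact_mod_cast hab)
  rw [← iUnion_closedBall_nat (0 : E), hmono.measure_iUnion]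
  exact iSup_le fun n => h n

theorem measure_closedBall_le_measure_univ_of_integral_le [BorelSpace E]
    [IsFiniteMeasure μ] [IsFiniteMeasure ν]
    {f g : E → ℝ} (hf : Measurable f) (hf01 : ∀ x, f x ∈ Icc 0 1)
    (hg01 : ∀ x, g x ∈ Icc 0 1) {R : ℝ} (hR : ∀ x, ‖x‖ ≤ R → f x = 1)
    (h : ∫ x, f x ∂μ ≤ ∫ x, g x ∂ν) : μ (closedBall 0 R) ≤ ν univ := by
  suffices hreal : μ.real (closedBall 0 R) ≤ ν.real univ from
    (ENNReal.toReal_le_toReal (measure_ne_top _ _) (measure_ne_top _ _)).1 hreal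
  calc μ.real (closedBall 0 R) = ∫ x, (closedBall (0 : E) R).indicator 1 x ∂μ := by
        rw [integral_indicator_one measurableSet_closedBall]
    _ ≤ ∫ x, f x ∂μ := by
        refine integral_mono ((integrable_const 1).indicator measurableSet_closedBall)
          (.of_mem_Icc 0 1 hf.aemeasurable (Eventually.of_forall hf01))
          (indicator_le' (fun x hx => ?_) fun x _ => (hf01 x).1)
        exact (hR x (mem_closedBall_zero_iff.1 hx)).ge
    _ ≤ ∫ x, g x ∂ν := h
    _ ≤ ν.real univ := by
        have hg1 : ∀ᵐ x ∂ν, ‖g x‖ ≤ 1 := Eventually.of_forall fun x => by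
          rw [Real.norm_of_nonneg (hg01 x).1]; exact (hg01 x).2
        simpa using (le_abs_self _).trans (norm_integral_le_of_norm_le_const hg1)

end Ball

section Mass

variable {E : Type*} [NormedAddCommGroup E] [NormedSpace ℝ E]

theorem norm_fderiv_apply_le_of_lipschitzWith {F : Type*} [NormedAddCommGroup F] [NormedSpace ℝ F]
    {u : E → F} {K : ℝ≥0} (hu : LipschitzWith K u) (x : E) {v : E} (hv : ‖v‖ ≤ 1) :
    ‖fderiv ℝ u x v‖ ≤ K :=
  ((fderiv ℝ u x).le_of_opNorm_le_of_le (norm_fderiv_le_of_lipschitz ℝ hu) hv).trans_eq (mul_one _)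

-- A cutoff of the cone `‖x‖ + δ t ≤ a`, whose sides are not crossed outwards at speed at most `1`.
theorem exists_cone_cutoff [FiniteDimensional ℝ E] {δ : ℝ} (hδ : 1 ≤ |δ|) (a : ℝ) :
    ∃ φ : ℝ × E → ℝ, ContDiff ℝ (⊤ : ℕ∞) φ ∧ (∀ p, φ p ∈ Icc 0 1) ∧
      (∀ p : ℝ × E, ‖p.2‖ + δ * p.1 ≤ a → φ p = 1) ∧
      (∀ p : ℝ × E, a + 3 ≤ ‖p.2‖ + δ * p.1 → φ p = 0) ∧
      ∀ p v, ‖v‖ ≤ 1 → δ * fderiv ℝ φ p (1, v) ≤ 0 := by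
  obtain ⟨N, hN, hN1, hN2, -⟩ := exists_contDiff_lipschitzWith_approx (E := E)
    (f := fun x => ‖x‖) lipschitzWith_one_norm one_pos
  let g (p : ℝ × E) : ℝ := a + 2 - (N p.2 + δ * p.1)
  have hNn (x : E) := abs_le.1 (hN2 x)
  refine ⟨fun p => Real.smoothTransition (g p), Real.smoothTransition.contDiff.comp (by fun_prop),
    fun p => ⟨Real.smoothTransition.nonneg _, Real.smoothTransition.le_one _⟩,
    fun p hp => Real.smoothTransition.one_of_one_le (by linarith [(hNn p.2).2]),
    fun p hp => Real.smoothTransition.zero_of_nonpos (by linarith [(hNn p.2).1]), fun p v hv => ?_⟩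
  have hNd : HasFDerivAt N (fderiv ℝ N p.2) p.2 := (hN.differentiable (by simp) p.2).hasFDerivAt
  have hg : HasFDerivAt g _ p :=
    ((hNd.comp p hasFDerivAt_snd).add (hasFDerivAt_fst.const_mul δ)).const_sub (a + 2)
  have hS : HasDerivAt Real.smoothTransition (deriv Real.smoothTransition (g p)) (g p) :=
    ((Real.smoothTransition.contDiff (n := 1)).differentiable (by simp) _).hasDerivAt
  have hS0 : 0 ≤ deriv Real.smoothTransition (g p) :=
    Real.smoothTransition.monotone.deriv_nonneg
  have hslope : 0 ≤ δ * (fderiv ℝ N p.2 v + δ) := by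
    have hN' : |fderiv ℝ N p.2 v| ≤ 1 := norm_fderiv_apply_le_of_lipschitzWith hN1 p.2 hv
    have hmul : |δ * fderiv ℝ N p.2 v| ≤ |δ| := by
      rw [abs_mul]; exact mul_le_of_le_one_right (abs_nonneg _) hN'
    nlinarith [neg_abs_le (δ * fderiv ℝ N p.2 v), abs_mul_abs_self δ]
  have hcomp : HasFDerivAt (fun p => Real.smoothTransition (g p)) _ p := hS.comp_hasFDerivAt p hg
  rw [hcomp.fderiv]
  simp only [smul_apply, neg_apply, add_apply, ContinuousLinearMap.comp_apply,
    ContinuousLinearMap.coe_fst', ContinuousLinearMap.coe_snd', smul_eq_mul, mul_one]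
  linarith [mul_nonneg hS0 hslope]

theorem abs_integral_sub_integral_le_of_abs_sub_le {α : Type*} {mα : MeasurableSpace α}
    {μ : Measure α} [IsProbabilityMeasure μ] {f g : α → ℝ} (hf : Integrable f μ)
    (hg : Integrable g μ) {ε : ℝ} (h : ∀ x, |f x - g x| ≤ ε) :
    |(∫ x, f x ∂μ) - ∫ x, g x ∂μ| ≤ ε := by
  rw [← integral_sub hf hg]
  simpa using norm_integral_le_of_norm_le_const (μ := μ) (f := fun x => f x - g x)
    (Eventually.of_forall h)

variable [MeasurableSpace E] {V : ℝ → E → E} {κ : Kernel ℝ E}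

namespace IsCESolution

theorem abs_integral_sub_integral_le_of_contDiff [IsMarkovKernel κ] (h : IsCESolution V κ)
    {u : E → ℝ} {K : ℝ≥0} (hu : ContDiff ℝ (⊤ : ℕ∞) u) (huK : LipschitzWith K u)
    (huc : HasCompactSupport u) {s t : ℝ} (hst : s ≤ t) :
    |(∫ x, u x ∂κ t) - ∫ x, u x ∂κ s| ≤ K * (t - s) := by
  rw [h.weak u hu huc s trivial t trivial, ← Real.norm_eq_abs, ← abs_of_nonneg (sub_nonneg.2 hst)]
  refine intervalIntegral.norm_integral_le_of_norm_le_const fun σ _ => ?_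
  simpa using norm_integral_le_of_norm_le_const (μ := κ σ) (Eventually.of_forall fun x =>
    norm_fderiv_apply_le_of_lipschitzWith huK x (h.norm_le σ x))

variable [BorelSpace E] [FiniteDimensional ℝ E]

theorem exists_cutoff_mul_integral_sub_le [IsSFiniteKernel κ] (h : IsCESolution V κ) {s t : ℝ}
    (hst : s ≤ t) {δ : ℝ} (hδ : |δ| = 1) (R : ℝ) :
    ∃ φ : ℝ × E → ℝ, Measurable φ ∧ (∀ p, φ p ∈ Icc 0 1) ∧
      (∀ τ ∈ Icc s t, ∀ x, ‖x‖ ≤ R → φ (τ, x) = 1) ∧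
      δ * ((∫ x, φ (t, x) ∂κ t) - ∫ x, φ (s, x) ∂κ s) ≤ 0 := by
  obtain ⟨φ, hφ, h01, h1, h0, hd⟩ := exists_cone_cutoff (E := E) hδ.ge (R + |s| + |t|)
  have hδτ (τ : ℝ) (hτ : τ ∈ Icc s t) : |δ * τ| ≤ |s| + |t| := by
    rw [abs_mul, hδ, one_mul]
    exact (abs_le_max_abs_abs hτ.1 hτ.2).trans
      (max_le_add_of_nonneg (abs_nonneg _) (abs_nonneg _))
  refine ⟨φ, hφ.continuous.measurable, h01, fun τ hτ x hx => h1 _ ?_, ?_⟩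
  · dsimp only
    linarith [(abs_le.1 (hδτ τ hτ)).2]
  rw [h.integral_sub_integral_of_time_dependent hφ hst (R := R + 2 * (|s| + |t|) + 3)
    (fun τ hτ x hx => h0 _ ?_)]
  · rw [← neg_nonneg, ← intervalIntegral.integral_const_mul, ← intervalIntegral.integral_neg]
    refine intervalIntegral.integral_nonneg hst fun σ _ => ?_
    rw [← integral_const_mul, ← integral_neg]
    exact integral_nonneg fun x => neg_nonneg.2 (hd _ _ (h.norm_le σ x))
  · dsimp only
    linarith [(abs_le.1 (hδτ τ hτ)).1]

theorem measure_univ_eq [IsSFiniteKernel κ] (h : IsCESolution V κ) (s t : ℝ) :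
    κ t univ = κ s univ := by
  wlog hst : s ≤ t generalizing s t
  · exact (this t s (le_of_not_ge hst)).symm
  have hκ := h.finite
  refine le_antisymm (measure_univ_le_of_closedBall fun R => ?_)
    (measure_univ_le_of_closedBall fun R => ?_)
  · obtain ⟨φ, hm, h01, h1, hle⟩ := h.exists_cutoff_mul_integral_sub_le hst (abs_one (α := ℝ)) R
    exact measure_closedBall_le_measure_univ_of_integral_le (f := fun x => φ (t, x))
      (g := fun x => φ (s, x)) (by fun_prop) (fun x => h01 _) (fun x => h01 _)
      (h1 t ⟨hst, le_rfl⟩) (by linarith)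
  · obtain ⟨φ, hm, h01, h1, hle⟩ :=
      h.exists_cutoff_mul_integral_sub_le hst (δ := -1) (by simp) R
    exact measure_closedBall_le_measure_univ_of_integral_le (f := fun x => φ (s, x))
      (g := fun x => φ (t, x)) (by fun_prop) (fun x => h01 _) (fun x => h01 _)
      (h1 s ⟨le_rfl, hst⟩) (by linarith)

theorem abs_integral_sub_integral_le [IsMarkovKernel κ] (h : IsCESolution V κ) {f : E → ℝ}
    {K : ℝ≥0} (hf : LipschitzWith K f) (hfc : HasCompactSupport f) {s t : ℝ} (hst : s ≤ t) :
    |(∫ x, f x ∂κ t) - ∫ x, f x ∂κ s| ≤ K * (t - s) := by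
  refine le_of_forall_pos_le_add fun ε hε => ?_
  obtain ⟨u, hu, huK, huf, huc⟩ := exists_contDiff_lipschitzWith_approx hf (half_pos hε)
  have hclose (r : ℝ) : |(∫ x, u x ∂κ r) - ∫ x, f x ∂κ r| ≤ ε / 2 :=
    abs_integral_sub_integral_le_of_abs_sub_le
      (hu.continuous.integrable_of_hasCompactSupport (huc hfc))
      (hf.continuous.integrable_of_hasCompactSupport hfc) huf
  have hu' := abs_le.1 (h.abs_integral_sub_integral_le_of_contDiff hu huK (huc hfc) hst)
  have ht := abs_le.1 (hclose t)
  have hs := abs_le.1 (hclose s)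
  exact abs_le.2 ⟨by linarith, by linarith⟩

end IsCESolution
end Mass

/-! ### One Euler step -/

section EulerStep

theorem intervalIntegrable_integral {E : Type*} [MeasurableSpace E] {κ : Kernel ℝ E}
    [IsMarkovKernel κ] {F : ℝ × E → ℝ} (hF : Measurable F) {C : ℝ} (hC : ∀ z, |F z| ≤ C)
    (s t : ℝ) : IntervalIntegrable (fun σ => ∫ x, F (σ, x) ∂κ σ) volume s t := by
  refine (intervalIntegrable_const (c := C)).mono_fun'
    (StronglyMeasurable.integral_kernel_prod_right' hF.stronglyMeasurable).aestronglyMeasurable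
    (Eventually.of_forall fun σ => ?_)
  simpa using norm_integral_le_of_norm_le_const (μ := κ σ) (f := fun x => F (σ, x))
    (Eventually.of_forall fun x => hC (σ, x))

theorem exists_eq_zero_of_lt_norm {E : Type*} [NormedAddCommGroup E] {u : E → ℝ}
    (huc : HasCompactSupport u) :
    ∃ R : ℝ, ∀ x, R < ‖x‖ → u x = 0 :=
  let ⟨R, hR⟩ := huc.isCompact.isBounded.subset_closedBall 0
  ⟨R, fun _ hx => image_eq_zero_of_notMem_tsupport fun hx' =>
    hx.not_ge (mem_closedBall_zero_iff.1 (hR hx'))⟩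

variable {E : Type*} [NormedAddCommGroup E] [NormedSpace ℝ E] {u : E → ℝ} {c : E → E} {b : ℝ}

theorem fderiv_comp_add_sub_smul_apply {t σ : ℝ} {x : E} (hc : DifferentiableAt ℝ c x)
    (hu : DifferentiableAt ℝ u (x + (t - σ) • c x)) (v : E) :
    fderiv ℝ (fun p : ℝ × E => u (p.2 + (t - p.1) • c p.2)) (σ, x) (1, v) =
      fderiv ℝ u (x + (t - σ) • c x) (v - c x + (t - σ) • fderiv ℝ c x v) := by
  have hstep : HasFDerivAt (fun p : ℝ × E => p.2 + (t - p.1) • c p.2) _ (σ, x) :=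
    (hasFDerivAt_snd (p := (σ, x))).add
      (((hasFDerivAt_fst (p := (σ, x))).const_sub t).smul
        (HasFDerivAt.comp (σ, x) (g := c) hc.hasFDerivAt hasFDerivAt_snd))
  have hcomp : HasFDerivAt (fun p : ℝ × E => u (p.2 + (t - p.1) • c p.2)) _ (σ, x) :=
    HasFDerivAt.comp (σ, x) hu.hasFDerivAt hstep
  rw [hcomp.fderiv, ContinuousLinearMap.comp_apply]
  congr 1
  simp only [add_apply, smul_apply, ContinuousLinearMap.comp_apply, ContinuousLinearMap.coe_fst',
    ContinuousLinearMap.coe_snd', ContinuousLinearMap.smulRight_apply, neg_apply, neg_smul,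
    one_smul]
  abel

theorem abs_fderiv_comp_add_sub_smul_le (hc : Differentiable ℝ c) {L : ℝ≥0}
    (hcL : LipschitzWith L c) (hu : Differentiable ℝ u) (huL : LipschitzWith 1 u) {t σ : ℝ}
    (hσ : σ ≤ t) (x : E) {v : E} (hv : ‖v‖ ≤ 1) :
    |fderiv ℝ (fun p : ℝ × E => u (p.2 + (t - p.1) • c p.2)) (σ, x) (1, v)| ≤
      ‖v - c x‖ + L * (t - σ) := by
  rw [fderiv_comp_add_sub_smul_apply (hc x) (hu _), ← Real.norm_eq_abs]
  refine ((fderiv ℝ u _).le_of_opNorm_le (norm_fderiv_le_of_lipschitz ℝ huL) _).trans ?_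
  rw [NNReal.coe_one, one_mul]
  refine (norm_add_le _ _).trans (add_le_add_right ?_ _)
  rw [norm_smul, Real.norm_of_nonneg (sub_nonneg.2 hσ), mul_comm]
  exact mul_le_mul_of_nonneg_right (norm_fderiv_apply_le_of_lipschitzWith hcL x hv)
    (sub_nonneg.2 hσ)

theorem comp_add_smul_eq_zero_of_support {R r : ℝ} (hR : ∀ x, R < ‖x‖ → u x = 0)
    (hcb : ∀ x, ‖c x‖ ≤ b) {τ : ℝ} (hτ : |τ| ≤ r) {x : E} (hx : R + r * b < ‖x‖) :
    u (x + τ • c x) = 0 := by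
  refine hR _ ?_
  have hstep : ‖τ • c x‖ ≤ r * b := by
    rw [norm_smul]
    exact mul_le_mul hτ (hcb x) (norm_nonneg _) ((abs_nonneg τ).trans hτ)
  linarith [norm_le_add_norm_add x (τ • c x)]

variable [MeasurableSpace E] {V : ℝ → E → E} {κ : Kernel ℝ E}

namespace IsCESolution

variable [BorelSpace E] [FiniteDimensional ℝ E] [IsMarkovKernel κ] {w : ℝ × E → E}

theorem integrable_norm_sub (h : IsCESolution V κ) (hw : Measurable w) (hwb : ∀ p, ‖w p‖ ≤ b)
    (σ : ℝ) : Integrable (fun x => ‖V σ x - w (σ, x)‖) (κ σ) :=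
  .of_bound ((h.measurable.sub hw).norm.comp measurable_prodMk_left).aestronglyMeasurable (1 + b)
    (Eventually.of_forall fun x => by
      rw [norm_norm]
      exact (norm_sub_le _ _).trans (add_le_add (h.norm_le σ x) (hwb _)))

theorem intervalIntegrable_integral_norm_sub (h : IsCESolution V κ) (hw : Measurable w)
    (hwb : ∀ p, ‖w p‖ ≤ b) (s t : ℝ) :
    IntervalIntegrable (fun σ => ∫ x, ‖V σ x - w (σ, x)‖ ∂κ σ) volume s t :=
  intervalIntegrable_integral (F := fun p => ‖V p.1 p.2 - w p‖) (h.measurable.sub hw).norm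
    (fun p => by
      rw [abs_norm]
      exact (norm_sub_le _ _).trans (add_le_add (h.norm_le p.1 p.2) (hwb p))) s t

-- Transport the test function along the Euler step: `φ (σ, x) = u (x + (t - σ) • c x)`.
theorem abs_integral_sub_integral_euler_le_of_contDiff (h : IsCESolution V κ)
    (hu : ContDiff ℝ (⊤ : ℕ∞) u) (huL : LipschitzWith 1 u) (huc : HasCompactSupport u) {L : ℝ≥0}
    (hc : ContDiff ℝ (⊤ : ℕ∞) c) (hcL : LipschitzWith L c) (hcb : ∀ x, ‖c x‖ ≤ b)
    {s t : ℝ} (hst : s ≤ t) :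
    |(∫ x, u x ∂κ t) - ∫ x, u (x + (t - s) • c x) ∂κ s| ≤
      (∫ σ in s..t, ∫ x, ‖V σ x - c x‖ ∂κ σ) + L * (t - s) * (t - s) := by
  obtain ⟨R, hR⟩ := exists_eq_zero_of_lt_norm huc
  let φ (p : ℝ × E) : ℝ := u (p.2 + (t - p.1) • c p.2)
  have hφ : ContDiff ℝ (⊤ : ℕ∞) φ := hu.comp (by fun_prop)
  have hφR : ∀ τ ∈ Icc s t, ∀ x, R + (t - s) * b < ‖x‖ → φ (τ, x) = 0 := fun τ hτ x hx =>
    comp_add_smul_eq_zero_of_support hR hcb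
      (by rw [abs_of_nonneg (sub_nonneg.2 hτ.2)]; exact sub_le_sub_left hτ.1 t) hx
  have hw : Measurable fun p : ℝ × E => c p.2 :=
    hc.continuous.measurable.comp measurable_snd
  have h_int :=
    h.intervalIntegrable_integral_norm_sub (w := fun p => c p.2) hw (fun p => hcb p.2) s t
  have hslice (σ : ℝ) (hσ : σ ∈ Ioc s t) : ‖∫ x, fderiv ℝ φ (σ, x) (1, V σ x) ∂κ σ‖ ≤
      (∫ x, ‖V σ x - c x‖ ∂κ σ) + L * (t - s) := by
    have hi := h.integrable_norm_sub hw (fun p => hcb p.2) σ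
    have hle := norm_integral_le_of_norm_le (f := fun x => fderiv ℝ φ (σ, x) (1, V σ x))
      (hi.add (integrable_const (L * (t - s)))) (Eventually.of_forall fun x =>
        (abs_fderiv_comp_add_sub_smul_le (hc.differentiable (by simp)) hcL
          (hu.differentiable (by simp)) huL hσ.2 x (h.norm_le σ x)).trans
          (add_le_add_right (mul_le_mul_of_nonneg_left (sub_le_sub_left hσ.1.le t) L.2) _))
    refine hle.trans_eq ?_
    rw [integral_add' hi (integrable_const _)]
    simp
  calc |(∫ x, u x ∂κ t) - ∫ x, u (x + (t - s) • c x) ∂κ s|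
      = ‖(∫ x, φ (t, x) ∂κ t) - ∫ x, φ (s, x) ∂κ s‖ := by simp [φ]
    _ = ‖∫ σ in s..t, ∫ x, fderiv ℝ φ (σ, x) (1, V σ x) ∂κ σ‖ := by
        rw [h.integral_sub_integral_of_time_dependent hφ hst hφR]
    _ ≤ ∫ σ in s..t, ((∫ x, ‖V σ x - c x‖ ∂κ σ) + L * (t - s)) :=
        intervalIntegral.norm_integral_le_of_norm_le hst (Eventually.of_forall hslice)
          (h_int.add intervalIntegrable_const)
    _ = (∫ σ in s..t, ∫ x, ‖V σ x - c x‖ ∂κ σ) + L * (t - s) * (t - s) := by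
        rw [intervalIntegral.integral_add h_int intervalIntegrable_const,
          intervalIntegral.integral_const, smul_eq_mul, mul_comm (t - s)]

theorem abs_integral_sub_integral_euler_le (h : IsCESolution V κ) {f : E → ℝ}
    (hf : LipschitzWith 1 f) (hfc : HasCompactSupport f) {L : ℝ≥0}
    (hc : ContDiff ℝ (⊤ : ℕ∞) c) (hcL : LipschitzWith L c) (hcb : ∀ x, ‖c x‖ ≤ b)
    {s t : ℝ} (hst : s ≤ t) :
    |(∫ x, f x ∂κ t) - ∫ x, f (x + (t - s) • c x) ∂κ s| ≤
      (∫ σ in s..t, ∫ x, ‖V σ x - c x‖ ∂κ σ) + L * (t - s) * (t - s) := by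
  refine le_of_forall_pos_le_add fun ε hε => ?_
  obtain ⟨u, hu, huL, huf, huc⟩ := exists_contDiff_lipschitzWith_approx hf (half_pos hε)
  have hstep : Continuous fun x => x + (t - s) • c x := by have := hc.continuous; fun_prop
  have h_int {v : E → ℝ} (hv : Continuous v) (hvc : HasCompactSupport v) :
      Integrable (fun x => v (x + (t - s) • c x)) (κ s) :=
    let ⟨C, hC⟩ := hvc.exists_bound_of_continuous hv
    .of_bound (hv.comp hstep).aestronglyMeasurable C (Eventually.of_forall fun x => hC _)
  have hmain := abs_le.1
    (h.abs_integral_sub_integral_euler_le_of_contDiff hu huL (huc hfc) hc hcL hcb hst)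
  have ht := abs_le.1 <| abs_integral_sub_integral_le_of_abs_sub_le (μ := κ t)
    (hu.continuous.integrable_of_hasCompactSupport (huc hfc))
    (hf.continuous.integrable_of_hasCompactSupport hfc) huf
  have hs := abs_le.1 <| abs_integral_sub_integral_le_of_abs_sub_le
    (h_int hu.continuous (huc hfc)) (h_int hf.continuous hfc) fun x => huf (x + (t - s) • c x)
  exact abs_le.2 ⟨by linarith, by linarith⟩

end IsCESolution
end EulerStep

/-! ### Kantorovich duality for the truncated distance -/

section FiniteDuality

variable {ι κ : Type*} [Fintype ι] [Fintype κ]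

/-- The linear map sending a matrix to its row sums, its column sums and its total cost for the
cost function `c`; the finite transport problem asks which triples it attains on the simplex. -/
def transportMap (c : ι → κ → ℝ) : (ι × κ → ℝ) →ₗ[ℝ] (ι → ℝ) × (κ → ℝ) × ℝ where
  toFun π := (fun i => ∑ j, π (i, j), fun j => ∑ i, π (i, j), ∑ p, π p * c p.1 p.2)
  map_add' x y := by
    refine Prod.ext (funext fun i => ?_) (Prod.ext (funext fun i => ?_) ?_) <;>
      simp [Finset.sum_add_distrib, add_mul]
  map_smul' m x := by
    refine Prod.ext (funext fun i => ?_) (Prod.ext (funext fun i => ?_) ?_) <;>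
      simp [Finset.mul_sum, mul_assoc]

theorem transportMap_single [DecidableEq ι] [DecidableEq κ] (c : ι → κ → ℝ) (i : ι) (j : κ) :
    transportMap c (Pi.single (i, j) 1) = (Pi.single i 1, Pi.single j 1, c i j) := by
  refine Prod.ext (funext fun k => ?_) (Prod.ext (funext fun k => ?_) ?_)
  · by_cases hk : k = i <;> simp [transportMap, Pi.single_apply, hk, Finset.filter_eq']
  · by_cases hk : k = j <;> simp [transportMap, Pi.single_apply, hk, Finset.filter_eq']
  · simp [transportMap, Pi.single_apply]

theorem map_pi_prod_pi_prod_eq_sum [DecidableEq ι] [DecidableEq κ]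
    (l : (ι → ℝ) × (κ → ℝ) × ℝ →ₗ[ℝ] ℝ) (x : ι → ℝ) (y : κ → ℝ) (z : ℝ) :
    l (x, y, z) = ∑ i, x i * l (Pi.single i 1, 0, 0) + ∑ j, y j * l (0, Pi.single j 1, 0) +
      z * l (0, 0, 1) := by
  have hx : l (x, 0, 0) = ∑ i, x i * l (Pi.single i 1, 0, 0) := by
    simpa [Prod.mk_zero_zero] using
      congrArg (l ∘ₗ LinearMap.inl ℝ (ι → ℝ) ((κ → ℝ) × ℝ)) (pi_eq_sum_univ' x)
  have hy : l (0, y, 0) = ∑ j, y j * l (0, Pi.single j 1, 0) := by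
    simpa using congrArg
      (l ∘ₗ LinearMap.inr ℝ (ι → ℝ) ((κ → ℝ) × ℝ) ∘ₗ LinearMap.inl ℝ (κ → ℝ) ℝ)
      (pi_eq_sum_univ' y)
  have hz : l (0, 0, z) = z * l (0, 0, 1) := by
    rw [← smul_eq_mul, ← map_smul]; simp
  rw [← hx, ← hy, ← hz, ← map_add, ← map_add]
  simp

-- Hahn–Banach, separating the attained triples from `{a} × {b} × (-∞, e]`.
theorem exists_dual_of_disjoint (c : ι → κ → ℝ) {a : ι → ℝ} {b : κ → ℝ} {e : ℝ}
    (hdis : Disjoint (transportMap c '' stdSimplex ℝ (ι × κ)) ({a} ×ˢ {b} ×ˢ Iic e)) :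
    ∃ (f : ι → ℝ) (g : κ → ℝ) (m u : ℝ), 0 ≤ m ∧ (∀ i j, f i + g j ≤ u + m * c i j) ∧
      u + m * e < ∑ i, a i * f i + ∑ j, b j * g j := by
  classical
  obtain ⟨l, u, v, hu, huv, hv⟩ := geometric_hahn_banach_compact_closed
    ((convex_stdSimplex ℝ (ι × κ)).linear_image (transportMap c))
    ((isCompact_stdSimplex ℝ (ι × κ)).image (transportMap c).continuous_of_finiteDimensional)
    ((convex_singleton a).prod ((convex_singleton b).prod (convex_Iic e)))
    (isClosed_singleton.prod (isClosed_singleton.prod isClosed_Iic)) hdis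
  let f (i : ι) : ℝ := l (Pi.single i 1, 0, 0)
  let g (j : κ) : ℝ := l (0, Pi.single j 1, 0)
  let m : ℝ := l (0, 0, 1)
  have hl (x y z) : l (x, y, z) = ∑ i, x i * f i + ∑ j, y j * g j + z * m :=
    map_pi_prod_pi_prod_eq_sum l.toLinearMap x y z
  set w := ∑ i, a i * f i + ∑ j, b j * g j
  have hab (z : ℝ) (hz : z ≤ e) : v < w + z * m := hl a b z ▸ hv (a, b, z) ⟨rfl, rfl, hz⟩
  have hm : m ≤ 0 := by
    by_contra! hm
    have hlt := hab (min e ((v - w) / m)) (min_le_left _ _)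
    have hle : min e ((v - w) / m) * m ≤ v - w := (le_div_iff₀ hm).1 (min_le_right _ _)
    linarith
  refine ⟨f, g, -m, u, neg_nonneg.2 hm, fun i j => ?_, by linarith [hab e le_rfl]⟩
  have hij := hu _ ⟨Pi.single (i, j) 1, single_mem_stdSimplex ℝ (i, j), rfl⟩
  rw [transportMap_single, hl] at hij
  simp only [Pi.single_apply, ite_mul, one_mul, zero_mul, Finset.sum_ite_eq', Finset.mem_univ,
    if_true] at hij
  linarith

-- The `c`-transform `G j = ⨅ i, (u + m c(i, j) - f i)` of one dual variable is `m c`-Lipschitz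
-- and improves the other.
theorem exists_potential_of_dual {ι : Type*} [Finite ι] [Nonempty ι] {c : ι → ι → ℝ}
    (hc0 : ∀ i, c i i = 0) (hcs : ∀ i j, c i j = c j i) (hct : ∀ i j k, c i k ≤ c i j + c j k)
    {f g : ι → ℝ} {m u : ℝ} (hm : 0 ≤ m) (hfg : ∀ i j, f i + g j ≤ u + m * c i j) :
    ∃ G : ι → ℝ, (∀ i, f i ≤ u - G i) ∧ (∀ j, g j ≤ G j) ∧ ∀ i j, G i - G j ≤ m * c i j := by
  let G (j : ι) : ℝ := ⨅ i, (u + m * c i j - f i)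
  have hG (i j : ι) : G j ≤ u + m * c i j - f i := ciInf_le (Set.finite_range _).bddBelow i
  refine ⟨G, fun i => ?_, fun j => le_ciInf fun i => by linarith [hfg i j], fun i j => ?_⟩
  · have := hG i i
    rw [hc0] at this
    linarith
  · suffices G i - m * c i j ≤ G j by linarith
    refine le_ciInf fun k => ?_
    have htri := mul_le_mul_of_nonneg_left (hct k j i) hm
    rw [hcs j i] at htri
    linarith [hG k i]

theorem sum_mul_sub_sum_mul_le_of_lipschitz {c : ι → ι → ℝ} {a b : ι → ℝ} {e m : ℝ}
    (h : ∀ ψ : ι → ℝ, (∀ i j, ψ i - ψ j ≤ c i j) → ∑ i, b i * ψ i - ∑ i, a i * ψ i ≤ e)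
    (hab : ∑ i, a i = ∑ i, b i) {G : ι → ℝ} (hm : 0 ≤ m) (hG : ∀ i j, G i - G j ≤ m * c i j) :
    ∑ i, b i * G i - ∑ i, a i * G i ≤ m * e := by
  rcases hm.eq_or_lt with rfl | hm
  · rcases isEmpty_or_nonempty ι with _ | ⟨⟨i₀⟩⟩
    · simp
    have hconst (i : ι) : G i = G i₀ :=
      le_antisymm (by linarith [hG i i₀]) (by linarith [hG i₀ i])
    simp [hconst, ← Finset.sum_mul, hab]
  · have hψ := h (fun i => G i / m) fun i j => by
      rw [← sub_div, div_le_iff₀' hm]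
      exact hG i j
    simp only [← mul_div_assoc, ← Finset.sum_div, ← sub_div] at hψ
    exact (div_le_iff₀' hm).1 hψ

theorem exists_transport_matrix [Nonempty ι] (c : ι → ι → ℝ) (hc0 : ∀ i, c i i = 0)
    (hcs : ∀ i j, c i j = c j i) (hct : ∀ i j k, c i k ≤ c i j + c j k) {a b : ι → ℝ} {e : ℝ}
    (h : ∀ ψ : ι → ℝ, (∀ i j, ψ i - ψ j ≤ c i j) → ∑ i, b i * ψ i - ∑ i, a i * ψ i ≤ e)
    (ha : a ∈ stdSimplex ℝ ι) (hb : b ∈ stdSimplex ℝ ι) :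
    ∃ π : ι × ι → ℝ, (∀ p, 0 ≤ π p) ∧ (∀ i, ∑ j, π (i, j) = a i) ∧ (∀ j, ∑ i, π (i, j) = b j) ∧
      ∑ p, π p * c p.1 p.2 ≤ e := by
  by_cases hdis : Disjoint (transportMap c '' stdSimplex ℝ (ι × ι)) ({a} ×ˢ {b} ×ˢ Iic e)
  swap
  · obtain ⟨_, ⟨π, hπ, rfl⟩, hπa, hπb, hπe⟩ := not_disjoint_iff.1 hdis
    exact ⟨π, hπ.1, congrFun hπa, congrFun hπb, hπe⟩
  exfalso
  obtain ⟨f, g, m, u, hm, hfg, hlt⟩ := exists_dual_of_disjoint c hdis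
  obtain ⟨G, hfG, hgG, hG⟩ := exists_potential_of_dual hc0 hcs hct hm hfg
  have haf : ∑ i, a i * f i ≤ u - ∑ i, a i * G i := calc
    ∑ i, a i * f i ≤ ∑ i, a i * (u - G i) :=
      Finset.sum_le_sum fun i _ => mul_le_mul_of_nonneg_left (hfG i) (ha.1 i)
    _ = u - ∑ i, a i * G i := by
      simp only [mul_sub, Finset.sum_sub_distrib, ← Finset.sum_mul, ha.2, one_mul]
  have hbg : ∑ i, b i * g i ≤ ∑ i, b i * G i :=
    Finset.sum_le_sum fun i _ => mul_le_mul_of_nonneg_left (hgG i) (hb.1 i)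
  linarith [sum_mul_sub_sum_mul_le_of_lipschitz h (ha.2.trans hb.2.symm) hm hG]

theorem exists_measure_of_matrix [MeasurableSpace ι] [DiscreteMeasurableSpace ι]
    [MeasurableSpace κ] [DiscreteMeasurableSpace κ] {α : Measure ι} {β : Measure κ}
    [IsFiniteMeasure α] [IsFiniteMeasure β] {π : ι × κ → ℝ} (hπ : ∀ p, 0 ≤ π p)
    (hα : ∀ i, ∑ j, π (i, j) = α.real {i}) (hβ : ∀ j, ∑ i, π (i, j) = β.real {j}) :
    ∃ P : Measure (ι × κ), P.fst = α ∧ P.snd = β ∧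
      ∀ c : ι → κ → ℝ, ∫⁻ z, ENNReal.ofReal (c z.1 z.2) ∂P =
        ∑ p, ENNReal.ofReal (π p * c p.1 p.2) := by
  refine ⟨∑ p, ENNReal.ofReal (π p) • Measure.dirac p,
    Measure.ext_of_singleton fun i => ?_, Measure.ext_of_singleton fun j => ?_, fun c => ?_⟩
  · rw [Measure.fst_apply (measurableSet_singleton i), ← ofReal_measureReal (μ := α), ← hα,
      ENNReal.ofReal_sum_of_nonneg fun j _ => hπ _]
    classical simp [Fintype.sum_prod_type, indicator_apply]
  · rw [Measure.snd_apply (measurableSet_singleton j), ← ofReal_measureReal (μ := β), ← hβ,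
      ENNReal.ofReal_sum_of_nonneg fun j _ => hπ _]
    classical simp [Fintype.sum_prod_type_right, indicator_apply]
  · simp [lintegral_finsetSum_measure, lintegral_smul_measure, ENNReal.ofReal_mul (hπ _)]

theorem exists_coupling_of_finite {ι : Type*} [Finite ι] [MeasurableSpace ι]
    [DiscreteMeasurableSpace ι] (c : ι → ι → ℝ) (hc : ∀ i j, 0 ≤ c i j) (hc0 : ∀ i, c i i = 0)
    (hcs : ∀ i j, c i j = c j i) (hct : ∀ i j k, c i k ≤ c i j + c j k) {α β : Measure ι}
    [IsProbabilityMeasure α] [IsProbabilityMeasure β] {e : ℝ}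
    (h : ∀ ψ : ι → ℝ, (∀ i j, ψ i - ψ j ≤ c i j) → (∫ i, ψ i ∂β) - ∫ i, ψ i ∂α ≤ e) :
    ∃ P : Measure (ι × ι), P.fst = α ∧ P.snd = β ∧
      ∫⁻ z, ENNReal.ofReal (c z.1 z.2) ∂P ≤ ENNReal.ofReal e := by
  cases nonempty_fintype ι
  have := nonempty_of_isProbabilityMeasure α
  have hsimplex (μ : Measure ι) [IsProbabilityMeasure μ] :
      (fun i => μ.real {i}) ∈ stdSimplex ℝ ι := by
    refine ⟨fun i => measureReal_nonneg, ?_⟩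
    simp
  obtain ⟨π, hπ0, hπα, hπβ, hπc⟩ := exists_transport_matrix c hc0 hcs hct (e := e)
    (fun ψ hψ => by simpa only [integral_fintype Integrable.of_finite, smul_eq_mul] using h ψ hψ)
    (hsimplex α) (hsimplex β)
  obtain ⟨P, hPα, hPβ, hPc⟩ := exists_measure_of_matrix hπ0 hπα hπβ
  refine ⟨P, hPα, hPβ, ?_⟩
  rw [hPc, ← ENNReal.ofReal_sum_of_nonneg fun p _ => mul_nonneg (hπ0 p) (hc _ _)]
  exact ENNReal.ofReal_le_ofReal hπc

end FiniteDuality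

section Gluing

variable {X Y ι κ : Type*} [MeasurableSpace X] [MeasurableSpace Y] [MeasurableSpace ι]
  [MeasurableSpace κ]

theorem map_compProd_comap (μ : Measure X) [SFinite μ] (K : Kernel ι Y) [IsSFiniteKernel K]
    {f : X → ι} (hf : Measurable f) :
    (μ ⊗ₘ K.comap f hf).map (Prod.map f id) = μ.map f ⊗ₘ K := by
  ext s hs
  have hm : Measurable (Prod.map f (id : Y → Y)) := hf.prodMap measurable_id
  rw [Measure.map_apply hm hs, Measure.compProd_apply (hm hs), Measure.compProd_apply hs,
    lintegral_map (Kernel.measurable_kernel_prodMk_left hs) hf]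
  rfl

theorem exists_fst_eq_and_map_eq [StandardBorelSpace Y] [Nonempty Y] {μ : Measure X}
    [IsFiniteMeasure μ] {f : X → ι} (hf : Measurable f) {P : Measure (ι × Y)}
    (hP : P.fst = μ.map f) :
    ∃ R : Measure (X × Y), R.fst = μ ∧ R.map (Prod.map f id) = P := by
  have : IsFiniteMeasure (P.map Prod.fst) := by
    rw [← Measure.fst, hP]
    infer_instance
  have : IsFiniteMeasure P := Measure.isFiniteMeasure_of_map measurable_fst.aemeasurable
  refine ⟨μ ⊗ₘ P.condKernel.comap f hf, Measure.fst_compProd _ _, ?_⟩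
  rw [map_compProd_comap, ← hP, P.disintegrate]

theorem exists_coupling_of_map [StandardBorelSpace X] [Nonempty X] [StandardBorelSpace κ]
    [Nonempty κ] {α : Measure X} {β : Measure Y} [IsFiniteMeasure α] [IsFiniteMeasure β]
    {f : X → ι} {g : Y → κ} (hf : Measurable f) (hg : Measurable g) {P₀ : Measure (ι × κ)}
    (hα : P₀.fst = α.map f) (hβ : P₀.snd = β.map g) :
    ∃ P : Measure (X × Y), P.fst = α ∧ P.snd = β ∧ P.map (Prod.map f g) = P₀ := by
  obtain ⟨R, hRα, hR⟩ := exists_fst_eq_and_map_eq hf hα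
  have hRβ : (R.map Prod.swap).fst = β.map g := by
    rw [Measure.fst_map_swap, ← hβ, ← hR, Measure.snd, Measure.snd,
      Measure.map_map measurable_snd (hf.prodMap measurable_id)]
    rfl
  obtain ⟨S, hSβ, hS⟩ := exists_fst_eq_and_map_eq hg hRβ
  refine ⟨S.map Prod.swap, ?_, by rwa [Measure.snd_map_swap], ?_⟩
  · calc (S.map Prod.swap).fst = (S.map (Prod.map g id)).snd := by
          rw [Measure.fst_map_swap, Measure.snd, Measure.snd,
            Measure.map_map measurable_snd (hg.prodMap measurable_id)]
          rfl
      _ = α := by rw [hS, Measure.snd_map_swap, hRα]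
  · calc (S.map Prod.swap).map (Prod.map f g)
        = ((S.map (Prod.map g id)).map Prod.swap).map (Prod.map f id) := by
          rw [Measure.map_map (hf.prodMap hg) measurable_swap,
            Measure.map_map measurable_swap (hg.prodMap measurable_id),
            Measure.map_map (hf.prodMap measurable_id)
              (measurable_swap.comp (hg.prodMap measurable_id))]
          rfl
      _ = P₀ := by
          rw [hS, Measure.map_map measurable_swap measurable_swap, Prod.swap_swap_eq,
            Measure.map_id, hR]

end Gluing

section Duality

/-- The distance truncated at `1`: the cost of the transport problems below, bounded so that no
moment assumption on the measures is needed. -/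
def truncDist {E : Type*} [PseudoMetricSpace E] (x y : E) : ℝ := min (dist x y) 1

section PseudoMetricSpace

variable {E : Type*} [PseudoMetricSpace E]

theorem truncDist_nonneg (x y : E) : 0 ≤ truncDist x y := le_min dist_nonneg zero_le_one

theorem truncDist_le_dist (x y : E) : truncDist x y ≤ dist x y := min_le_left _ _

theorem truncDist_le_one (x y : E) : truncDist x y ≤ 1 := min_le_right _ _

theorem truncDist_self (x : E) : truncDist x x = 0 := by simp [truncDist]

theorem truncDist_comm (x y : E) : truncDist x y = truncDist y x := by simp [truncDist, dist_comm]

theorem truncDist_triangle (x y z : E) : truncDist x z ≤ truncDist x y + truncDist y z := by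
  rcases min_choice (dist x y) 1 with hxy | hxy
  · rcases min_choice (dist y z) 1 with hyz | hyz
    · exact (truncDist_le_dist x z).trans (by
        rw [truncDist, truncDist, hxy, hyz]
        exact dist_triangle x y z)
    · linarith [truncDist_le_one x z, truncDist_nonneg x y, show truncDist y z = 1 from hyz]
  · linarith [truncDist_le_one x z, truncDist_nonneg y z, show truncDist x y = 1 from hxy]

theorem continuous_truncDist : Continuous fun p : E × E => truncDist p.1 p.2 :=
  continuous_dist.min continuous_const

theorem abs_sub_le_truncDist {F : E → ℝ} (hF : LipschitzWith 1 F) (hF01 : ∀ x, F x ∈ Icc 0 1)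
    (x y : E) : |F x - F y| ≤ truncDist x y := by
  refine le_min (by simpa [Real.dist_eq] using hF.dist_le_mul x y) (abs_le.2 ⟨?_, ?_⟩) <;>
    linarith [(hF01 x).1, (hF01 x).2, (hF01 y).1, (hF01 y).2]

-- McShane's extension, truncated at height `1`.
theorem exists_lipschitzWith_extension {ι : Type*} [Nonempty ι] {p : ι → E} {ψ : ι → ℝ}
    (hψ : ∀ i j, ψ i - ψ j ≤ truncDist (p i) (p j)) :
    ∃ (F : E → ℝ) (c : ℝ), LipschitzWith 1 F ∧ (∀ x, F x ∈ Icc 0 1) ∧ ∀ i, F (p i) = ψ i - c := by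
  obtain ⟨i₀⟩ := ‹Nonempty ι›
  have hψ1 (i j : ι) : ψ i - 1 ≤ ψ j := by linarith [hψ i j, truncDist_le_one (p i) (p j)]
  let c : ℝ := ⨅ i, ψ i
  have hc (i : ι) : c ≤ ψ i := ciInf_le ⟨ψ i₀ - 1, forall_mem_range.2 (hψ1 i₀)⟩ i
  have hc1 (i : ι) : ψ i - c ≤ 1 := by linarith [le_ciInf (hψ1 i)]
  let h (x : E) (j : ι) : ℝ := min (ψ j - c + dist x (p j)) 1
  have h0 (x : E) (j : ι) : 0 ≤ h x j :=
    le_min (add_nonneg (sub_nonneg.2 (hc j)) dist_nonneg) zero_le_one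
  have hle (x : E) (j : ι) : ⨅ j, h x j ≤ h x j := ciInf_le ⟨0, forall_mem_range.2 (h0 x)⟩ j
  refine ⟨fun x => ⨅ j, h x j, c, LipschitzWith.of_le_add fun x y => ?_, fun x =>
    ⟨le_ciInf (h0 x), (hle x i₀).trans (min_le_right _ _)⟩, fun i => le_antisymm ?_ ?_⟩
  · suffices (⨅ j, h x j) - dist x y ≤ ⨅ j, h y j by linarith
    refine le_ciInf fun j => le_min ?_ ?_
    · linarith [(hle x j).trans (min_le_left _ _), dist_triangle x y (p j)]
    · linarith [(hle x j).trans (min_le_right _ _), dist_nonneg (x := x) (y := y)]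
  · simpa using (hle (p i) i).trans (min_le_left _ _)
  · exact le_ciInf fun j => le_min (by linarith [hψ i j, truncDist_le_dist (p i) (p j)]) (hc1 i)

variable [MeasurableSpace E] [OpensMeasurableSpace E]

theorem abs_integral_comp_sub_integral_le_of_lipschitz {α : Measure E} [IsFiniteMeasure α]
    {F : E → ℝ} (hF : LipschitzWith 1 F) (hF01 : ∀ x, F x ∈ Icc 0 1) {q : E → E}
    (hq : Measurable q) {δ : ℝ} (hδ : 0 ≤ δ)
    (h : ∫⁻ x, ENNReal.ofReal (truncDist x (q x)) ∂α ≤ ENNReal.ofReal δ) :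
    |(∫ x, F (q x) ∂α) - ∫ x, F x ∂α| ≤ δ := by
  have hnorm (x : E) : ‖F x‖ ≤ 1 := by
    rw [Real.norm_of_nonneg (hF01 x).1]
    exact (hF01 x).2
  have hFq : Integrable (fun x => F (q x)) α :=
    .of_bound (hF.continuous.measurable.comp hq).aestronglyMeasurable 1
      (.of_forall fun x => hnorm _)
  have hFα : Integrable F α :=
    .of_bound hF.continuous.measurable.aestronglyMeasurable 1 (.of_forall hnorm)
  rw [← integral_sub hFq hFα, ← Real.norm_eq_abs]
  refine (norm_integral_le_lintegral_norm _).trans (ENNReal.toReal_le_of_le_ofReal hδ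
    (le_trans (lintegral_mono fun x => ENNReal.ofReal_le_ofReal ?_) h))
  rw [truncDist_comm]
  exact abs_sub_le_truncDist hF hF01 _ _

variable [SecondCountableTopology E]

theorem measurable_truncDist : Measurable fun p : E × E => truncDist p.1 p.2 :=
  continuous_truncDist.measurable

theorem lintegral_truncDist_le_fst_add_snd (P : Measure (E × E)) {q : E → E} (hq : Measurable q) :
    ∫⁻ z, ENNReal.ofReal (truncDist z.1 z.2) ∂P ≤
      ∫⁻ x, ENNReal.ofReal (truncDist x (q x)) ∂P.fst +
        ∫⁻ z, ENNReal.ofReal (truncDist (q z.1) (q z.2)) ∂P +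
        ∫⁻ x, ENNReal.ofReal (truncDist x (q x)) ∂P.snd := by
  let D (x : E) : ℝ≥0∞ := ENNReal.ofReal (truncDist x (q x))
  have hD : Measurable D := (measurable_truncDist.comp (measurable_id.prodMk hq)).ennreal_ofReal
  have hfst : ∫⁻ x, D x ∂P.fst = ∫⁻ z, D z.1 ∂P := lintegral_map hD measurable_fst
  have hsnd : ∫⁻ x, D x ∂P.snd = ∫⁻ z, D z.2 ∂P := lintegral_map hD measurable_snd
  rw [hfst, hsnd, ← lintegral_add_left (by fun_prop), ← lintegral_add_right _ (by fun_prop)]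
  refine lintegral_mono fun z => ?_
  simp only [D]
  rw [← ENNReal.ofReal_add (truncDist_nonneg _ _) (truncDist_nonneg _ _),
    ← ENNReal.ofReal_add (add_nonneg (truncDist_nonneg _ _) (truncDist_nonneg _ _))
      (truncDist_nonneg _ _)]
  refine ENNReal.ofReal_le_ofReal ?_
  rw [truncDist_comm z.2]
  linarith [truncDist_triangle z.1 (q z.1) z.2, truncDist_triangle (q z.1) (q z.2) z.2]

theorem tendsto_lintegral_truncDist_nearestPt [Nonempty E] (μ : Measure E) [IsFiniteMeasure μ] :
    Tendsto (fun n => ∫⁻ x, ENNReal.ofReal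
      (truncDist x (SimpleFunc.nearestPt (TopologicalSpace.denseSeq E) n x)) ∂μ) atTop (𝓝 0) := by
  let d := TopologicalSpace.denseSeq E
  rw [← lintegral_zero (μ := μ)]
  refine tendsto_lintegral_of_dominated_convergence (fun _ => 1) (fun n =>
    (measurable_truncDist.comp (measurable_id.prodMk (SimpleFunc.measurable _))).ennreal_ofReal)
    (fun n => .of_forall fun x => ?_) (by simp) (.of_forall fun x => ?_)
  · simpa using truncDist_le_one x (SimpleFunc.nearestPt d n x)
  · have hd : Tendsto (fun n => SimpleFunc.nearestPt d n x) atTop (𝓝 x) :=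
      SimpleFunc.tendsto_nearestPt (TopologicalSpace.denseRange_denseSeq E x)
    simpa [truncDist_self] using ENNReal.tendsto_ofReal
      ((continuous_truncDist.tendsto (x, x)).comp (tendsto_const_nhds.prodMk_nhds hd))

theorem exists_simpleFunc_lintegral_truncDist_le [Nonempty E] (α β : Measure E) [IsFiniteMeasure α]
    [IsFiniteMeasure β] {δ : ℝ≥0∞} (hδ : 0 < δ) :
    ∃ q : SimpleFunc E E, ∫⁻ x, ENNReal.ofReal (truncDist x (q x)) ∂α ≤ δ ∧
      ∫⁻ x, ENNReal.ofReal (truncDist x (q x)) ∂β ≤ δ := by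
  obtain ⟨n, hα, hβ⟩ := (((tendsto_lintegral_truncDist_nearestPt α).eventually_lt_const hδ).and
    ((tendsto_lintegral_truncDist_nearestPt β).eventually_lt_const hδ)).exists
  exact ⟨_, hα.le, hβ.le⟩

end PseudoMetricSpace

variable {E : Type*} [MetricSpace E] [MeasurableSpace E] [BorelSpace E] {α β : Measure E}
  [IsProbabilityMeasure α] [IsProbabilityMeasure β]

theorem integral_map_sub_integral_map_le {e δ : ℝ} (hδ : 0 ≤ δ)
    (h : ∀ F : E → ℝ, LipschitzWith 1 F → (∀ x, F x ∈ Icc 0 1) →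
      (∫ x, F x ∂β) - ∫ x, F x ∂α ≤ e)
    {ι : Type*} [MeasurableSpace ι] [DiscreteMeasurableSpace ι] {r : E → ι} (hr : Measurable r)
    {p : ι → E} (hα : ∫⁻ x, ENNReal.ofReal (truncDist x (p (r x))) ∂α ≤ ENNReal.ofReal δ)
    (hβ : ∫⁻ x, ENNReal.ofReal (truncDist x (p (r x))) ∂β ≤ ENNReal.ofReal δ) {ψ : ι → ℝ}
    (hψ : ∀ i j, ψ i - ψ j ≤ truncDist (p i) (p j)) :
    (∫ i, ψ i ∂β.map r) - ∫ i, ψ i ∂α.map r ≤ e + 2 * δ := by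
  have : Nonempty ι := (nonempty_of_isProbabilityMeasure α).map r
  obtain ⟨F, c, hF, hF01, hFψ⟩ := exists_lipschitzWith_extension hψ
  have hp : Measurable fun x => p (r x) := Measurable.of_discrete.comp hr
  have hmap (μ : Measure E) [IsProbabilityMeasure μ] :
      ∫ i, ψ i ∂μ.map r = ∫ x, F (p (r x)) ∂μ + c := by
    have hFp : Integrable (fun x => F (p (r x))) μ :=
      .of_mem_Icc 0 1 (hF.continuous.measurable.comp hp).aemeasurable
        (.of_forall fun x => hF01 (p (r x)))
    have hψF (i : ι) : ψ i = F (p i) + c := by linarith [hFψ i]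
    rw [integral_map hr.aemeasurable Measurable.of_discrete.aestronglyMeasurable]
    simp [hψF, integral_add hFp]
  rw [hmap, hmap]
  linarith [h F hF hF01,
    (abs_le.1 (abs_integral_comp_sub_integral_le_of_lipschitz hF hF01 hp hδ hα)).1,
    (abs_le.1 (abs_integral_comp_sub_integral_le_of_lipschitz hF hF01 hp hδ hβ)).2]

-- Quantize both measures, solve the finite transport problem, and glue.
theorem exists_coupling_of_lipschitz_unitInterval [SecondCountableTopology E] [CompleteSpace E]
    {e : ℝ} (h : ∀ F : E → ℝ, LipschitzWith 1 F → (∀ x, F x ∈ Icc 0 1) →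
      (∫ x, F x ∂β) - ∫ x, F x ∂α ≤ e) {η : ℝ} (hη : 0 < η) :
    ∃ P : Measure (E × E), P.fst = α ∧ P.snd = β ∧
      ∫⁻ z, ENNReal.ofReal (truncDist z.1 z.2) ∂P ≤ ENNReal.ofReal (e + η) := by
  have := nonempty_of_isProbabilityMeasure α
  have he : 0 ≤ e := by simpa using h 0 (LipschitzWith.const' 0) (by simp)
  have hδ : 0 < η / 4 := by positivity
  obtain ⟨q, hqα, hqβ⟩ := exists_simpleFunc_lintegral_truncDist_le α β (ENNReal.ofReal_pos.2 hδ)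
  let r : E → q.range := fun x => ⟨q x, q.mem_range_self x⟩
  have : Nonempty q.range := ⟨r (Classical.arbitrary E)⟩
  have hr : Measurable r := q.measurable.subtype_mk
  have := Measure.isProbabilityMeasure_map (μ := α) hr.aemeasurable
  have := Measure.isProbabilityMeasure_map (μ := β) hr.aemeasurable
  obtain ⟨P₀, hα₀, hβ₀, hP₀⟩ := exists_coupling_of_finite (fun i j : q.range => truncDist i.1 j)
    (fun _ _ => truncDist_nonneg _ _) (fun _ => truncDist_self _) (fun _ _ => truncDist_comm _ _)
    (fun _ _ _ => truncDist_triangle _ _ _)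
    fun ψ hψ => integral_map_sub_integral_map_le hδ.le h hr hqα hqβ hψ
  obtain ⟨P, hα, hβ, hP⟩ := exists_coupling_of_map hr hr hα₀ hβ₀
  have hmid : ∫⁻ z, ENNReal.ofReal (truncDist (q z.1) (q z.2)) ∂P ≤
      ENNReal.ofReal (e + 2 * (η / 4)) := by
    rwa [← hP, lintegral_map .of_discrete (hr.prodMap hr)] at hP₀
  refine ⟨P, hα, hβ, ?_⟩
  calc ∫⁻ z, ENNReal.ofReal (truncDist z.1 z.2) ∂P
      ≤ ENNReal.ofReal (η / 4) + ENNReal.ofReal (e + 2 * (η / 4)) + ENNReal.ofReal (η / 4) := by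
        refine (lintegral_truncDist_le_fst_add_snd P q.measurable).trans ?_
        rw [hα, hβ]
        gcongr
    _ = ENNReal.ofReal (e + η) := by
        rw [← ENNReal.ofReal_add hδ.le (by positivity), ← ENNReal.ofReal_add (by positivity) hδ.le]
        congr 1
        ring

section FiniteDimensional

theorem lipschitzWith_min_max_sub_norm {E : Type*} [SeminormedAddCommGroup E] {F : E → ℝ}
    (hF : LipschitzWith 1 F) (a : ℝ) :
    LipschitzWith 1 fun x => min (F x) (max (a - ‖x‖) 0) := by
  have ha : LipschitzWith 1 fun x : E => a - ‖x‖ := by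
    simpa using (LipschitzWith.const a).sub lipschitzWith_one_norm
  simpa using hF.min (ha.max_const 0)

variable {E : Type*} [NormedAddCommGroup E] [NormedSpace ℝ E] [FiniteDimensional ℝ E]
  [MeasurableSpace E] [BorelSpace E] {α β : Measure E}

theorem integral_sub_integral_le_of_forall_hasCompactSupport [IsFiniteMeasure α]
    [IsFiniteMeasure β] {e : ℝ}
    (h : ∀ f : E → ℝ, LipschitzWith 1 f → HasCompactSupport f → (∀ x, f x ∈ Icc 0 1) →
      (∫ x, f x ∂β) - ∫ x, f x ∂α ≤ e) {F : E → ℝ} (hF : LipschitzWith 1 F)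
    (hF01 : ∀ x, F x ∈ Icc 0 1) : (∫ x, F x ∂β) - ∫ x, F x ∂α ≤ e := by
  let f (n : ℕ) (x : E) : ℝ := min (F x) (max (n - ‖x‖) 0)
  have hLip (n : ℕ) : LipschitzWith 1 (f n) := lipschitzWith_min_max_sub_norm hF n
  have hf01 (n : ℕ) (x : E) : f n x ∈ Icc 0 1 :=
    ⟨le_min (hF01 x).1 (le_max_right _ _), (min_le_left _ _).trans (hF01 x).2⟩
  have hsupp (n : ℕ) : HasCompactSupport (f n) :=
    .intro (isCompact_closedBall 0 n) fun x hx => by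
      have hx' : (n : ℝ) - ‖x‖ ≤ 0 := by
        simpa using (not_le.1 (mem_closedBall_zero_iff.not.1 hx)).le
      simpa only [f, max_eq_right hx'] using min_eq_right (hF01 x).1
  have hlim (μ : Measure E) [IsFiniteMeasure μ] :
      Tendsto (fun n => ∫ x, f n x ∂μ) atTop (𝓝 (∫ x, F x ∂μ)) := by
    refine tendsto_integral_of_dominated_convergence (fun _ => 1)
      (fun n => (hLip n).continuous.aestronglyMeasurable) (integrable_const 1)
      (fun n => .of_forall fun x => ?_) (.of_forall fun x => tendsto_const_nhds.congr' ?_)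
    · rw [Real.norm_of_nonneg (hf01 n x).1]
      exact (hf01 n x).2
    · filter_upwards [eventually_ge_atTop ⌈‖x‖ + 1⌉₊] with n hn
      have hxn : 1 ≤ n - ‖x‖ := by linarith [Nat.ceil_le.1 hn]
      exact (min_eq_left ((hF01 x).2.trans (le_max_of_le_left hxn))).symm
  exact le_of_tendsto' ((hlim β).sub (hlim α)) fun n => h _ (hLip n) (hsupp n) (hf01 n)

theorem exists_coupling_of_lipschitz [IsProbabilityMeasure α] [IsProbabilityMeasure β] {e : ℝ}
    (h : ∀ f : E → ℝ, LipschitzWith 1 f → HasCompactSupport f → (∀ x, f x ∈ Icc 0 1) →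
      (∫ x, f x ∂β) - ∫ x, f x ∂α ≤ e) {η : ℝ} (hη : 0 < η) :
    ∃ P : Measure (E × E), P.fst = α ∧ P.snd = β ∧
      ∫⁻ z, ENNReal.ofReal (truncDist z.1 z.2) ∂P ≤ ENNReal.ofReal (e + η) :=
  have : ProperSpace E := FiniteDimensional.proper ℝ E
  exists_coupling_of_lipschitz_unitInterval
    (fun _ hF hF01 => integral_sub_integral_le_of_forall_hasCompactSupport h hF hF01) hη

end FiniteDimensional

end Duality

/-! ### Euler paths -/

section Chain

variable {E F : Type*} [MeasurableSpace E] [MeasurableSpace F]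

theorem map_comp_eq_of_map_eq {Ω G : Type*} [MeasurableSpace Ω] [MeasurableSpace G]
    {μ ν : Measure Ω} {r : Ω → E} (hr : Measurable r) (h : μ.map r = ν.map r) {g : E → G}
    (hg : Measurable g) : μ.map (g ∘ r) = ν.map (g ∘ r) := by
  rw [← Measure.map_map hg hr, h, Measure.map_map hg hr]

theorem measurable_update_prodMk (n : ℕ) :
    Measurable fun z : (ℕ → E) × E => Function.update z.1 n z.2 := by
  refine measurable_pi_lambda _ fun k => ?_
  by_cases hk : k = n
  · subst hk
    simpa using measurable_snd
  · simp only [Function.update_of_ne hk]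
    exact (measurable_pi_apply k).comp measurable_fst

theorem exists_extension_of_chain [StandardBorelSpace E] [Nonempty E] {Q : Measure (ℕ → E)}
    [IsProbabilityMeasure Q] {n : ℕ} {φ : E → F} (hφ : Measurable φ) {P : Measure (F × E)}
    (hP : P.fst = Q.map fun X => φ (X n)) :
    ∃ Q' : Measure (ℕ → E), IsProbabilityMeasure Q' ∧
      Q'.map (Preorder.restrictLe n) = Q.map (Preorder.restrictLe n) ∧
      Q'.map (fun X => (φ (X n), X (n + 1))) = P := by
  obtain ⟨R, hRQ, hRP⟩ :=
    exists_fst_eq_and_map_eq (hφ.comp (measurable_pi_apply (X := fun _ => E) n)) hP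
  have hu := measurable_update_prodMk (E := E) (n + 1)
  have hRprob : IsProbabilityMeasure (R.map Prod.fst) := by
    rw [← Measure.fst, hRQ]
    infer_instance
  have := Measure.isProbabilityMeasure_of_map (μ := R) Prod.fst
  have hr := Preorder.measurable_restrictLe (X := fun _ : ℕ => E) n
  refine ⟨R.map fun z => Function.update z.1 (n + 1) z.2,
    Measure.isProbabilityMeasure_map hu.aemeasurable, ?_, ?_⟩
  · rw [Measure.map_map hr hu, ← hRQ, Measure.fst, Measure.map_map hr measurable_fst]
    congr 1
    funext z k
    exact Function.update_of_ne (Nat.lt_succ_of_le (Set.mem_Iic.1 k.2)).ne _ _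
  · rw [Measure.map_map (by fun_prop) hu, ← hRP]
    congr 1
    funext z
    simp [Prod.map]

theorem exists_chain [StandardBorelSpace E] [Nonempty E] (μ : ℕ → Measure E)
    [hμ : ∀ k, IsProbabilityMeasure (μ k)] {φ : ℕ → E → F} (hφ : ∀ k, Measurable (φ k))
    {P : ℕ → Measure (F × E)} (hP : ∀ k, (P k).fst = (μ k).map (φ k))
    (hP' : ∀ k, (P k).snd = μ (k + 1)) (n : ℕ) :
    ∃ Q : Measure (ℕ → E), IsProbabilityMeasure Q ∧ (∀ k ≤ n, Q.map (fun X => X k) = μ k) ∧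
      ∀ k < n, Q.map (fun X => (φ k (X k), X (k + 1))) = P k := by
  induction n with
  | zero =>
    have hm : Measurable fun (x : E) (_ : ℕ) => x := by fun_prop
    refine ⟨(μ 0).map fun x _ => x, Measure.isProbabilityMeasure_map hm.aemeasurable,
      fun k hk => ?_, fun k hk => absurd hk (Nat.not_lt_zero k)⟩
    rw [Measure.map_map (measurable_pi_apply k) hm, Nat.le_zero.1 hk]
    exact Measure.map_id
  | succ n ih =>
    obtain ⟨Q, hQ, hQμ, hQP⟩ := ih
    have hpair : ∀ k, Measurable fun X : ℕ → E => (φ k (X k), X (k + 1)) := by fun_prop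
    have hfst : (P n).fst = Q.map fun X => φ n (X n) := by
      rw [hP, ← hQμ n le_rfl, Measure.map_map (hφ n) (measurable_pi_apply n)]
      rfl
    obtain ⟨Q', hQ', hold, hlast⟩ := exists_extension_of_chain (hφ n) hfst
    have hr := Preorder.measurable_restrictLe (X := fun _ : ℕ => E) n
    refine ⟨Q', hQ', fun k hk => ?_, fun k hk => ?_⟩
    · rcases Nat.lt_or_eq_of_le hk with hk | rfl
      · have hk := Nat.lt_succ_iff.1 hk
        have hg := measurable_pi_apply (X := fun _ : Iic n => E) ⟨k, hk⟩
        exact (map_comp_eq_of_map_eq hr hold hg).trans (hQμ k hk)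
      · rw [← hP' n, ← hlast, Measure.snd, Measure.map_map measurable_snd (hpair n)]
        rfl
    · rcases Nat.lt_or_eq_of_le (Nat.lt_succ_iff.1 hk) with hk | rfl
      · have hg : Measurable fun Y : Iic n → E => (φ k (Y ⟨k, hk.le⟩), Y ⟨k + 1, hk⟩) := by fun_prop
        exact (map_comp_eq_of_map_eq hr hold hg).trans (hQP k hk)
      · exact hlast

end Chain

section SmoothField

variable {E : Type*} [NormedAddCommGroup E] [NormedSpace ℝ E]

/-- A smooth compactly supported time-dependent vector field with Lipschitz constant `L`, used to
approximate a velocity field of size at most `1`. The bound `2` leaves room for a smooth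
truncation. -/
structure IsSmoothField (c : ℝ × E → E) (L : ℝ≥0) : Prop where
  contDiff : ContDiff ℝ (⊤ : ℕ∞) c
  hasCompactSupport : HasCompactSupport c
  norm_le : ∀ z, ‖c z‖ ≤ 2
  lipschitz : LipschitzWith L c

theorem lipschitzWith_prodMk_left {α β γ : Type*} [PseudoEMetricSpace α] [PseudoEMetricSpace β]
    [PseudoEMetricSpace γ] {f : α × β → γ} {L : ℝ≥0} (hf : LipschitzWith L f) (a : α) :
    LipschitzWith L fun b => f (a, b) :=
  mul_one L ▸ hf.comp (LipschitzWith.prodMk_left a)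

theorem exists_smooth_truncation [FiniteDimensional ℝ E] :
    ∃ (ψ : E → E) (L : ℝ≥0), ContDiff ℝ (⊤ : ℕ∞) ψ ∧ (∀ x, ‖ψ x‖ ≤ 2) ∧ LipschitzWith L ψ ∧
      ∀ x, ‖x‖ ≤ 1 → ψ x = x := by
  let s : ContDiffBump (0 : E) := ⟨1, 2, one_pos, one_lt_two⟩
  have hψ : ContDiff ℝ (⊤ : ℕ∞) fun x : E => s x • x := s.contDiff.smul contDiff_id
  have hψc : HasCompactSupport fun x : E => s x • x := s.hasCompactSupport.smul_right
  obtain ⟨L, hL⟩ := ContDiff.lipschitzWith_of_hasCompactSupport hψc hψ (by simp)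
  refine ⟨_, L, hψ, fun x => ?_, hL, fun x hx => ?_⟩
  · by_cases hx : ‖x‖ < 2
    · calc ‖s x • x‖ = s x * ‖x‖ := by rw [norm_smul, Real.norm_of_nonneg s.nonneg]
        _ ≤ 1 * 2 := mul_le_mul s.le_one hx.le (norm_nonneg x) zero_le_one
        _ = 2 := one_mul 2
    · simp [s.zero_of_le_dist (by simpa using hx)]
  · rw [s.one_of_mem_closedBall (by simpa using hx), one_smul]

variable [MeasurableSpace E] [BorelSpace E] [FiniteDimensional ℝ E]

theorem exists_isSmoothField_integral_norm_sub_le {M : Measure (ℝ × E)} [IsFiniteMeasure M]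
    {v : ℝ × E → E} (hv : Measurable v) (hv1 : ∀ z, ‖v z‖ ≤ 1) {ε : ℝ} (hε : 0 < ε) :
    ∃ c L, IsSmoothField c L ∧ ∫ z, ‖v z - c z‖ ∂M ≤ ε := by
  obtain ⟨ψ, L₀, hψ, hψ2, hψL, hψ1⟩ := exists_smooth_truncation (E := E)
  have hvL : MemLp v 1 M :=
    MemLp.of_bound hv.aestronglyMeasurable 1 (Eventually.of_forall hv1)
  obtain ⟨c₀, hc₀, hc₀s, hc₀d⟩ := MemLp.exist_eLpNorm_sub_le (by simp) le_rfl hvL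
    (ε := ε / (L₀ + 1)) (by positivity)
  have hc : HasCompactSupport fun z => ψ (c₀ z) := hc₀.comp_left (hψ1 0 (by simp))
  have hcs : ContDiff ℝ (⊤ : ℕ∞) fun z => ψ (c₀ z) := hψ.comp hc₀s
  obtain ⟨L, hL⟩ := ContDiff.lipschitzWith_of_hasCompactSupport hc hcs (by simp)
  refine ⟨fun z => ψ (c₀ z), L, ⟨hcs, hc, fun z => hψ2 _, hL⟩, ?_⟩
  have h_int : Integrable (v - c₀) M :=
    memLp_one_iff_integrable.1 (hvL.sub (hc₀s.continuous.memLp_of_hasCompactSupport hc₀))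
  have hle (z : ℝ × E) : ‖v z - ψ (c₀ z)‖ ≤ L₀ * ‖(v - c₀) z‖ := by
    simpa only [hψ1 _ (hv1 z), dist_eq_norm] using! hψL.dist_le_mul (v z) (c₀ z)
  calc ∫ z, ‖v z - ψ (c₀ z)‖ ∂M ≤ ∫ z, L₀ * ‖(v - c₀) z‖ ∂M :=
        integral_mono_of_nonneg (Eventually.of_forall fun z => norm_nonneg _)
          (h_int.norm.const_mul _) (Eventually.of_forall hle)
    _ = L₀ * (eLpNorm (v - c₀) 1 M).toReal := by
        rw [integral_const_mul, integral_norm_eq_lintegral_enorm h_int.aestronglyMeasurable,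
          eLpNorm_one_eq_lintegral_enorm]
    _ ≤ L₀ * (ε / (L₀ + 1)) := by
        gcongr
        exact ENNReal.toReal_le_of_le_ofReal (by positivity) hc₀d
    _ ≤ ε := by
        rw [mul_div_assoc', div_le_iff₀ (by positivity), mul_comm]
        exact mul_le_mul_of_nonneg_left (by simp) hε.le

variable {V : ℝ → E → E} {κ : Kernel ℝ E} [IsMarkovKernel κ]

namespace IsCESolution

theorem exists_isSmoothField (h : IsCESolution V κ) {T : ℝ} (hT : 0 ≤ T) {ε : ℝ} (hε : 0 < ε) :
    ∃ c L, IsSmoothField c L ∧ ∫ σ in (0 : ℝ)..T, ∫ x, ‖V σ x - c (σ, x)‖ ∂κ σ ≤ ε := by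
  let M : Measure (ℝ × E) := (volume.restrict (Ioc 0 T)) ⊗ₘ κ
  have : IsFiniteMeasure M := inferInstance
  obtain ⟨c, L, hc, hle⟩ := exists_isSmoothField_integral_norm_sub_le (M := M) h.measurable
    (fun z => h.norm_le z.1 z.2) hε
  have h_int : Integrable (fun z : ℝ × E => ‖V z.1 z.2 - c z‖) M :=
    .of_bound (h.measurable.sub hc.contDiff.continuous.measurable).norm.aestronglyMeasurable
      (1 + 2) (Eventually.of_forall fun z => by
        rw [norm_norm]
        exact (norm_sub_le _ _).trans (add_le_add (h.norm_le z.1 z.2) (hc.norm_le z)))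
  refine ⟨c, L, hc, ?_⟩
  rwa [intervalIntegral.integral_of_le hT, ← Measure.integral_compProd h_int]

theorem integral_sub_le_integral (h : IsCESolution V κ) {f : ℝ × E → ℝ} {K : ℝ≥0}
    (hf : LipschitzWith K f) (hfc : HasCompactSupport f) {s σ : ℝ} (hσ : s ≤ σ) :
    (∫ x, f (s, x) ∂κ s) - 2 * K * (σ - s) ≤ ∫ x, f (σ, x) ∂κ σ := by
  obtain ⟨C, hC⟩ := hfc.exists_bound_of_continuous hf.continuous
  have h_int (r : ℝ) : Integrable (fun x => f (r, x)) (κ σ) :=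
    .of_bound (hf.continuous.comp (.prodMk_right r)).aestronglyMeasurable C
      (Eventually.of_forall fun x => hC (r, x))
  have hsc : HasCompactSupport fun x => f (s, x) :=
    .intro (hfc.isCompact.image continuous_snd) fun x hx => by
      by_contra h0
      exact hx ⟨(s, x), subset_tsupport _ h0, rfl⟩
  have hspace := (abs_le.1
    (h.abs_integral_sub_integral_le (lipschitzWith_prodMk_left hf s) hsc hσ)).1
  have htime := (abs_le.1 (abs_integral_sub_integral_le_of_abs_sub_le (h_int s) (h_int σ)
    (ε := K * (σ - s)) fun x => ?_)).2
  · linarith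
  · simpa [Real.dist_eq, dist_prod_same_right, abs_of_nonneg (sub_nonneg.2 hσ), abs_sub_comm s σ]
      using hf.dist_le_mul (s, x) (σ, x)

theorem mul_integral_le (h : IsCESolution V κ) {f : ℝ × E → ℝ} {K : ℝ≥0} (hf : LipschitzWith K f)
    (hfc : HasCompactSupport f) {s t : ℝ} (hst : s ≤ t) :
    (t - s) * ∫ x, f (s, x) ∂κ s ≤
      (∫ σ in s..t, ∫ x, f (σ, x) ∂κ σ) + 2 * K * (t - s) * (t - s) := by
  obtain ⟨C, hC⟩ := hfc.exists_bound_of_continuous hf.continuous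
  have hslice : ∀ σ ∈ Icc s t, (∫ x, f (s, x) ∂κ s) - 2 * K * (t - s) ≤ ∫ x, f (σ, x) ∂κ σ :=
    fun σ hσ => (sub_le_sub_left (by gcongr; exact hσ.2) _).trans
      (h.integral_sub_le_integral hf hfc hσ.1)
  have hmono := intervalIntegral.integral_mono_on hst intervalIntegrable_const
    (intervalIntegrable_integral hf.continuous.measurable hC s t) hslice
  rw [intervalIntegral.integral_const, smul_eq_mul] at hmono
  linarith

end IsCESolution

end SmoothField

section StepTime

/-- The time spent before `t` in the `i`-th step `[i * h, (i + 1) * h]` of the grid of mesh `h`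
(for `t ≥ 0`). -/
def stepTime (h : ℝ) (i : ℕ) (t : ℝ) : ℝ := min t ((i + 1 : ℕ) * h) - min t (i * h)

variable {h : ℝ}

theorem node_le_node_succ (hh : 0 ≤ h) (i : ℕ) : (i : ℝ) * h ≤ (i + 1 : ℕ) * h := by
  gcongr
  exact i.le_succ

theorem node_succ_sub_node (i : ℕ) : ((i + 1 : ℕ) : ℝ) * h - i * h = h := by
  push_cast
  ring

theorem monotone_stepTime (hh : 0 ≤ h) (i : ℕ) : Monotone (stepTime h i) := fun s t hst => by
  simp only [stepTime]
  grind [node_le_node_succ hh i]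

theorem stepTime_nonneg (hh : 0 ≤ h) (i : ℕ) (t : ℝ) : 0 ≤ stepTime h i t :=
  sub_nonneg.2 (min_le_min_left t (node_le_node_succ hh i))

theorem stepTime_le (hh : 0 ≤ h) (i : ℕ) (t : ℝ) : stepTime h i t ≤ h := by
  simp only [stepTime]
  grind [node_succ_sub_node (h := h) i]

theorem sum_stepTime (h : ℝ) (n : ℕ) (t : ℝ) :
    ∑ i ∈ Finset.range n, stepTime h i t = min t (n * h) - min t 0 := by
  simp only [stepTime, Finset.sum_range_sub fun i : ℕ => min t (i * h), Nat.cast_zero, zero_mul]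

theorem stepTime_node (hh : 0 ≤ h) (i k : ℕ) : stepTime h i (k * h) = if i < k then h else 0 := by
  have hmin (i j : ℕ) : min ((i : ℝ) * h) (j * h) = (min i j : ℕ) * h := by
    rw [Nat.cast_min, min_mul_of_nonneg _ _ hh]
  rw [stepTime, hmin, hmin]
  split_ifs with hik
  · rw [min_eq_right hik, min_eq_right hik.le, node_succ_sub_node]
  · rw [min_eq_left (by lia), min_eq_left (by lia), sub_self]

theorem norm_sum_stepTime_smul_sub_integral_le {E : Type*} [NormedAddCommGroup E]
    [NormedSpace ℝ E] [CompleteSpace E] (hh : 0 ≤ h) {n : ℕ} {v : ℕ → E} {w : ℝ → E}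
    (hw : Continuous w) {C : ℕ → ℝ}
    (hC : ∀ i < n, ∀ r ∈ Icc (i * h) ((i + 1 : ℕ) * h), ‖v i - w r‖ ≤ C i) {t : ℝ}
    (ht : t ∈ Icc 0 (n * h)) :
    ‖(∑ i ∈ Finset.range n, stepTime h i t • v i) - ∫ r in (0 : ℝ)..t, w r‖ ≤
      ∑ i ∈ Finset.range n, h * C i := by
  have hsplit : ∫ r in (0 : ℝ)..t, w r = ∑ i ∈ Finset.range n,
      ∫ r in (min t (i * h))..(min t ((i + 1 : ℕ) * h)), w r := by
    rw [intervalIntegral.sum_integral_adjacent_intervals (a := fun i : ℕ => min t (i * h))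
      fun k _ => hw.intervalIntegrable _ _]
    simp [ht.1, ht.2]
  rw [hsplit, ← Finset.sum_sub_distrib]
  refine (norm_sum_le _ _).trans (Finset.sum_le_sum fun i hi => ?_)
  have hCi := hC i (Finset.mem_range.1 hi)
  have hstep : ∀ r ∈ uIoc (min t (i * h)) (min t ((i + 1 : ℕ) * h)), ‖v i - w r‖ ≤ C i := by
    intro r hr
    rw [uIoc_of_le (min_le_min_left t (node_le_node_succ hh i))] at hr
    refine hCi r ⟨?_, hr.2.trans (min_le_right _ _)⟩
    exact (min_lt_iff.1 hr.1).elim (fun htr => absurd htr (hr.2.trans (min_le_left _ _)).not_gt)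
      le_of_lt
  calc ‖stepTime h i t • v i - ∫ r in (min t (i * h))..(min t ((i + 1 : ℕ) * h)), w r‖
      = ‖∫ r in (min t (i * h))..(min t ((i + 1 : ℕ) * h)), (v i - w r)‖ := by
        rw [intervalIntegral.integral_sub intervalIntegrable_const (hw.intervalIntegrable _ _),
          intervalIntegral.integral_const, stepTime]
    _ ≤ C i * stepTime h i t :=
        (intervalIntegral.norm_integral_le_of_norm_le_const hstep).trans_eq
          (congrArg _ (abs_of_nonneg (stepTime_nonneg hh i t)))
    _ ≤ h * C i := by
        rw [mul_comm]
        exact mul_le_mul_of_nonneg_right (stepTime_le hh i t) ((norm_nonneg _).trans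
          (hCi _ (left_mem_Icc.2 (node_le_node_succ hh i))))

end StepTime

section EulerPath

variable {E : Type*} [NormedAddCommGroup E] [NormedSpace ℝ E]

/-- The polygonal path starting at `X 0` whose velocity on the `i`-th time interval of length `h`
is the value of the field `c` at the `i`-th node of the chain `X`. -/
def eulerPath (c : ℝ × E → E) (h : ℝ) (n : ℕ) (X : ℕ → E) (t : ℝ) : E :=
  X 0 + ∑ i ∈ Finset.range n, stepTime h i t • c (i * h, X i)

/-- The total truncated distance between the steps of the chain `X` and the Euler steps of the
field `c`. -/
def eulerDefect (c : ℝ × E → E) (h : ℝ) (n : ℕ) (X : ℕ → E) : ℝ :=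
  ∑ j ∈ Finset.range n, truncDist (X j + h • c (j * h, X j)) (X (j + 1))

variable {c : ℝ × E → E} {h : ℝ} {n : ℕ}

theorem eulerPath_node (hh : 0 ≤ h) (X : ℕ → E) {k : ℕ} (hk : k ≤ n) :
    eulerPath c h n X (k * h) = X 0 + ∑ i ∈ Finset.range k, h • c (i * h, X i) := by
  have hfilter : (Finset.range n).filter (· < k) = Finset.range k := by grind
  simp only [eulerPath, stepTime_node hh, ite_smul, zero_smul, ← Finset.sum_filter, hfilter]

theorem eulerPath_zero (hh : 0 ≤ h) (X : ℕ → E) : eulerPath c h n X 0 = X 0 := by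
  simpa using eulerPath_node (c := c) hh X n.zero_le

theorem eulerPath_succ (hh : 0 ≤ h) (X : ℕ → E) {k : ℕ} (hk : k < n) :
    eulerPath c h n X ((k + 1 : ℕ) * h) = eulerPath c h n X (k * h) + h • c (k * h, X k) := by
  rw [eulerPath_node hh X hk, eulerPath_node hh X hk.le, Finset.sum_range_succ, add_assoc]

theorem continuous_uncurry_eulerPath (hc : Continuous c) :
    Continuous fun p : (ℕ → E) × ℝ => eulerPath c h n p.1 p.2 := by
  unfold eulerPath stepTime
  fun_prop

theorem lipschitzWith_eulerPath (hh : 0 ≤ h) {b : ℝ≥0} (hc : ∀ z, ‖c z‖ ≤ b) (X : ℕ → E) :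
    LipschitzWith b (eulerPath c h n X) := by
  refine LipschitzWith.of_dist_le_mul fun s t => ?_
  wlog hst : s ≤ t
  · rw [dist_comm, dist_comm s]
    exact this hh hc X t s (le_of_not_ge hst)
  have hdiff : eulerPath c h n X t - eulerPath c h n X s =
      ∑ i ∈ Finset.range n, (stepTime h i t - stepTime h i s) • c (i * h, X i) := by
    simp only [eulerPath, add_sub_add_left_eq_sub, sub_smul, Finset.sum_sub_distrib]
  have htotal : ∑ i ∈ Finset.range n, (stepTime h i t - stepTime h i s) ≤ t - s := by
    rw [Finset.sum_sub_distrib, sum_stepTime, sum_stepTime]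
    have hnh : 0 ≤ n * h := by positivity
    grind
  rw [dist_comm, dist_eq_norm, hdiff, dist_comm, Real.dist_eq, abs_of_nonneg (sub_nonneg.2 hst)]
  calc ‖∑ i ∈ Finset.range n, (stepTime h i t - stepTime h i s) • c (i * h, X i)‖
      ≤ ∑ i ∈ Finset.range n, b * (stepTime h i t - stepTime h i s) := by
        refine norm_sum_le_of_le _ fun i _ => ?_
        have hmono := sub_nonneg.2 (monotone_stepTime hh i hst)
        rw [norm_smul, Real.norm_of_nonneg hmono, mul_comm]
        exact mul_le_mul_of_nonneg_right (hc _) hmono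
    _ ≤ b * (t - s) := by
        rw [← Finset.mul_sum]
        exact mul_le_mul_of_nonneg_left htotal b.2

theorem eulerDefect_nonneg (X : ℕ → E) : 0 ≤ eulerDefect c h n X :=
  Finset.sum_nonneg fun _ _ => truncDist_nonneg _ _

theorem eulerDefect_mono (X : ℕ → E) : Monotone fun n => eulerDefect c h n X := fun _ _ hmn =>
  Finset.sum_le_sum_of_subset_of_nonneg (Finset.range_mono hmn) fun _ _ _ => truncDist_nonneg _ _

theorem continuous_eulerDefect (hc : Continuous c) (h : ℝ) (n : ℕ) :
    Continuous (eulerDefect c h n) :=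
  continuous_finsetSum _ fun j _ => continuous_truncDist.comp
    (.prodMk (by fun_prop) (by fun_prop))

theorem integrable_eulerDefect [MeasurableSpace E] [BorelSpace E] [SecondCountableTopology E]
    (hc : Continuous c) (h : ℝ) (n : ℕ) (Q : Measure (ℕ → E)) [IsFiniteMeasure Q] :
    Integrable (eulerDefect c h n) Q := by
  refine .of_bound (continuous_eulerDefect hc h n).aestronglyMeasurable n
    (Eventually.of_forall fun X => ?_)
  rw [Real.norm_of_nonneg (eulerDefect_nonneg X)]
  simpa [eulerDefect] using Finset.sum_le_sum fun j (_ : j ∈ Finset.range n) =>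
    truncDist_le_one (X j + h • c (j * h, X j)) (X (j + 1))

theorem truncDist_add_right {E : Type*} [SeminormedAddCommGroup E] (x y z : E) :
    truncDist (x + z) (y + z) = truncDist x y := by
  simp only [truncDist, dist_add_right]

theorem truncDist_eulerPath_le (hh : 0 ≤ h) (X : ℕ → E) {k : ℕ} (hk : k ≤ n) :
    truncDist (X k) (eulerPath c h n X (k * h)) ≤ eulerDefect c h n X := by
  refine le_trans ?_ (eulerDefect_mono X hk)
  induction k with
  | zero => simp [eulerPath_zero hh, truncDist_self, eulerDefect]
  | succ k ih =>
    calc truncDist (X (k + 1)) (eulerPath c h n X ((k + 1 : ℕ) * h))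
        ≤ truncDist (X (k + 1)) (X k + h • c (k * h, X k)) +
          truncDist (X k + h • c (k * h, X k)) (eulerPath c h n X (k * h) + h • c (k * h, X k)) :=
          eulerPath_succ (c := c) hh X hk ▸ truncDist_triangle _ _ _
      _ ≤ truncDist (X k + h • c (k * h, X k)) (X (k + 1)) + eulerDefect c h k X := by
          rw [truncDist_comm, truncDist_add_right]
          exact add_le_add_right (ih (Nat.le_of_succ_le hk)) _
      _ = eulerDefect c h (k + 1) X := by
          rw [eulerDefect, eulerDefect, Finset.sum_range_succ, add_comm]

theorem norm_sub_le_mul_truncDist {E F : Type*} [PseudoMetricSpace E] [SeminormedAddCommGroup F]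
    {g : E → F} {L : ℝ≥0} (hg : LipschitzWith L g) {C : ℝ} (hC : ∀ x, ‖g x‖ ≤ C) (x y : E) :
    ‖g x - g y‖ ≤ (L + 2 * C) * truncDist x y := by
  have hC0 : 0 ≤ C := (norm_nonneg _).trans (hC x)
  have hdist : ‖g x - g y‖ ≤ L * dist x y := dist_eq_norm (g x) (g y) ▸ hg.dist_le_mul x y
  have hbound := norm_sub_le (g x) (g y)
  unfold truncDist
  rcases le_total (dist x y) 1 with hxy | hxy
  · rw [min_eq_left hxy]
    nlinarith [dist_nonneg (x := x) (y := y)]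
  · rw [min_eq_right hxy]
    linarith [hC x, hC y, L.2]

variable {c' : ℝ × E → E} {L : ℝ≥0}

theorem norm_sub_comp_eulerPath_le (hh : 0 ≤ h) (hc : ∀ z, ‖c z‖ ≤ 2) (hL : LipschitzWith L c')
    (hc' : ∀ z, ‖c' z‖ ≤ 2) (X : ℕ → E) {i : ℕ} (hi : i ≤ n) {r : ℝ}
    (hr : r ∈ Icc (i * h) ((i + 1 : ℕ) * h)) :
    ‖c (i * h, X i) - c' (r, eulerPath c h n X r)‖ ≤ ‖c (i * h, X i) - c' (i * h, X i)‖ +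
      (L * (2 * h) + (L + 4) * eulerDefect c h n X) := by
  set γ := eulerPath c h n X
  have hnode : ‖c' (i * h, X i) - c' (i * h, γ (i * h))‖ ≤ (L + 4) * eulerDefect c h n X :=
    calc _ ≤ (L + 2 * 2) * truncDist (X i) (γ (i * h)) :=
          norm_sub_le_mul_truncDist (lipschitzWith_prodMk_left hL _) (fun x => hc' _) _ _
      _ ≤ (L + 4) * eulerDefect c h n X := by
          norm_num only
          gcongr
          exact truncDist_eulerPath_le hh X hi
  have hpath : ‖c' (i * h, γ (i * h)) - c' (r, γ r)‖ ≤ L * (2 * h) := by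
    rw [← dist_eq_norm]
    refine (hL.dist_le_mul _ _).trans (mul_le_mul_of_nonneg_left ?_ L.2)
    have hd : dist (i * h) r ≤ h := by
      rw [dist_comm, Real.dist_eq, abs_of_nonneg (sub_nonneg.2 hr.1)]
      linarith [hr.2, node_succ_sub_node (h := h) i]
    refine max_le (hd.trans (by linarith)) ?_
    exact ((lipschitzWith_eulerPath (b := 2) hh hc X).dist_le_mul _ _).trans (by gcongr; simp)
  have hsplit : c (i * h, X i) - c' (r, γ r) = (c (i * h, X i) - c' (i * h, X i)) +
      ((c' (i * h, γ (i * h)) - c' (r, γ r)) + (c' (i * h, X i) - c' (i * h, γ (i * h)))) := by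
    abel
  rw [hsplit]
  exact norm_add_le_of_le le_rfl (norm_add_le_of_le hpath hnode)

theorem norm_eulerPath_sub_integral_le [CompleteSpace E] (hh : 0 ≤ h) (hc : ∀ z, ‖c z‖ ≤ 2)
    (hL : LipschitzWith L c') (hc' : ∀ z, ‖c' z‖ ≤ 2) (X : ℕ → E) {t : ℝ}
    (ht : t ∈ Icc 0 (n * h)) :
    ‖eulerPath c h n X t - eulerPath c h n X 0 - ∫ r in (0 : ℝ)..t, c' (r, eulerPath c h n X r)‖ ≤
      ∑ i ∈ Finset.range n, h * ‖c (i * h, X i) - c' (i * h, X i)‖ +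
        n * h * (L * (2 * h) + (L + 4) * eulerDefect c h n X) := by
  have hcont : Continuous fun r => c' (r, eulerPath c h n X r) :=
    hL.continuous.comp (continuous_id.prodMk (lipschitzWith_eulerPath (b := 2) hh hc X).continuous)
  rw [eulerPath_zero hh, eulerPath, add_sub_cancel_left]
  refine (norm_sum_stepTime_smul_sub_integral_le hh hcont (fun i hi r hr =>
    norm_sub_comp_eulerPath_le hh hc hL hc' X hi.le hr) ht).trans_eq ?_
  simp only [mul_add, Finset.sum_add_distrib, Finset.sum_const, Finset.card_range, nsmul_eq_mul]
  ring

end EulerPath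

section EulerChain

variable {E : Type*} [NormedAddCommGroup E] [NormedSpace ℝ E] [MeasurableSpace E]
  [BorelSpace E] [FiniteDimensional ℝ E] {V : ℝ → E → E} {κ : Kernel ℝ E} [IsMarkovKernel κ]
  {c : ℝ × E → E} {L : ℝ≥0}

namespace IsCESolution

theorem integral_norm_sub_slice_le (hV : IsCESolution V κ) (hc : IsSmoothField c L) {s t σ : ℝ}
    (hσ : σ ∈ Icc s t) :
    ∫ x, ‖V σ x - c (s, x)‖ ∂κ σ ≤ (∫ x, ‖V σ x - c (σ, x)‖ ∂κ σ) + L * (t - s) := by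
  have hcm := hc.contDiff.continuous.measurable
  have h_int := hV.integrable_norm_sub hcm hc.norm_le σ
  calc ∫ x, ‖V σ x - c (s, x)‖ ∂κ σ ≤ ∫ x, (‖V σ x - c (σ, x)‖ + L * (t - s)) ∂κ σ := by
        refine integral_mono_of_nonneg (Eventually.of_forall fun x => norm_nonneg _)
          (h_int.add (integrable_const _)) (Eventually.of_forall fun x => ?_)
        refine (norm_sub_le_norm_sub_add_norm_sub _ (c (σ, x)) _).trans (add_le_add_right ?_ _)
        rw [← dist_eq_norm]
        refine (hc.lipschitz.dist_le_mul _ _).trans (mul_le_mul_of_nonneg_left ?_ L.2)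
        rw [dist_prod_same_right, Real.dist_eq, abs_of_nonneg (sub_nonneg.2 hσ.1)]
        exact sub_le_sub_right hσ.2 s
    _ = (∫ x, ‖V σ x - c (σ, x)‖ ∂κ σ) + L * (t - s) := by
        rw [integral_add h_int (integrable_const _)]
        simp

theorem integral_sub_integral_smoothField_le (hV : IsCESolution V κ) {f : E → ℝ}
    (hf : LipschitzWith 1 f) (hfc : HasCompactSupport f) (hc : IsSmoothField c L) {s t : ℝ}
    (hst : s ≤ t) :
    (∫ x, f x ∂κ t) - ∫ x, f (x + (t - s) • c (s, x)) ∂κ s ≤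
      (∫ σ in s..t, ∫ x, ‖V σ x - c (σ, x)‖ ∂κ σ) + 2 * (L * (t - s) * (t - s)) := by
  have hcm := hc.contDiff.continuous.measurable
  have hfrozen := (abs_le.1 (hV.abs_integral_sub_integral_euler_le (c := fun x => c (s, x)) hf hfc
    (hc.contDiff.comp (contDiff_const.prodMk contDiff_id))
    (lipschitzWith_prodMk_left hc.lipschitz s)
    (fun x => hc.norm_le _) hst)).2
  have h_int := hV.intervalIntegrable_integral_norm_sub hcm hc.norm_le s t
  have hslice := intervalIntegral.integral_mono_on hst
    (hV.intervalIntegrable_integral_norm_sub (w := fun z => c (s, z.2))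
      (hcm.comp (measurable_const.prodMk measurable_snd)) (fun z => hc.norm_le _) s t)
    (h_int.add intervalIntegrable_const) fun σ hσ => hV.integral_norm_sub_slice_le hc hσ
  rw [intervalIntegral.integral_add h_int intervalIntegrable_const,
    intervalIntegral.integral_const, smul_eq_mul] at hslice
  dsimp only at hslice
  linarith

theorem exists_euler_coupling (hV : IsCESolution V κ) (hc : IsSmoothField c L) {s t : ℝ}
    (hst : s ≤ t) {ε : ℝ} (hε : 0 < ε) :
    ∃ P : Measure (E × E), P.fst = (κ s).map (fun x => x + (t - s) • c (s, x)) ∧ P.snd = κ t ∧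
      ∫⁻ p, ENNReal.ofReal (truncDist p.1 p.2) ∂P ≤ ENNReal.ofReal
        ((∫ σ in s..t, ∫ x, ‖V σ x - c (σ, x)‖ ∂κ σ) + 2 * (L * (t - s) * (t - s)) + ε) := by
  have hcs := (lipschitzWith_prodMk_left hc.lipschitz s).continuous
  have hstep : Measurable fun x => x + (t - s) • c (s, x) :=
    (continuous_id.add (hcs.const_smul (t - s))).measurable
  have := Measure.isProbabilityMeasure_map (μ := κ s) hstep.aemeasurable
  refine exists_coupling_of_lipschitz (fun f hf hfc _ => ?_) hε
  rw [integral_map hstep.aemeasurable hf.continuous.aestronglyMeasurable]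
  exact hV.integral_sub_integral_smoothField_le hf hfc hc hst

theorem exists_chain_integral_truncDist_le (hV : IsCESolution V κ) (hc : IsSmoothField c L) {h : ℝ}
    (hh : 0 ≤ h) (n : ℕ) {ε : ℝ} (hε : 0 < ε) :
    ∃ Q : Measure (ℕ → E), IsProbabilityMeasure Q ∧
      (∀ k ≤ n, Q.map (fun X => X k) = κ (k * h)) ∧
      ∀ k < n, ∫ X, truncDist (X k + h • c (k * h, X k)) (X (k + 1)) ∂Q ≤
        (∫ σ in (k * h)..((k + 1 : ℕ) * h), ∫ x, ‖V σ x - c (σ, x)‖ ∂κ σ) +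
          2 * (L * h * h) + ε := by
  have := secondCountable_of_proper (α := E)
  have hstep (k : ℕ) : Measurable fun x => x + h • c (k * h, x) :=
    (continuous_id.add
      ((lipschitzWith_prodMk_left hc.lipschitz _).continuous.const_smul h)).measurable
  choose P hfst hsnd hP using fun k : ℕ => hV.exists_euler_coupling hc (node_le_node_succ hh k) hε
  simp only [node_succ_sub_node] at hfst hP
  obtain ⟨Q, hQ, hQκ, hQP⟩ := exists_chain (fun k : ℕ => κ (k * h)) hstep hfst hsnd n
  refine ⟨Q, hQ, hQκ, fun k hk => ?_⟩
  have hpair : Measurable fun X : ℕ → E => (X k + h • c (k * h, X k), X (k + 1)) :=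
    ((hstep k).comp (measurable_pi_apply k)).prodMk (measurable_pi_apply (k + 1))
  have hcost := hP k
  rw [← hQP k hk, lintegral_map measurable_truncDist.ennreal_ofReal hpair] at hcost
  rw [integral_eq_lintegral_of_nonneg_ae (Eventually.of_forall fun X => truncDist_nonneg _ _)
    (measurable_truncDist.comp hpair).aestronglyMeasurable]
  refine ENNReal.toReal_le_of_le_ofReal ?_ hcost
  have h_int : 0 ≤ ∫ σ in (k * h)..((k + 1 : ℕ) * h), ∫ x, ‖V σ x - c (σ, x)‖ ∂κ σ :=
    intervalIntegral.integral_nonneg (node_le_node_succ hh k) fun σ _ =>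
      integral_nonneg fun x => norm_nonneg _
  positivity

theorem exists_euler_chain (hV : IsCESolution V κ) (hc : IsSmoothField c L) {h : ℝ} (hh : 0 ≤ h)
    {n : ℕ} (hn : 0 < n) {ε : ℝ} (hε : 0 < ε) :
    ∃ Q : Measure (ℕ → E), IsProbabilityMeasure Q ∧
      (∀ k ≤ n, Q.map (fun X => X k) = κ (k * h)) ∧
      ∫ X, eulerDefect c h n X ∂Q ≤
        (∫ σ in (0 : ℝ)..(n * h), ∫ x, ‖V σ x - c (σ, x)‖ ∂κ σ) + 2 * (L * h * (n * h)) + ε := by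
  have := secondCountable_of_proper (α := E)
  have hcont := hc.contDiff.continuous
  obtain ⟨Q, hQ, hQκ, hQd⟩ :=
    hV.exists_chain_integral_truncDist_le hc hh n (div_pos hε (Nat.cast_pos.2 hn))
  refine ⟨Q, hQ, hQκ, ?_⟩
  have h_int (k : ℕ) : Integrable (fun X : ℕ → E =>
      truncDist (X k + h • c (k * h, X k)) (X (k + 1))) Q :=
    .of_mem_Icc 0 1 (continuous_truncDist.comp (.prodMk (by fun_prop) (by fun_prop))).aemeasurable
      (Eventually.of_forall fun X => ⟨truncDist_nonneg _ _, truncDist_le_one _ _⟩)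
  unfold eulerDefect
  rw [integral_finsetSum _ fun k _ => h_int k]
  refine (Finset.sum_le_sum fun k hk => hQd k (Finset.mem_range.1 hk)).trans_eq ?_
  rw [Finset.sum_add_distrib, Finset.sum_add_distrib,
    intervalIntegral.sum_integral_adjacent_intervals (a := fun i : ℕ => (i : ℝ) * h)
      fun k _ => hV.intervalIntegrable_integral_norm_sub hcont.measurable hc.norm_le _ _]
  simp only [Finset.sum_const, Finset.card_range, nsmul_eq_mul, Nat.cast_zero, zero_mul]
  field_simp

end IsCESolution

end EulerChain

/-! ### Approximate path measures -/

section PathDefect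

variable {E : Type*} [NormedAddCommGroup E] [NormedSpace ℝ E] {T : ℝ} {c : ℝ × E → E} {h : ℝ}
  {n : ℕ} {L : ℝ≥0}

/-- The defect at time `t` of the path `γ` in the integral form of the ODE `γ' = c (t, γ)`. -/
def odeDefect (hT : 0 ≤ T) (c : ℝ × E → E) (t : Icc 0 T) (γ : C(Icc 0 T, E)) : E :=
  γ t - γ ⟨0, left_mem_Icc.2 hT⟩ - ∫ r in (0 : ℝ)..t, c (r, γ (projIcc 0 T hT r))

theorem continuous_odeDefect (hT : 0 ≤ T) (hc : IsSmoothField c L) (t : Icc 0 T) :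
    Continuous (odeDefect hT c t) := by
  refine ((continuous_eval_const t).sub (continuous_eval_const _)).sub ?_
  refine intervalIntegral.continuous_of_dominated_interval (bound := fun _ => 2) (fun γ => ?_)
    (fun γ => Eventually.of_forall fun r _ => hc.norm_le _) intervalIntegrable_const
    (Eventually.of_forall fun r _ => ?_)
  · exact (hc.contDiff.continuous.comp (continuous_id.prodMk
      (γ.continuous.comp continuous_projIcc))).aestronglyMeasurable
  · exact hc.contDiff.continuous.comp (continuous_const.prodMk (continuous_eval_const _))

theorem continuous_eulerPath (c : ℝ × E → E) (h : ℝ) (n : ℕ) (X : ℕ → E) :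
    Continuous (eulerPath c h n X) := by
  unfold eulerPath stepTime
  fun_prop

/-- The Euler path `eulerPath c h n X` as an element of the space of continuous paths. -/
def eulerMap (T : ℝ) (c : ℝ × E → E) (h : ℝ) (n : ℕ) (X : ℕ → E) : C(Icc 0 T, E) :=
  ⟨fun t => eulerPath c h n X t, (continuous_eulerPath c h n X).comp continuous_subtype_val⟩

theorem continuous_eulerMap (T : ℝ) (hc : Continuous c) (h : ℝ) (n : ℕ) :
    Continuous (eulerMap T c h n) :=
  ContinuousMap.continuous_of_continuous_uncurry _ ((continuous_uncurry_eulerPath hc).comp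
    (continuous_fst.prodMk (continuous_subtype_val.comp continuous_snd)))

theorem norm_odeDefect_eulerMap_le [CompleteSpace E] (hT : 0 ≤ T) (hh : 0 ≤ h) (hnh : n * h = T)
    (hc : ∀ z, ‖c z‖ ≤ 2) {c' : ℝ × E → E} (hL : LipschitzWith L c') (hc' : ∀ z, ‖c' z‖ ≤ 2)
    (X : ℕ → E) (t : Icc 0 T) :
    ‖odeDefect hT c' t (eulerMap T c h n X)‖ ≤
      ∑ i ∈ Finset.range n, h * ‖c (i * h, X i) - c' (i * h, X i)‖ +
        T * (L * (2 * h) + (L + 4) * eulerDefect c h n X) := by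
  have hpath := norm_eulerPath_sub_integral_le (n := n) hh hc hL hc' X (t := t) (hnh ▸ t.2)
  have hproj : ∫ r in (0 : ℝ)..t, c' (r, eulerMap T c h n X (projIcc 0 T hT r)) =
      ∫ r in (0 : ℝ)..t, c' (r, eulerPath c h n X r) := by
    refine intervalIntegral.integral_congr fun r hr => ?_
    rw [uIcc_of_le t.2.1] at hr
    simp only [projIcc_of_mem hT ⟨hr.1, hr.2.trans t.2.2⟩, eulerMap, ContinuousMap.coe_mk]
  rwa [hnh, ← hproj] at hpath

theorem abs_sub_comp_eulerPath_le (hh : 0 ≤ h) (hc : ∀ z, ‖c z‖ ≤ 2) {f : E → ℝ}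
    (hf : LipschitzWith 1 f) (hf01 : ∀ x, f x ∈ Icc 0 1) (X : ℕ → E) {k : ℕ} (hk : k ≤ n) {t : ℝ}
    (hkt : k * h ≤ t) (htk : t ≤ k * h + h) :
    |f (eulerPath c h n X t) - f (X k)| ≤ 2 * h + eulerDefect c h n X := by
  have hpath : dist (eulerPath c h n X t) (eulerPath c h n X (k * h)) ≤ 2 * h := by
    refine ((lipschitzWith_eulerPath (b := 2) hh hc X).dist_le_mul _ _).trans ?_
    rw [Real.dist_eq, abs_of_nonneg (sub_nonneg.2 hkt), NNReal.coe_ofNat]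
    linarith
  calc |f (eulerPath c h n X t) - f (X k)| ≤ truncDist (eulerPath c h n X t) (X k) :=
        abs_sub_le_truncDist hf hf01 _ _
    _ ≤ truncDist (eulerPath c h n X t) (eulerPath c h n X (k * h)) +
        truncDist (eulerPath c h n X (k * h)) (X k) := truncDist_triangle _ _ _
    _ ≤ 2 * h + eulerDefect c h n X := add_le_add ((truncDist_le_dist _ _).trans hpath)
        (truncDist_comm (X k) _ ▸ truncDist_eulerPath_le hh X hk)

end PathDefect

theorem exists_node_le {h : ℝ} (hh : 0 ≤ h) {n : ℕ} {t : ℝ} (ht : t ∈ Icc 0 (n * h)) :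
    ∃ k ≤ n, k * h ≤ t ∧ t ≤ k * h + h := by
  rcases hh.eq_or_lt with rfl | hh
  · simp only [mul_zero, Icc_self, mem_singleton_iff] at ht
    exact ⟨0, n.zero_le, by simp [ht]⟩
  have hfloor : (⌊t / h⌋₊ : ℝ) * h ≤ t := (le_div_iff₀ hh).1 (Nat.floor_le (div_nonneg ht.1 hh.le))
  refine ⟨⌊t / h⌋₊, ?_, hfloor, ?_⟩
  · exact_mod_cast le_of_mul_le_mul_right (hfloor.trans ht.2) hh
  · linarith [(div_lt_iff₀ hh).1 (Nat.lt_floor_add_one (t / h))]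

theorem exists_mesh_le {T : ℝ} (hT : 0 ≤ T) (L : ℝ) {ε : ℝ} (hε : 0 < ε) :
    ∃ (n : ℕ) (h : ℝ), 0 < n ∧ 0 ≤ h ∧ n * h = T ∧ h ≤ ε ∧ L * h * T ≤ ε := by
  have hmesh (C : ℝ) : ∀ᶠ n : ℕ in atTop, C / n < ε :=
    (tendsto_const_div_atTop_nhds_zero_nat C).eventually_lt_const hε
  obtain ⟨n, hTn, hLTn, hn⟩ :=
    ((hmesh T).and ((hmesh (L * T * T)).and (eventually_gt_atTop 0))).exists
  refine ⟨n, T / n, hn, by positivity, by field_simp, hTn.le, ?_⟩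
  exact (by ring : L * (T / n) * T = L * T * T / n) ▸ hLTn.le

section ApproxPath

variable {E : Type*} [NormedAddCommGroup E] [NormedSpace ℝ E] [MeasurableSpace E]
  [BorelSpace E] [FiniteDimensional ℝ E] {V : ℝ → E → E} {κ : Kernel ℝ E} [IsMarkovKernel κ]
  {c c' : ℝ × E → E} {L L' : ℝ≥0} {h : ℝ} {n : ℕ} {Q : Measure (ℕ → E)}

namespace IsCESolution

theorem abs_integral_eulerPath_sub_le [IsProbabilityMeasure Q] (hV : IsCESolution V κ)
    (hc : IsSmoothField c L) (hh : 0 ≤ h) (hQ : ∀ k ≤ n, Q.map (fun X => X k) = κ (k * h))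
    {f : E → ℝ} (hf : LipschitzWith 1 f) (hfc : HasCompactSupport f) (hf01 : ∀ x, f x ∈ Icc 0 1)
    {t : ℝ} (ht : t ∈ Icc 0 (n * h)) :
    |∫ X, f (eulerPath c h n X t) ∂Q - ∫ x, f x ∂κ t| ≤
      3 * h + ∫ X, eulerDefect c h n X ∂Q := by
  have := secondCountable_of_proper (α := E)
  have hcont := hc.contDiff.continuous
  obtain ⟨k, hkn, hkt, htk⟩ := exists_node_le hh ht
  have hnode : ∫ X, f (X k) ∂Q = ∫ x, f x ∂κ (k * h) := by
    rw [← hQ k hkn, integral_map (measurable_pi_apply k).aemeasurable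
      hf.continuous.aestronglyMeasurable]
  have hintegrable {g : (ℕ → E) → E} (hg : Continuous g) : Integrable (fun X => f (g X)) Q :=
    .of_mem_Icc 0 1 (hf.continuous.comp hg).aemeasurable (Eventually.of_forall fun X => hf01 _)
  have hpath : Continuous fun X => eulerPath c h n X t :=
    (continuous_uncurry_eulerPath hcont).comp (.prodMk_left t)
  have hpaths : |∫ X, f (eulerPath c h n X t) ∂Q - ∫ X, f (X k) ∂Q| ≤
      2 * h + ∫ X, eulerDefect c h n X ∂Q := by
    rw [← integral_sub (hintegrable hpath) (hintegrable (continuous_apply k))]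
    calc _ ≤ ∫ X, (2 * h + eulerDefect c h n X) ∂Q :=
          norm_integral_le_of_norm_le (f := fun X => f (eulerPath c h n X t) - f (X k))
            ((integrable_const _).add (integrable_eulerDefect hcont h n Q))
            (Eventually.of_forall fun X =>
              abs_sub_comp_eulerPath_le hh hc.norm_le hf hf01 X hkn hkt htk)
      _ = 2 * h + ∫ X, eulerDefect c h n X ∂Q := by
          rw [integral_add (integrable_const _) (integrable_eulerDefect hcont h n Q)]
          simp
  have hmove := hV.abs_integral_sub_integral_le hf hfc hkt
  rw [abs_sub_comm, NNReal.coe_one, one_mul] at hmove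
  rw [hnode] at hpaths
  linarith [abs_sub_le (∫ X, f (eulerPath c h n X t) ∂Q) (∫ x, f x ∂κ (k * h)) (∫ x, f x ∂κ t)]

theorem sum_mul_integral_le (hV : IsCESolution V κ) {K : ℝ≥0} {f : ℝ × E → ℝ}
    (hf : LipschitzWith K f) (hfc : HasCompactSupport f) (hh : 0 ≤ h) (n : ℕ) :
    ∑ i ∈ Finset.range n, h * ∫ x, f (i * h, x) ∂κ (i * h) ≤
      (∫ σ in (0 : ℝ)..(n * h), ∫ x, f (σ, x) ∂κ σ) + 2 * K * h * (n * h) := by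
  obtain ⟨C, hC⟩ := hf.continuous.bounded_above_of_compact_support hfc
  have hstep (i : ℕ) : h * ∫ x, f (i * h, x) ∂κ (i * h) ≤
      (∫ σ in (i * h)..((i + 1 : ℕ) * h), ∫ x, f (σ, x) ∂κ σ) + 2 * K * h * h := by
    simpa only [node_succ_sub_node] using hV.mul_integral_le hf hfc (node_le_node_succ hh i)
  refine (Finset.sum_le_sum fun i _ => hstep i).trans_eq ?_
  rw [Finset.sum_add_distrib,
    intervalIntegral.sum_integral_adjacent_intervals (a := fun i : ℕ => (i : ℝ) * h)
      fun k _ => intervalIntegrable_integral hf.continuous.measurable hC _ _]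
  simp only [Finset.sum_const, Finset.card_range, nsmul_eq_mul, Nat.cast_zero, zero_mul]
  ring

theorem intervalIntegral_norm_sub_le (hV : IsCESolution V κ) (hc : IsSmoothField c L)
    (hc' : IsSmoothField c' L') {T : ℝ} (hT : 0 ≤ T) :
    ∫ σ in (0 : ℝ)..T, ∫ x, ‖c (σ, x) - c' (σ, x)‖ ∂κ σ ≤
      (∫ σ in (0 : ℝ)..T, ∫ x, ‖V σ x - c (σ, x)‖ ∂κ σ) +
        ∫ σ in (0 : ℝ)..T, ∫ x, ‖V σ x - c' (σ, x)‖ ∂κ σ := by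
  have hcm := hc.contDiff.continuous.measurable
  have hcm' := hc'.contDiff.continuous.measurable
  have h_int := hV.intervalIntegrable_integral_norm_sub hcm hc.norm_le 0 T
  have h_int' := hV.intervalIntegrable_integral_norm_sub hcm' hc'.norm_le 0 T
  rw [← intervalIntegral.integral_add h_int h_int']
  refine intervalIntegral.integral_mono_on hT
    (intervalIntegrable_integral (F := fun z => ‖c z - c' z‖) (hcm.sub hcm').norm (C := 4)
      (fun z => ?_) 0 T) (h_int.add h_int') fun σ _ => ?_
  · rw [abs_norm]
    exact (norm_sub_le _ _).trans (by linarith [hc.norm_le z, hc'.norm_le z])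
  · have hσ := hV.integrable_norm_sub hcm hc.norm_le σ
    have hσ' := hV.integrable_norm_sub hcm' hc'.norm_le σ
    rw [← integral_add hσ hσ']
    refine integral_mono_of_nonneg (Eventually.of_forall fun x => norm_nonneg _) (hσ.add hσ')
      (Eventually.of_forall fun x => ?_)
    dsimp only
    rw [norm_sub_rev (V σ x) (c (σ, x))]
    exact norm_sub_le_norm_sub_add_norm_sub _ _ _

theorem integral_sum_norm_sub_le [IsFiniteMeasure Q] (hV : IsCESolution V κ)
    (hc : IsSmoothField c L) (hc' : IsSmoothField c' L') (hh : 0 ≤ h)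
    (hQ : ∀ k ≤ n, Q.map (fun X => X k) = κ (k * h)) :
    Integrable (fun X => ∑ i ∈ Finset.range n, h * ‖c (i * h, X i) - c' (i * h, X i)‖) Q ∧
      ∫ X, ∑ i ∈ Finset.range n, h * ‖c (i * h, X i) - c' (i * h, X i)‖ ∂Q ≤
        (∫ σ in (0 : ℝ)..(n * h), ∫ x, ‖c (σ, x) - c' (σ, x)‖ ∂κ σ) +
          2 * (L + L') * h * (n * h) := by
  have hnorm : LipschitzWith (L + L') fun z => ‖c z - c' z‖ := by
    simpa [Function.comp_def] using lipschitzWith_one_norm.comp (hc.lipschitz.sub hc'.lipschitz)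
  have hsupp : HasCompactSupport fun z => ‖c z - c' z‖ :=
    (hc.hasCompactSupport.sub hc'.hasCompactSupport).norm
  have hslice (s : ℝ) : Continuous fun x => ‖c (s, x) - c' (s, x)‖ :=
    hnorm.continuous.comp (.prodMk_right s)
  have hterm (i : ℕ) : Integrable (fun X : ℕ → E => h * ‖c (i * h, X i) - c' (i * h, X i)‖) Q := by
    refine .const_mul (.of_mem_Icc 0 4
      ((hslice _).measurable.comp (measurable_pi_apply i)).aemeasurable
      (Eventually.of_forall fun X => ⟨norm_nonneg _, (norm_sub_le _ _).trans ?_⟩)) h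
    linarith [hc.norm_le (i * h, X i), hc'.norm_le (i * h, X i)]
  refine ⟨integrable_finsetSum _ fun i _ => hterm i, ?_⟩
  rw [integral_finsetSum _ fun i _ => hterm i]
  refine (Finset.sum_le_sum fun i hi => ?_).trans (hV.sum_mul_integral_le hnorm hsupp hh n)
  rw [integral_const_mul, ← hQ i (Finset.mem_range.1 hi).le,
    integral_map (measurable_pi_apply i).aemeasurable (hslice _).aestronglyMeasurable]

theorem lintegral_enorm_odeDefect_eulerMap_le [IsProbabilityMeasure Q] (hV : IsCESolution V κ)
    (hc : IsSmoothField c L) (hc' : IsSmoothField c' L') (hh : 0 ≤ h)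
    (hQ : ∀ k ≤ n, Q.map (fun X => X k) = κ (k * h)) {T : ℝ} (hT : 0 ≤ T) (hnh : n * h = T)
    (t : Icc 0 T) :
    ∫⁻ X, ‖odeDefect hT c' t (eulerMap T c h n X)‖ₑ ∂Q ≤ ENNReal.ofReal
      ((∫ σ in (0 : ℝ)..T, ∫ x, ‖c (σ, x) - c' (σ, x)‖ ∂κ σ) + 2 * (L + L') * h * T +
        T * (L' * (2 * h) + (L' + 4) * ∫ X, eulerDefect c h n X ∂Q)) := by
  have := secondCountable_of_proper (α := E)
  have hdefect := (integrable_eulerDefect hc.contDiff.continuous h n Q).const_mul (L' + 4)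
  have herror : Integrable (fun X => T * (L' * (2 * h) + (L' + 4) * eulerDefect c h n X)) Q :=
    ((integrable_const _).add hdefect).const_mul T
  obtain ⟨hsum, hsum_le⟩ := hV.integral_sum_norm_sub_le hc hc' hh hQ
  rw [hnh] at hsum_le
  calc ∫⁻ X, ‖odeDefect hT c' t (eulerMap T c h n X)‖ₑ ∂Q
      ≤ ∫⁻ X, ENNReal.ofReal (∑ i ∈ Finset.range n, h * ‖c (i * h, X i) - c' (i * h, X i)‖ +
          T * (L' * (2 * h) + (L' + 4) * eulerDefect c h n X)) ∂Q :=
        lintegral_mono fun X => (ofReal_norm _).symm.trans_le (ENNReal.ofReal_le_ofReal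
          (norm_odeDefect_eulerMap_le hT hh hnh hc.norm_le hc'.lipschitz hc'.norm_le X t))
    _ = ENNReal.ofReal (∫ X, (∑ i ∈ Finset.range n, h * ‖c (i * h, X i) - c' (i * h, X i)‖ +
          T * (L' * (2 * h) + (L' + 4) * eulerDefect c h n X)) ∂Q) := by
        refine (ofReal_integral_eq_lintegral_ofReal (hsum.add herror)
          (Eventually.of_forall fun X => ?_)).symm
        have := eulerDefect_nonneg (c := c) (h := h) (n := n) X
        simp only [Pi.zero_apply, Pi.add_apply]
        positivity
    _ ≤ _ := by
        refine ENNReal.ofReal_le_ofReal ?_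
        rw [integral_add hsum herror, integral_const_mul, integral_add (integrable_const _) hdefect,
          integral_const, integral_const_mul, probReal_univ, one_smul]
        gcongr

theorem exists_approx_path_measure (hV : IsCESolution V κ) {T : ℝ} (hT : 0 ≤ T)
    [MeasurableSpace C(Icc 0 T, E)] [BorelSpace C(Icc 0 T, E)] {ε : ℝ} (hε : 0 < ε) :
    ∃ ν : Measure C(Icc 0 T, E), IsProbabilityMeasure ν ∧
      ν.map (fun γ => γ ⟨0, left_mem_Icc.2 hT⟩) = κ 0 ∧
      (∀ᵐ γ : C(Icc 0 T, E) ∂ν, LipschitzWith 2 γ) ∧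
      (∀ f : E → ℝ, LipschitzWith 1 f → HasCompactSupport f → (∀ x, f x ∈ Icc 0 1) →
        ∀ t : Icc 0 T, |∫ γ, f (γ t) ∂ν - ∫ x, f x ∂κ t| ≤ 7 * ε) ∧
      ∀ c L, IsSmoothField c L → ∀ t : Icc 0 T,
        ∫⁻ γ, ‖odeDefect hT c t γ‖ₑ ∂ν ≤ ENNReal.ofReal
          ((∫ σ in (0 : ℝ)..T, ∫ x, ‖V σ x - c (σ, x)‖ ∂κ σ) + (3 + 8 * T * L + 16 * T) * ε) := by
  have := secondCountable_of_proper (α := E)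
  obtain ⟨c, L, hc, hcV⟩ := hV.exists_isSmoothField hT hε
  obtain ⟨n, h, hn, hh0, hnh, hhε, hLh⟩ := exists_mesh_le hT L hε
  obtain ⟨Q, hQ, hQκ, hQdefect⟩ := hV.exists_euler_chain hc hh0 hn hε
  rw [hnh] at hQdefect
  have hΓ := (continuous_eulerMap T hc.contDiff.continuous h n).measurable
  refine ⟨Q.map (eulerMap T c h n), Measure.isProbabilityMeasure_map hΓ.aemeasurable, ?_, ?_,
    fun f hf hfc hf01 t => ?_, fun c' L' hc' t => ?_⟩
  · rw [Measure.map_map (continuous_eval_const _).measurable hΓ]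
    simpa [eulerMap, Function.comp_def, eulerPath_zero hh0] using hQκ 0 n.zero_le
  · have hclosed : IsClosed {γ : C(Icc 0 T, E) | LipschitzWith 2 γ} :=
      (isClosed_setOfPred_lipschitzWith 2).preimage continuous_coeFun
    exact (ae_map_iff hΓ.aemeasurable hclosed.measurableSet).2 (Eventually.of_forall fun X =>
      fun s t => lipschitzWith_eulerPath (b := 2) hh0 hc.norm_le X s t)
  · rw [integral_map (f := fun γ : C(Icc 0 T, E) => f (γ t)) hΓ.aemeasurable
      (hf.continuous.comp (continuous_eval_const t)).aestronglyMeasurable]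
    refine (hV.abs_integral_eulerPath_sub_le hc hh0 hQκ hf hfc hf01 (hnh.symm ▸ t.2)).trans ?_
    linarith
  · rw [lintegral_map (continuous_odeDefect hT hc' t).enorm.measurable hΓ]
    refine (hV.lintegral_enorm_odeDefect_eulerMap_le hc hc' hh0 hQκ hT hnh t).trans
      (ENNReal.ofReal_le_ofReal ?_)
    have htri := hV.intervalIntegral_norm_sub_le hc hc' hT
    have hdefect : T * (L' * (2 * h) + (L' + 4) * ∫ X, eulerDefect c h n X ∂Q) ≤
        T * (L' * (2 * ε) + (L' + 4) * (4 * ε)) := by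
      gcongr
      linarith
    have hL' : L' * h * T ≤ L' * ε * T := by gcongr
    linarith

end IsCESolution

end ApproxPath

/-! ### Limits of path measures -/

section Compactness

variable {X Y : Type*} [PseudoMetricSpace X] [CompactSpace X] [MetricSpace Y] [ProperSpace Y]

theorem isCompact_setOf_lipschitzWith (x₀ : X) (C : ℝ≥0) {K : Set Y} (hK : IsCompact K) :
    IsCompact {γ : C(X, Y) | LipschitzWith C γ ∧ γ x₀ ∈ K} := by
  set S := {γ : C(X, Y) | LipschitzWith C γ ∧ γ x₀ ∈ K}
  have himg : ContinuousMap.toFun '' S = {f : X → Y | LipschitzWith C f} ∩ {f | f x₀ ∈ K} := by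
    ext f
    exact ⟨fun ⟨_, hγ, hf⟩ => hf ▸ hγ, fun hf => ⟨⟨f, hf.1.continuous⟩, hf, rfl⟩⟩
  refine ArzelaAscoli.isCompact_of_equicontinuous S ?_
    (LipschitzWith.uniformEquicontinuous _ C fun γ : S => γ.2.1).equicontinuous
  rw [himg]
  have hc : IsCompact (univ.pi fun _ : X => cthickening (C * diam (univ : Set X)) K) :=
    isCompact_univ_pi fun _ => hK.cthickening
  refine hc.of_isClosed_subset ((isClosed_setOfPred_lipschitzWith C).inter
    (hK.isClosed.preimage (continuous_apply x₀))) fun f hf x _ => ?_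
  refine mem_cthickening_of_dist_le _ _ _ _ hf.2 ((hf.1.dist_le_mul x x₀).trans ?_)
  gcongr
  exact dist_le_diam_of_mem isCompact_univ.isBounded (mem_univ _) (mem_univ _)

variable [MeasurableSpace Y] [BorelSpace Y] [MeasurableSpace C(X, Y)] [BorelSpace C(X, Y)]

theorem isTightMeasureSet_of_lipschitzWith {S : Set (Measure C(X, Y))} (x₀ : X) (C : ℝ≥0)
    (μ : Measure Y) [IsFiniteMeasure μ] (hμ : ∀ ν ∈ S, ν.map (fun γ : C(X, Y) => γ x₀) = μ)
    (hL : ∀ ν ∈ S, ∀ᵐ γ : C(X, Y) ∂ν, LipschitzWith C γ) : IsTightMeasureSet S := by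
  rw [isTightMeasureSet_iff_exists_isCompact_measure_compl_le]
  intro ε hε
  obtain ⟨K, hK, hKε⟩ := isTightMeasureSet_iff_exists_isCompact_measure_compl_le.1
    (isTightMeasureSet_singleton (μ := μ)) ε hε
  refine ⟨_, isCompact_setOf_lipschitzWith x₀ C hK, fun ν hν => ?_⟩
  calc ν {γ : C(X, Y) | LipschitzWith C γ ∧ γ x₀ ∈ K}ᶜ
      ≤ ν ((fun γ : C(X, Y) => γ x₀) ⁻¹' Kᶜ) :=
        measure_mono_ae ((hL ν hν).mono fun γ hγ h h' => h ⟨hγ, h'⟩)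
    _ = μ Kᶜ := by
        rw [← hμ ν hν, Measure.map_apply (continuous_eval_const x₀).measurable
          hK.isClosed.measurableSet.compl]
    _ ≤ ε := hKε _ rfl

theorem exists_tendsto_subseq_of_lipschitzWith (x₀ : X) (C : ℝ≥0) (μ : Measure Y)
    [IsFiniteMeasure μ] {P : ℕ → ProbabilityMeasure C(X, Y)}
    (hμ : ∀ n, (P n : Measure C(X, Y)).map (fun γ : C(X, Y) => γ x₀) = μ)
    (hL : ∀ n, ∀ᵐ γ : C(X, Y) ∂(P n : Measure C(X, Y)), LipschitzWith C γ) :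
    ∃ (ν : ProbabilityMeasure C(X, Y)) (φ : ℕ → ℕ), StrictMono φ ∧
      Tendsto (P ∘ φ) atTop (𝓝 ν) := by
  have htight : IsTightMeasureSet
      {((ρ : ProbabilityMeasure C(X, Y)) : Measure C(X, Y)) | ρ ∈ range P} :=
    isTightMeasureSet_of_lipschitzWith x₀ C μ
      (by rintro _ ⟨_, ⟨n, rfl⟩, rfl⟩; exact hμ n) (by rintro _ ⟨_, ⟨n, rfl⟩, rfl⟩; exact hL n)
  obtain ⟨ν, -, φ, hφ, hlim⟩ := (isCompact_closure_of_isTightMeasureSet htight).tendsto_subseq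
    fun n => subset_closure (mem_range_self n)
  exact ⟨ν, φ, hφ, hlim⟩

end Compactness

section WeakLimit

variable {Ω : Type*} [TopologicalSpace Ω] [MeasurableSpace Ω] {P : ℕ → ProbabilityMeasure Ω}
  {ν : ProbabilityMeasure Ω}

theorem measure_ext_of_forall_integral_lipschitzWith {E : Type*} [NormedAddCommGroup E]
    [NormedSpace ℝ E] [FiniteDimensional ℝ E] [MeasurableSpace E] [BorelSpace E] {μ ν : Measure E}
    [IsFiniteMeasure μ] [IsFiniteMeasure ν]
    (h : ∀ f : E → ℝ, LipschitzWith 1 f → HasCompactSupport f → (∀ x, f x ∈ Icc (0 : ℝ) 1) →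
      ∫ x, f x ∂μ = ∫ x, f x ∂ν) : μ = ν := by
  refine measure_ext_of_forall_integral_contDiff fun u hu huc hu01 => ?_
  obtain ⟨K, hK⟩ := hu.lipschitzWith_of_hasCompactSupport huc (by simp)
  have hK0 : (0 : ℝ) < K + 1 := by positivity
  have hLip : LipschitzWith 1 fun x => (K + 1 : ℝ)⁻¹ * u x := by
    refine LipschitzWith.of_dist_le_mul fun x y => ?_
    rw [NNReal.coe_one, one_mul, Real.dist_eq, ← mul_sub, abs_mul, abs_of_pos (by positivity),
      inv_mul_le_iff₀ hK0, ← Real.dist_eq]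
    refine (hK.dist_le_mul x y).trans ?_
    gcongr
    linarith
  have hscaled := h _ hLip (huc.mul_left (f := fun _ => (K + 1 : ℝ)⁻¹)) fun x =>
    ⟨mul_nonneg (by positivity) (hu01 x).1,
      mul_le_one₀ (inv_le_one_of_one_le₀ (by simp)) (hu01 x).1 (hu01 x).2⟩
  simp only [integral_const_mul] at hscaled
  exact mul_left_cancel₀ (by positivity) hscaled

theorem map_eq_of_tendsto [OpensMeasurableSpace Ω] {E : Type*} [NormedAddCommGroup E]
    [NormedSpace ℝ E] [FiniteDimensional ℝ E] [MeasurableSpace E] [BorelSpace E]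
    {μ : Measure E} [IsFiniteMeasure μ] {g : Ω → E} (hg : Continuous g)
    (hP : Tendsto P atTop (𝓝 ν))
    (h : ∀ f : E → ℝ, LipschitzWith 1 f → HasCompactSupport f → (∀ x, f x ∈ Icc (0 : ℝ) 1) →
      Tendsto (fun n => ∫ ω, f (g ω) ∂(P n : Measure Ω)) atTop (𝓝 (∫ x, f x ∂μ))) :
    (ν : Measure Ω).map g = μ := by
  have := Measure.isProbabilityMeasure_map (μ := (ν : Measure Ω)) hg.measurable.aemeasurable
  refine measure_ext_of_forall_integral_lipschitzWith fun f hf hfc hf01 => ?_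
  rw [integral_map hg.measurable.aemeasurable hf.continuous.aestronglyMeasurable]
  refine tendsto_nhds_unique ?_ (h f hf hfc hf01)
  exact ProbabilityMeasure.tendsto_iff_forall_integral_tendsto.1 hP <|
    BoundedContinuousFunction.ofNormedAddCommGroup (fun ω => f (g ω)) (hf.continuous.comp hg) 1
      fun ω => by
        rw [Real.norm_of_nonneg (hf01 _).1]
        exact (hf01 _).2

theorem lintegral_enorm_le_of_tendsto [OpensMeasurableSpace Ω] [HasOuterApproxClosed Ω]
    {F : Type*} [SeminormedAddCommGroup F] {f : Ω → F} (hf : Continuous f)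
    (hP : Tendsto P atTop (𝓝 ν)) {a : ℕ → ℝ≥0∞} {b : ℝ≥0∞} (ha : Tendsto a atTop (𝓝 b))
    (hle : ∀ n, ∫⁻ ω, ‖f ω‖ₑ ∂(P n : Measure Ω) ≤ a n) : ∫⁻ ω, ‖f ω‖ₑ ∂(ν : Measure Ω) ≤ b := by
  have hliminf := lintegral_le_liminf_lintegral_of_forall_isOpen_measure_le_liminf_measure
    hf.norm (fun _ => norm_nonneg _)
    fun _ hG => ProbabilityMeasure.le_liminf_measure_open_of_tendsto hP hG
  simp only [ofReal_norm] at hliminf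
  exact hliminf.trans ((liminf_le_liminf (Eventually.of_forall hle)).trans_eq ha.liminf_eq)

end WeakLimit

section PathIntegrals

variable {E : Type*} [NormedAddCommGroup E] [MeasurableSpace E] [BorelSpace E] {T : ℝ}

theorem measurable_comp_path (hT : 0 ≤ T) [MeasurableSpace C(Icc 0 T, E)]
    [BorelSpace C(Icc 0 T, E)] {F : Type*} [MeasurableSpace F] {c : ℝ × E → F}
    (hc : Measurable c) :
    Measurable fun p : C(Icc 0 T, E) × ℝ => c (p.2, p.1 (projIcc 0 T hT p.2)) := by
  have h : Continuous fun p : C(Icc 0 T, E) × ℝ => p.1 (projIcc 0 T hT p.2) :=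
    continuous_eval.comp
      (continuous_fst.prodMk ((continuous_projIcc (h := hT)).comp continuous_snd))
  exact hc.comp (measurable_snd.prodMk h.measurable)

theorem lintegral_lintegral_comp_path (hT : 0 ≤ T) [MeasurableSpace C(Icc 0 T, E)]
    [BorelSpace C(Icc 0 T, E)] {ν : Measure C(Icc 0 T, E)} [SFinite ν] {κ : ℝ → Measure E}
    (hν : ∀ t : Icc 0 T, ν.map (fun γ => γ t) = κ t) {f : ℝ × E → ℝ≥0∞} (hf : Measurable f) :
    ∫⁻ γ, (∫⁻ r in Ioc 0 T, f (r, γ (projIcc 0 T hT r))) ∂ν =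
      ∫⁻ r in Ioc 0 T, ∫⁻ x, f (r, x) ∂κ r := by
  rw [lintegral_lintegral_swap (measurable_comp_path hT hf).aemeasurable]
  refine setLIntegral_congr_fun measurableSet_Ioc fun r hr => ?_
  have hr' : r ∈ Icc 0 T := Ioc_subset_Icc_self hr
  simp only [projIcc_of_mem hT hr']
  rw [← hν ⟨r, hr'⟩, lintegral_map (f := fun x => f (r, x)) (hf.comp measurable_prodMk_left)
    (continuous_eval_const _).measurable]

variable [SecondCountableTopology E]

theorem intervalIntegrable_comp_path (hT : 0 ≤ T) {c : ℝ × E → E} (hc : Measurable c) {g : ℝ → ℝ}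
    (hg : IntervalIntegrable g volume 0 T) (hcg : ∀ r x, ‖c (r, x)‖ ≤ g r) (γ : C(Icc 0 T, E))
    {t : ℝ} (ht : t ∈ Icc 0 T) :
    IntervalIntegrable (fun r => c (r, γ (projIcc 0 T hT r))) volume 0 t := by
  exact (hg.mono_set (by grind [uIcc_of_le])).mono_fun (hc.comp (measurable_id.prodMk
    (γ.continuous.comp continuous_projIcc).measurable)).aestronglyMeasurable
    (Eventually.of_forall fun r => (hcg _ _).trans (le_abs_self _))

variable [NormedSpace ℝ E]

theorem measurable_odeDefect (hT : 0 ≤ T) [MeasurableSpace C(Icc 0 T, E)] [BorelSpace C(Icc 0 T, E)]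
    {c : ℝ × E → E} (hc : Measurable c) (t : Icc 0 T) : Measurable (odeDefect hT c t) := by
  refine ((continuous_eval_const t).measurable.sub (continuous_eval_const _).measurable).sub ?_
  simp only [intervalIntegral.integral_of_le t.2.1]
  exact (measurable_comp_path hT hc).stronglyMeasurable.integral_prod_right'.measurable

theorem lintegral_enorm_odeDefect_sub_le (hT : 0 ≤ T) [MeasurableSpace C(Icc 0 T, E)]
    [BorelSpace C(Icc 0 T, E)] {ν : Measure C(Icc 0 T, E)} [SFinite ν] {κ : ℝ → Measure E}
    (hν : ∀ t : Icc 0 T, ν.map (fun γ => γ t) = κ t) {c c' : ℝ × E → E} (hc : Measurable c)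
    (hc' : Measurable c') {C : ℝ} (hC : ∀ r x, ‖c (r, x)‖ ≤ C) (hC' : ∀ r x, ‖c' (r, x)‖ ≤ C)
    (t : Icc 0 T) :
    ∫⁻ γ, ‖odeDefect hT c t γ - odeDefect hT c' t γ‖ₑ ∂ν ≤
      ∫⁻ r in Ioc 0 T, ∫⁻ x, ‖c (r, x) - c' (r, x)‖ₑ ∂κ r := by
  rw [← lintegral_lintegral_comp_path hT hν (f := fun p => ‖c p - c' p‖ₑ) (hc.sub hc').enorm]
  refine lintegral_mono fun γ => ?_
  have hsub : odeDefect hT c t γ - odeDefect hT c' t γ = -∫ r in (0 : ℝ)..t,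
      (c (r, γ (projIcc 0 T hT r)) - c' (r, γ (projIcc 0 T hT r))) := by
    rw [intervalIntegral.integral_sub
      (intervalIntegrable_comp_path hT hc intervalIntegrable_const hC γ t.2)
      (intervalIntegrable_comp_path hT hc' intervalIntegrable_const hC' γ t.2), odeDefect,
      odeDefect]
    abel
  rw [hsub, enorm_neg, intervalIntegral.integral_of_le t.2.1]
  exact (enorm_integral_le_lintegral_enorm _).trans
    (lintegral_mono_set (Ioc_subset_Ioc_right t.2.2))

theorem continuous_odeDefect_time (hT : 0 ≤ T) {c : ℝ × E → E} (hc : Measurable c) {g : ℝ → ℝ}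
    (hg : IntervalIntegrable g volume 0 T) (hcg : ∀ r x, ‖c (r, x)‖ ≤ g r) (γ : C(Icc 0 T, E)) :
    Continuous fun t => odeDefect hT c t γ := by
  have h_int := intervalIntegrable_comp_path hT hc hg hcg γ (right_mem_Icc.2 hT)
  have hprim := intervalIntegral.continuousOn_primitive_interval' h_int left_mem_uIcc
  rw [uIcc_of_le hT, continuousOn_iff_continuous_domRestrict] at hprim
  exact (γ.continuous.sub continuous_const).sub hprim

theorem ae_forall_odeDefect_eq_zero (hT : 0 ≤ T) {c : ℝ × E → E} (hc : Measurable c) {g : ℝ → ℝ}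
    (hg : IntervalIntegrable g volume 0 T) (hcg : ∀ r x, ‖c (r, x)‖ ≤ g r)
    [MeasurableSpace C(Icc 0 T, E)] {ν : Measure C(Icc 0 T, E)}
    (h : ∀ t, ∀ᵐ γ ∂ν, odeDefect hT c t γ = 0) : ∀ᵐ γ ∂ν, ∀ t, odeDefect hT c t γ = 0 := by
  obtain ⟨D, hDc, hDd⟩ := TopologicalSpace.exists_countable_dense (Icc 0 T)
  filter_upwards [(ae_ball_iff hDc).2 fun t _ => h t] with γ hγ
  exact congrFun ((continuous_odeDefect_time hT hc hg hcg γ).ext_on hDd continuous_const hγ)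

end PathIntegrals

namespace IsCESolution

variable {E : Type*} [NormedAddCommGroup E] [NormedSpace ℝ E] [MeasurableSpace E]
  [BorelSpace E] [FiniteDimensional ℝ E] {V : ℝ → E → E} {κ : Kernel ℝ E} [IsMarkovKernel κ] {T : ℝ}

theorem lintegral_lintegral_enorm_sub (hV : IsCESolution V κ) (hT : 0 ≤ T) {c : ℝ × E → E}
    {L : ℝ≥0} (hc : IsSmoothField c L) :
    ∫⁻ r in Ioc 0 T, ∫⁻ x, ‖V r x - c (r, x)‖ₑ ∂κ r =
      ENNReal.ofReal (∫ r in (0 : ℝ)..T, ∫ x, ‖V r x - c (r, x)‖ ∂κ r) := by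
  have hcm : Measurable c := hc.contDiff.continuous.measurable
  have hm (r : ℝ) : AEStronglyMeasurable (fun x => V r x - c (r, x)) (κ r) :=
    ((hV.measurable.sub hcm).comp measurable_prodMk_left).aestronglyMeasurable
  rw [intervalIntegral.integral_of_le hT, ofReal_integral_eq_lintegral_ofReal
    ((intervalIntegrable_iff_integrableOn_Ioc_of_le hT).1
      (hV.intervalIntegrable_integral_norm_sub hcm hc.norm_le 0 T))
    (Eventually.of_forall fun _ => integral_nonneg fun _ => norm_nonneg _)]
  exact lintegral_congr fun r =>
    (ofReal_integral_norm_eq_lintegral_enorm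
      ((integrable_norm_iff (hm r)).1 (hV.integrable_norm_sub hcm hc.norm_le r))).symm

variable [MeasurableSpace C(Icc 0 T, E)] [BorelSpace C(Icc 0 T, E)]

theorem lintegral_enorm_odeDefect_le (hV : IsCESolution V κ) (hT : 0 ≤ T)
    {ν : Measure C(Icc 0 T, E)} [SFinite ν] (hν : ∀ t : Icc 0 T, ν.map (fun γ => γ t) = κ t)
    {c : ℝ × E → E} {L : ℝ≥0} (hc : IsSmoothField c L) (t : Icc 0 T) :
    ∫⁻ γ, ‖odeDefect hT (Function.uncurry V) t γ‖ₑ ∂ν ≤ ∫⁻ γ, ‖odeDefect hT c t γ‖ₑ ∂ν +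
      ENNReal.ofReal (∫ r in (0 : ℝ)..T, ∫ x, ‖V r x - c (r, x)‖ ∂κ r) := by
  have hcm : Measurable c := hc.contDiff.continuous.measurable
  rw [← hV.lintegral_lintegral_enorm_sub hT hc]
  calc ∫⁻ γ, ‖odeDefect hT (Function.uncurry V) t γ‖ₑ ∂ν
      ≤ ∫⁻ γ, (‖odeDefect hT c t γ‖ₑ +
          ‖odeDefect hT (Function.uncurry V) t γ - odeDefect hT c t γ‖ₑ) ∂ν :=
        lintegral_mono fun γ => (congrArg _ (add_sub_cancel _ _)).ge.trans (enorm_add_le _ _)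
    _ = ∫⁻ γ, ‖odeDefect hT c t γ‖ₑ ∂ν +
          ∫⁻ γ, ‖odeDefect hT (Function.uncurry V) t γ - odeDefect hT c t γ‖ₑ ∂ν :=
        lintegral_add_left (continuous_odeDefect hT hc t).measurable.enorm _
    _ ≤ _ := by
        gcongr
        exact lintegral_enorm_odeDefect_sub_le hT hν hV.measurable hcm
          (fun r x => (hV.norm_le r x).trans one_le_two) (fun r x => hc.norm_le (r, x)) t

theorem exists_path_measure (hV : IsCESolution V κ) (hT : 0 ≤ T) :
    ∃ ν : Measure C(Icc 0 T, E), IsProbabilityMeasure ν ∧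
      (∀ t : Icc 0 T, ν.map (fun γ => γ t) = κ t) ∧
      ∀ᵐ γ ∂ν, ∀ t, odeDefect hT (Function.uncurry V) t γ = 0 := by
  have hε : Tendsto (fun n : ℕ => 1 / ((n : ℝ) + 1)) atTop (𝓝 0) :=
    tendsto_one_div_add_atTop_nhds_zero_nat
  choose ν hνp hν0 hνL hνm hνd using fun n : ℕ =>
    hV.exists_approx_path_measure hT (Nat.one_div_pos_of_nat (α := ℝ) (n := n))
  obtain ⟨ν', φ, hφ, hlim⟩ := exists_tendsto_subseq_of_lipschitzWith _ 2 (κ 0)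
    (P := fun n => ⟨ν n, hνp n⟩) hν0 hνL
  replace hε := hε.comp hφ.tendsto_atTop
  have hmarg (t : Icc 0 T) : (ν' : Measure C(Icc 0 T, E)).map (fun γ => γ t) = κ t := by
    refine map_eq_of_tendsto (continuous_eval_const t) hlim fun f hf hfc hf01 => ?_
    refine tendsto_iff_norm_sub_tendsto_zero.2 (squeeze_zero (fun _ => norm_nonneg _)
      (fun n => hνm (φ n) f hf hfc hf01 t) ?_)
    simpa using hε.const_mul 7
  have hsmooth {c : ℝ × E → E} {L : ℝ≥0} (hc : IsSmoothField c L) (t : Icc 0 T) :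
      ∫⁻ γ, ‖odeDefect hT c t γ‖ₑ ∂ν' ≤
        ENNReal.ofReal (∫ σ in (0 : ℝ)..T, ∫ x, ‖V σ x - c (σ, x)‖ ∂κ σ) := by
    refine lintegral_enorm_le_of_tendsto (continuous_odeDefect hT hc t) hlim
      (ENNReal.tendsto_ofReal ?_) fun n => hνd (φ n) c L hc t
    simpa using (hε.const_mul (3 + 8 * T * L + 16 * T)).const_add _
  refine ⟨ν', inferInstance, hmarg, ?_⟩
  refine ae_forall_odeDefect_eq_zero hT hV.measurable (g := fun _ => 1)
    intervalIntegrable_const hV.norm_le fun t => ?_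
  have hzero : ∫⁻ γ, ‖odeDefect hT (Function.uncurry V) t γ‖ₑ ∂ν' = 0 := by
    refine le_antisymm (ENNReal.le_of_forall_pos_le_add fun δ hδ _ => ?_) zero_le
    obtain ⟨c, L, hc, hcV⟩ := hV.exists_isSmoothField hT (half_pos (NNReal.coe_pos.2 hδ))
    refine (hV.lintegral_enorm_odeDefect_le hT hmarg hc t).trans ?_
    calc _ ≤ ENNReal.ofReal (δ / 2) + ENNReal.ofReal (δ / 2) :=
          add_le_add ((hsmooth hc t).trans (ENNReal.ofReal_le_ofReal hcV))
            (ENNReal.ofReal_le_ofReal hcV)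
      _ = 0 + δ := by
          rw [← ENNReal.ofReal_add (by positivity) (by positivity), add_halves, zero_add,
            ENNReal.ofReal_coe_nnreal]
  filter_upwards [(lintegral_eq_zero_iff (measurable_odeDefect hT hV.measurable t).enorm).1 hzero]
    with γ hγ
  exact enorm_eq_zero.1 hγ

end IsCESolution

/-! ### Change of time -/

section Kernels

variable {α β : Type*} [MeasurableSpace α] [MeasurableSpace β] {κ : Kernel α β}

theorem isSFiniteKernel_of_forall_isFiniteMeasure (hκ : ∀ a, IsFiniteMeasure (κ a)) :
    IsSFiniteKernel κ := by
  have hm : Measurable fun a => 1 + κ a univ := measurable_const.add (κ.measurable_coe .univ)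
  have h0 (a : α) : 1 + κ a univ ≠ 0 := by simp
  have htop (a : α) : 1 + κ a univ ≠ ⊤ := by simp
  let η : Kernel α β := ⟨fun a => (1 + κ a univ)⁻¹ • κ a,
    Measure.measurable_of_measurable_coe _ fun s hs => hm.inv.mul (κ.measurable_coe hs)⟩
  have hη : IsFiniteKernel η := ⟨1, ENNReal.one_lt_top, fun a =>
    (ENNReal.inv_mul_le_iff (h0 a) (htop a)).2 (by simp)⟩
  have hηκ : η.withDensity (fun a _ => 1 + κ a univ) = κ := by
    ext1 a
    have hm' : Measurable (Function.uncurry fun (a : α) (_ : β) => 1 + κ a univ) :=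
      hm.comp measurable_fst
    rw [Kernel.withDensity_apply _ hm', withDensity_const]
    exact (smul_smul _ _ _).trans (by rw [ENNReal.mul_inv_cancel (h0 a) (htop a), one_smul])
  exact hηκ ▸ Kernel.IsSFiniteKernel.withDensity η fun a _ => htop a

theorem add_inv_mul_lintegral_tsub_le_iSup (m : Measure β) [IsFiniteMeasure m] {f : β → ℝ≥0∞}
    {a : ℝ≥0∞} (ha : a ≤ ⨆ x, f x) :
    a + (1 + m univ)⁻¹ * ∫⁻ x, (f x - a) ∂m ≤ ⨆ x, f x := by
  refine (add_le_add_right ((ENNReal.inv_mul_le_iff (by simp) (by simp)).2 ?_) a).trans_eq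
    (add_tsub_cancel_of_le ha)
  calc ∫⁻ x, (f x - a) ∂m ≤ ∫⁻ _, ((⨆ x, f x) - a) ∂m :=
        lintegral_mono fun x => tsub_le_tsub_right (le_iSup f x) _
    _ = m univ * ((⨆ x, f x) - a) := by rw [lintegral_const, mul_comm]
    _ ≤ (1 + m univ) * ((⨆ x, f x) - a) := by
        gcongr
        exact le_add_self

-- The supremum need not be measurable. Any maximal measurable minorant of it can be used for `g`:
-- if `f a` exceeded `g a` on a set of positive measure, then adding a fraction of the mean excess
-- would produce a larger minorant.
theorem exists_measurable_ae_le_of_lintegral_iSup_ne_top (hκ : ∀ a, IsFiniteMeasure (κ a))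
    {μ : Measure α} {f : α → β → ℝ≥0∞} (hf : Measurable (Function.uncurry f))
    (hfin : ∫⁻ a, ⨆ x, f a x ∂μ ≠ ⊤) :
    ∃ g : α → ℝ≥0∞, Measurable g ∧ ∫⁻ a, g a ∂μ ≠ ⊤ ∧ ∀ᵐ a ∂μ, ∀ᵐ x ∂κ a, f a x ≤ g a := by
  have := isSFiniteKernel_of_forall_isFiniteMeasure hκ
  obtain ⟨g, hg, hgle, hgeq⟩ := exists_measurable_le_lintegral_eq (μ := μ) fun a => ⨆ x, f a x
  rw [hgeq] at hfin
  refine ⟨g, hg, hfin, ?_⟩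
  have hsub : Measurable fun p : α × β => f p.1 p.2 - g p.1 := hf.sub (hg.comp measurable_fst)
  have hexcess : Measurable fun a => (1 + κ a univ)⁻¹ * ∫⁻ x, (f a x - g a) ∂κ a :=
    (measurable_const.add (κ.measurable_coe .univ)).inv.mul hsub.lintegral_kernel_prod_right'
  have hzero : ∫⁻ a, (1 + κ a univ)⁻¹ * ∫⁻ x, (f a x - g a) ∂κ a ∂μ = 0 := by
    have hle := lintegral_mono (μ := μ) fun a =>
      add_inv_mul_lintegral_tsub_le_iSup (κ a) (hgle a)
    rw [lintegral_add_left hg, hgeq] at hle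
    simpa using (ENNReal.add_le_add_iff_left hfin).1 (hle.trans_eq (add_zero _).symm)
  filter_upwards [(lintegral_eq_zero_iff hexcess).1 hzero] with a ha
  have ha' : ∫⁻ x, (f a x - g a) ∂κ a = 0 :=
    (mul_eq_zero.1 ha).resolve_left (ENNReal.inv_ne_zero.2 (by simp))
  filter_upwards [(lintegral_eq_zero_iff (hsub.comp measurable_prodMk_left)).1 ha'] with x hx
  exact tsub_eq_zero_iff_le.1 hx

end Kernels

section TimeChange

variable {g : ℝ → ℝ≥0} {G : ℝ ≃o ℝ}

theorem exists_orderIso_sub_eq_intervalIntegral (hg1 : ∀ t, 1 ≤ g t)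
    (hgi : ∀ a b, IntervalIntegrable (fun t => (g t : ℝ)) volume a b) :
    ∃ G : ℝ ≃o ℝ, G 0 = 0 ∧ ∀ s t, G t - G s = ∫ σ in s..t, (g σ : ℝ) := by
  let G : ℝ → ℝ := fun t => ∫ σ in (0 : ℝ)..t, (g σ : ℝ)
  have hsub (s t : ℝ) : G t - G s = ∫ σ in s..t, (g σ : ℝ) :=
    intervalIntegral.integral_interval_sub_left (hgi _ _) (hgi _ _)
  have hge {s t : ℝ} (hst : s ≤ t) : t - s ≤ G t - G s := by
    calc t - s = ∫ _ in s..t, (1 : ℝ) := by simp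
      _ ≤ ∫ σ in s..t, (g σ : ℝ) := intervalIntegral.integral_mono_on hst intervalIntegrable_const
          (hgi _ _) fun σ _ => by exact_mod_cast hg1 σ
      _ = G t - G s := (hsub s t).symm
  have h0 : G 0 = 0 := intervalIntegral.integral_same
  have hmono : StrictMono G := fun s t hst => by linarith [hge hst.le]
  have hsurj : Function.Surjective G := by
    refine (intervalIntegral.continuous_primitive hgi 0).surjective
      (tendsto_atTop_mono' _ ?_ tendsto_id) (tendsto_atBot_mono' _ ?_ tendsto_id)
    · filter_upwards [eventually_ge_atTop 0] with t ht
      simpa [h0] using hge ht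
    · filter_upwards [eventually_le_atBot 0] with t ht
      simpa [h0] using hge ht
  exact ⟨hmono.orderIsoOfSurjective G hsurj, h0, hsub⟩

theorem map_withDensity_eq_volume (hgi : ∀ a b, IntervalIntegrable (fun t => (g t : ℝ)) volume a b)
    (hG : ∀ s t, G t - G s = ∫ σ in s..t, (g σ : ℝ)) :
    (volume.withDensity fun t => (g t : ℝ≥0∞)).map G = volume := by
  refine (Measure.ext_of_Ioc' _ _ (fun a b _ => by simp) fun a b hab => ?_).symm
  obtain ⟨s, rfl⟩ := G.surjective a
  obtain ⟨t, rfl⟩ := G.surjective b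
  have hst : s ≤ t := (G.lt_iff_lt.1 hab).le
  rw [Measure.map_apply G.continuous.measurable measurableSet_Ioc, G.preimage_Ioc,
    G.symm_apply_apply, G.symm_apply_apply, withDensity_apply _ measurableSet_Ioc, Real.volume_Ioc,
    hG, intervalIntegral.integral_of_le hst, ofReal_integral_eq_lintegral_ofReal
      (hgi s t).1 (Eventually.of_forall fun _ => NNReal.coe_nonneg _)]
  simp only [ENNReal.ofReal_coe_nnreal]

theorem intervalIntegral_comp_orderIso {F : Type*} [NormedAddCommGroup F] [NormedSpace ℝ F]
    (hg : Measurable g) (hG : (volume.withDensity fun t => (g t : ℝ≥0∞)).map G = volume)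
    (f : ℝ → F) (s t : ℝ) : ∫ y in G s..G t, f y = ∫ σ in s..t, g σ • f (G σ) := by
  wlog hst : s ≤ t generalizing s t
  · rw [intervalIntegral.integral_symm, this t s (le_of_not_ge hst),
      ← intervalIntegral.integral_symm]
  rw [intervalIntegral.integral_of_le hst, intervalIntegral.integral_of_le (G.monotone hst)]
  conv_lhs => rw [← hG]
  have hemb : MeasurableEmbedding G := G.toHomeomorph.measurableEmbedding
  rw [hemb.setIntegral_map, G.preimage_Ioc, G.symm_apply_apply, G.symm_apply_apply,
    setIntegral_withDensity_eq_setIntegral_smul hg _ measurableSet_Ioc]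

variable {E : Type*} [NormedAddCommGroup E] [NormedSpace ℝ E] {V : ℝ → E → E} {T : ℝ}

/-- The velocity field seen after the change of time `y = G t` whose speed is `g t`. -/
def timeChangedField (g : ℝ → ℝ≥0) (G : ℝ ≃o ℝ) (V : ℝ → E → E) (y : ℝ) (x : E) : E :=
  (g (G.symm y))⁻¹ • V (G.symm y) x

theorem smul_timeChangedField (hg1 : ∀ t, 1 ≤ g t) (t : ℝ) (x : E) :
    g t • timeChangedField g G V (G t) x = V t x := by
  rw [timeChangedField, G.symm_apply_apply, smul_inv_smul₀ (zero_lt_one.trans_le (hg1 t)).ne']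

theorem isCESolution_timeChangedField [MeasurableSpace E] [BorelSpace E]
    [SecondCountableTopology E] {κ : Kernel ℝ E} (hV : Measurable (Function.uncurry V))
    (hg : Measurable g) (hg1 : ∀ t, 1 ≤ g t) (hVg : ∀ t x, ‖V t x‖ ≤ g t)
    (hκ : ∀ t, IsFiniteMeasure (κ t)) (hw : IsWeakSolutionOn univ V κ)
    (hG : (volume.withDensity fun t => (g t : ℝ≥0∞)).map G = volume) :
    IsCESolution (timeChangedField g G V) (κ.comap G.symm G.symm.continuous.measurable) where
  measurable :=
    ((hg.comp G.symm.continuous.measurable).inv.comp measurable_fst).smul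
      (hV.comp ((G.symm.continuous.measurable.comp measurable_fst).prodMk measurable_snd))
  norm_le y x := by
    rw [timeChangedField, NNReal.smul_def, norm_smul, NNReal.coe_inv, norm_inv, Real.norm_eq_abs,
      NNReal.abs_eq]
    exact inv_mul_le_one_of_le₀ (hVg _ _) (NNReal.coe_nonneg _)
  finite _ := hκ _
  weak u hu huc s _ t _ := by
    obtain ⟨s, rfl⟩ := G.surjective s
    obtain ⟨t, rfl⟩ := G.surjective t
    rw [intervalIntegral_comp_orderIso hg hG]
    simp only [Kernel.comap_apply, G.symm_apply_apply]
    rw [hw u hu huc s trivial t trivial]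
    refine intervalIntegral.integral_congr fun σ _ => ?_
    simp only [NNReal.smul_def, smul_eq_mul, ← integral_const_mul]
    refine integral_congr_ae (Eventually.of_forall fun x => ?_)
    simp only [← smul_timeChangedField (G := G) (V := V) hg1 σ x, NNReal.smul_def, map_smul,
      smul_eq_mul]

/-- The change of time `G` as a continuous map between compact intervals; precomposing with it turns
paths on `[0, G T]` into paths on `[0, T]`. -/
def timeChangeMap (G : ℝ ≃o ℝ) (hG0 : G 0 = 0) (T : ℝ) : C(Icc 0 T, Icc 0 (G T)) where
  toFun t := ⟨G t, hG0.symm.trans_le (G.monotone t.2.1), G.monotone t.2.2⟩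
  continuous_toFun := (G.continuous.comp continuous_subtype_val).subtype_mk _

theorem odeDefect_comp_timeChangeMap (hT : 0 ≤ T) (hGT : 0 ≤ G T) (hg : Measurable g)
    (hg1 : ∀ t, 1 ≤ g t) (hG0 : G 0 = 0)
    (hG : (volume.withDensity fun t => (g t : ℝ≥0∞)).map G = volume) (γ : C(Icc 0 (G T), E))
    (t : Icc 0 T) :
    odeDefect hT (Function.uncurry V) t (γ.comp (timeChangeMap G hG0 T)) =
      odeDefect hGT (Function.uncurry (timeChangedField g G V)) (timeChangeMap G hG0 T t) γ := by
  have hzero : timeChangeMap G hG0 T ⟨0, left_mem_Icc.2 hT⟩ = ⟨0, left_mem_Icc.2 hGT⟩ :=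
    Subtype.ext hG0
  have hchange := intervalIntegral_comp_orderIso hg hG
    (fun y => timeChangedField g G V y (γ (projIcc 0 (G T) hGT y))) 0 t
  rw [hG0] at hchange
  simp only [odeDefect, Function.uncurry_apply_pair, ContinuousMap.comp_apply, hzero]
  congr 1
  refine Eq.trans (intervalIntegral.integral_congr fun r hr => ?_) hchange.symm
  rw [uIcc_of_le t.2.1] at hr
  have hr' : r ∈ Icc 0 T := ⟨hr.1, hr.2.trans t.2.2⟩
  have hGr : G r ∈ Icc 0 (G T) := (timeChangeMap G hG0 T ⟨r, hr'⟩).2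
  simp only [smul_timeChangedField hg1]
  rw [projIcc_of_mem hT hr', projIcc_of_mem hGT hGr]
  rfl

theorem exists_path_measure_of_norm_le [MeasurableSpace E] [BorelSpace E] [FiniteDimensional ℝ E]
    {κ : Kernel ℝ E} (hV : Measurable (Function.uncurry V)) (hg : Measurable g)
    (hg1 : ∀ t, 1 ≤ g t) (hgi : ∀ a b, IntervalIntegrable (fun t => (g t : ℝ)) volume a b)
    (hVg : ∀ t x, ‖V t x‖ ≤ g t) (hκ : ∀ t, IsFiniteMeasure (κ t))
    (hw : IsWeakSolutionOn univ V κ) {S : ℝ} (hS : IsProbabilityMeasure (κ S)) (hT : 0 ≤ T)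
    [MeasurableSpace C(Icc 0 T, E)] [BorelSpace C(Icc 0 T, E)] :
    ∃ ν : Measure C(Icc 0 T, E), IsProbabilityMeasure ν ∧
      (∀ t : Icc 0 T, ν.map (fun γ => γ t) = κ t) ∧
      ∀ᵐ γ ∂ν, ∀ t, odeDefect hT (Function.uncurry V) t γ = 0 := by
  have hs2 : SecondCountableTopology E := secondCountable_of_proper
  obtain ⟨G, hG0, hGsub⟩ := exists_orderIso_sub_eq_intervalIntegral hg1 hgi
  have hG := map_withDensity_eq_volume hgi hGsub
  have hsol := isCESolution_timeChangedField hV hg hg1 hVg hκ hw hG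
  set κ' := κ.comap G.symm G.symm.continuous.measurable
  have := isSFiniteKernel_of_forall_isFiniteMeasure hsol.finite
  have : IsMarkovKernel κ' := ⟨fun y => ⟨by
    rw [hsol.measure_univ_eq (G S) y, Kernel.comap_apply, G.symm_apply_apply, measure_univ]⟩⟩
  have hGT : 0 ≤ G T := hG0 ▸ G.monotone hT
  borelize C(Icc 0 (G T), E)
  obtain ⟨ν, hν, hνm, hνd⟩ := hsol.exists_path_measure hGT
  have hΦ : Measurable fun γ : C(Icc 0 (G T), E) => γ.comp (timeChangeMap G hG0 T) :=
    (ContinuousMap.continuous_precomp _).measurable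
  refine ⟨ν.map fun γ => γ.comp (timeChangeMap G hG0 T),
    Measure.isProbabilityMeasure_map hΦ.aemeasurable, fun t => ?_, ?_⟩
  · rw [Measure.map_map (continuous_eval_const t).measurable hΦ]
    refine (hνm (timeChangeMap G hG0 T t)).trans ?_
    exact congrArg κ (G.symm_apply_apply t)
  · refine ae_forall_odeDefect_eq_zero hT hV (hgi 0 T) hVg fun t => ?_
    have hzero : MeasurableSet {γ | odeDefect hT (Function.uncurry V) t γ = 0} :=
      measurable_odeDefect hT hV t (measurableSet_singleton 0)
    rw [ae_map_iff hΦ.aemeasurable hzero]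
    filter_upwards [hνd] with γ hγ
    exact (odeDefect_comp_timeChangeMap hT hGT hg hg1 hG0 hG γ t).trans (hγ _)

end TimeChange

/-! ### The superposition principle -/

section Superposition

theorem intervalIntegral_indicator_projIcc {F : Type*} [NormedAddCommGroup F] [NormedSpace ℝ F]
    {T : ℝ} (hT : 0 ≤ T) (f : ℝ → F) (s t : ℝ) :
    ∫ σ in s..t, (Ioc 0 T).indicator f σ = ∫ σ in projIcc 0 T hT s..projIcc 0 T hT t, f σ := by
  wlog hst : s ≤ t generalizing s t
  · rw [intervalIntegral.integral_symm, this t s (le_of_not_ge hst),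
      ← intervalIntegral.integral_symm]
  have hIoc : Ioc s t ∩ Ioc 0 T = Ioc ↑(projIcc 0 T hT s) ↑(projIcc 0 T hT t) := by
    ext x
    simp only [mem_inter_iff, mem_Ioc, coe_projIcc]
    grind
  rw [intervalIntegral.integral_of_le hst, intervalIntegral.integral_of_le
    (monotone_projIcc hT hst), setIntegral_indicator measurableSet_Ioc, hIoc]

theorem exists_measurable_one_le_ae_le {α β : Type*} [MeasurableSpace α] [MeasurableSpace β]
    {κ : Kernel α β} (hκ : ∀ a, IsFiniteMeasure (κ a)) {m : Measure α} {A : Set α}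
    (hA : MeasurableSet A) {f : α → β → ℝ≥0} (hf : Measurable (Function.uncurry f))
    (hfin : ∫⁻ a in A, ⨆ x, (f a x : ℝ≥0∞) ∂m ≠ ⊤) :
    ∃ g : α → ℝ≥0, Measurable g ∧ (∀ a, 1 ≤ g a) ∧ Integrable (fun a => (g a : ℝ) - 1) m ∧
      ∀ᵐ a ∂m.restrict A, ∀ᵐ x ∂κ a, f a x ≤ g a := by
  obtain ⟨g, hg, hgi, hfg⟩ := exists_measurable_ae_le_of_lintegral_iSup_ne_top hκ
    (f := fun a x => f a x) hf.coe_nnreal_ennreal hfin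
  refine ⟨fun a => 1 + A.indicator (fun a => (g a).toNNReal) a,
    measurable_const.add (hg.ennreal_toNNReal.indicator hA), fun a => le_self_add, ?_, ?_⟩
  · simp only [NNReal.coe_add, NNReal.coe_one, add_sub_cancel_left, NNReal.coe_indicator]
    exact (integrable_indicator_iff hA).2
      (integrable_toReal_of_lintegral_ne_top hg.aemeasurable hgi)
  · filter_upwards [hfg, ae_lt_top hg hgi, ae_restrict_mem hA] with a hfa hga ha
    filter_upwards [hfa] with x hx
    rw [indicator_of_mem ha]
    exact le_add_of_le_right (by rwa [← ENNReal.coe_le_coe, ENNReal.coe_toNNReal hga.ne])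

variable {E : Type*} [NormedAddCommGroup E]

/-- The field `V`, set to zero outside the times in `(0, T]` and wherever its norm exceeds `g`: a
version of `V` dominated everywhere by `g`. -/
def truncatedField (T : ℝ) (g : ℝ → ℝ≥0) (V : ℝ → E → E) (t : ℝ) (x : E) : E :=
  {p : ℝ × E | p.1 ∈ Ioc 0 T ∧ ‖V p.1 p.2‖₊ ≤ g p.1}.indicator (Function.uncurry V) (t, x)

section truncatedField

variable {T : ℝ} {g : ℝ → ℝ≥0} {V : ℝ → E → E}

theorem measurable_truncatedField [MeasurableSpace E] [OpensMeasurableSpace E]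
    (hV : Measurable (Function.uncurry V)) (hg : Measurable g) :
    Measurable (Function.uncurry (truncatedField T g V)) :=
  hV.indicator ((measurable_fst measurableSet_Ioc).inter
    (measurableSet_le (f := fun p : ℝ × E => ‖V p.1 p.2‖₊) hV.nnnorm (hg.comp measurable_fst)))

theorem norm_truncatedField_le (t : ℝ) (x : E) : ‖truncatedField T g V t x‖ ≤ g t := by
  rw [truncatedField, indicator_apply]
  split_ifs with h
  · exact h.2
  · simp

theorem truncatedField_eq {t : ℝ} (ht : t ∈ Ioc 0 T) {x : E} (hx : ‖V t x‖₊ ≤ g t) :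
    truncatedField T g V t x = V t x := by
  simp [truncatedField, ht.1, ht.2, hx]

theorem truncatedField_eq_zero {t : ℝ} (ht : t ∉ Ioc 0 T) (x : E) :
    truncatedField T g V t x = 0 :=
  indicator_of_notMem (fun h => ht h.1) _

end truncatedField

variable [NormedSpace ℝ E] [MeasurableSpace E] {T : ℝ} {V : ℝ → E → E}
  {μ : ℝ → Measure E}

theorem IsWeakSolutionOn.exists_kernel_eq_comp_projIcc [BorelSpace E] [FiniteDimensional ℝ E]
    [∀ t, IsFiniteMeasure (μ t)] (hw : IsWeakSolutionOn (Icc 0 T) V μ) (hT : 0 ≤ T) :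
    ∃ κ : Kernel ℝ E, ∀ t, κ t = μ (projIcc 0 T hT t) :=
  ⟨⟨fun t => μ (projIcc 0 T hT t),
    measurable_of_forall_measurable_integral_contDiff fun u hu huc =>
      ((continuousOn_of_sub_eq_intervalIntegral (hw u hu huc)).comp_continuous
        (continuous_subtype_val.comp (continuous_projIcc (h := hT)))
        fun t => (projIcc 0 T hT t).2).measurable⟩, fun _ => rfl⟩

theorem IsWeakSolutionOn.univ_truncatedField {g : ℝ → ℝ≥0} (hw : IsWeakSolutionOn (Icc 0 T) V μ)
    (hT : 0 ≤ T) {κ : ℝ → Measure E} (hκ : ∀ t, κ t = μ (projIcc 0 T hT t))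
    (hVg : ∀ᵐ t ∂volume.restrict (Ioc 0 T), ∀ᵐ x ∂κ t, ‖V t x‖₊ ≤ g t) :
    IsWeakSolutionOn univ (truncatedField T g V) κ := by
  intro u hu huc s _ t _
  rw [hκ, hκ, hw u hu huc _ (projIcc 0 T hT s).2 _ (projIcc 0 T hT t).2,
    ← intervalIntegral_indicator_projIcc]
  rw [ae_restrict_iff' measurableSet_Ioc] at hVg
  refine intervalIntegral.integral_congr_ae ?_
  filter_upwards [hVg] with σ hσ _
  by_cases hσT : σ ∈ Ioc 0 T
  · have hκσ : κ σ = μ σ := by rw [hκ, projIcc_of_mem hT (Ioc_subset_Icc_self hσT)]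
    rw [indicator_of_mem hσT, ← hκσ]
    refine integral_congr_ae ?_
    filter_upwards [hσ hσT] with x hx
    rw [truncatedField_eq hσT hx]
  · simp [indicator_of_notMem hσT, truncatedField_eq_zero hσT]

variable [BorelSpace E]

theorem ae_forall_odeDefect_eq_of_ae_eq [SecondCountableTopology E] (hT : 0 ≤ T)
    [MeasurableSpace C(Icc 0 T, E)] [BorelSpace C(Icc 0 T, E)] {ν : Measure C(Icc 0 T, E)}
    [SFinite ν] (hν : ∀ t : Icc 0 T, ν.map (fun γ => γ t) = μ t) {c c' : ℝ × E → E}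
    (hc : Measurable c) (hc' : Measurable c')
    (h : ∀ᵐ r ∂volume.restrict (Ioc 0 T), ∀ᵐ x ∂μ r, c (r, x) = c' (r, x)) :
    ∀ᵐ γ ∂ν, ∀ t, odeDefect hT c t γ = odeDefect hT c' t γ := by
  have hm : Measurable fun p => ‖c p - c' p‖ₑ := (hc.sub hc').enorm
  have hzero : ∫⁻ γ, (∫⁻ r in Ioc 0 T, ‖c (r, γ (projIcc 0 T hT r)) -
      c' (r, γ (projIcc 0 T hT r))‖ₑ) ∂ν = 0 := by
    rw [lintegral_lintegral_comp_path hT hν hm]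
    refine (lintegral_congr_ae ?_).trans lintegral_zero
    filter_upwards [h] with r hr
    refine (lintegral_congr_ae ?_).trans lintegral_zero
    filter_upwards [hr] with x hx
    rw [hx, sub_self, enorm_zero]
  have hmp := measurable_comp_path hT hm
  filter_upwards [(lintegral_eq_zero_iff hmp.lintegral_prod_right').1 hzero] with γ hγ t
  have hae := (lintegral_eq_zero_iff (hmp.comp measurable_prodMk_left)).1 hγ
  rw [EventuallyEq, ae_restrict_iff' measurableSet_Ioc] at hae
  refine congrArg (γ t - γ ⟨0, left_mem_Icc.2 hT⟩ - ·) (intervalIntegral.integral_congr_ae ?_)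
  filter_upwards [hae] with r hr hrt
  rw [uIoc_of_le t.2.1] at hrt
  exact sub_eq_zero.1 (enorm_eq_zero.1 (hr ⟨hrt.1, hrt.2.trans t.2.2⟩))

theorem IsWeakSolutionOn.exists_path_measure [FiniteDimensional ℝ E]
    (hw : IsWeakSolutionOn (Icc 0 T) V μ) (hV : Measurable (Function.uncurry V))
    (hbound : ∫⁻ t in Icc 0 T, ⨆ x, ‖V t x‖ₑ ≠ ⊤) (hμ : ∀ t, IsFiniteMeasure (μ t)) {S : ℝ}
    (hS : S ∈ Icc 0 T) (hμS : IsProbabilityMeasure (μ S)) (hT : 0 ≤ T)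
    [MeasurableSpace C(Icc 0 T, E)] [BorelSpace C(Icc 0 T, E)] :
    ∃ ν : Measure C(Icc 0 T, E), (∀ t : Icc 0 T, ν.map (fun γ => γ t) = μ t) ∧
      ∀ᵐ γ ∂ν, ∀ t, odeDefect hT (Function.uncurry V) t γ = 0 := by
  have hs2 : SecondCountableTopology E := secondCountable_of_proper
  obtain ⟨κ, hκ⟩ := hw.exists_kernel_eq_comp_projIcc hT
  have hκμ {t : ℝ} (ht : t ∈ Icc 0 T) : κ t = μ t := by rw [hκ, projIcc_of_mem hT ht]
  have hκfin (t : ℝ) : IsFiniteMeasure (κ t) := hκ t ▸ hμ _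
  obtain ⟨g, hg, hg1, hgi, hVg⟩ := exists_measurable_one_le_ae_le hκfin measurableSet_Icc
    (f := fun t x => ‖V t x‖₊) hV.nnnorm hbound
  have hVg' := ae_restrict_of_ae_restrict_of_subset Ioc_subset_Icc_self hVg
  have hgii (a b : ℝ) : IntervalIntegrable (fun t => (g t : ℝ)) volume a b := by
    simpa using hgi.intervalIntegrable.add (intervalIntegrable_const (c := (1 : ℝ)))
  have hV' := measurable_truncatedField (T := T) hV hg
  obtain ⟨ν, hν, hνκ, hode⟩ := exists_path_measure_of_norm_le hV' hg hg1 hgii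
    norm_truncatedField_le hκfin (hw.univ_truncatedField hT hκ hVg') (S := S) (hκμ hS ▸ hμS) hT
  refine ⟨ν, fun t => (hνκ t).trans (hκμ t.2), ?_⟩
  have hVV' : ∀ᵐ r ∂volume.restrict (Ioc 0 T), ∀ᵐ x ∂κ r,
      Function.uncurry V (r, x) = Function.uncurry (truncatedField T g V) (r, x) := by
    filter_upwards [hVg', ae_restrict_mem measurableSet_Ioc] with r hr hrT
    filter_upwards [hr] with x hx
    exact (truncatedField_eq hrT hx).symm
  filter_upwards [hode, ae_forall_odeDefect_eq_of_ae_eq hT hνκ hV hV' hVV'] with γ hγ hγ' t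
  rw [hγ', hγ]

end Superposition

theorem measure_ext_of_map_eq {α β : Type*} [TopologicalSpace α] [PolishSpace α]
    [MeasurableSpace α] [BorelSpace α] [TopologicalSpace β] [T2Space β] [MeasurableSpace β]
    [BorelSpace β] {ν₁ ν₂ : Measure α} {f : α → β} (hf : Continuous f) {A : Set α}
    (h₁ : ∀ᵐ a ∂ν₁, a ∈ A) (h₂ : ∀ᵐ a ∂ν₂, a ∈ A) (hinj : InjOn f A)
    (h : ν₁.map f = ν₂.map f) : ν₁ = ν₂ := by
  obtain ⟨Γ, hΓ, hΓm, hΓA⟩ := (ae_add_measure_iff.2 ⟨h₁, h₂⟩).exists_measurable_mem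
  have hinjΓ : InjOn f Γ := hinj.mono hΓA
  have hmeasure (ν : Measure α) (hν : ∀ᵐ a ∂ν, a ∈ Γ) {s : Set α} (hs : MeasurableSet s) :
      ν s = ν.map f (f '' (s ∩ Γ)) := by
    rw [Measure.map_apply hf.measurable ((hs.inter hΓm).image_of_continuousOn_injOn
      hf.continuousOn (hinjΓ.mono inter_subset_right))]
    refine measure_congr ?_
    filter_upwards [hν] with a ha
    refine propext ⟨fun has => mem_image_of_mem f ⟨has, ha⟩, ?_⟩
    rintro ⟨b, ⟨hbs, hbΓ⟩, hba⟩
    rwa [← hinjΓ hbΓ ha hba]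
  obtain ⟨hΓ₁, hΓ₂⟩ := ae_add_measure_iff.1 hΓ
  exact Measure.ext fun s hs => by rw [hmeasure ν₁ hΓ₁ hs, hmeasure ν₂ hΓ₂ hs, h]

end ContinuityEquation

theorem stmt10_general {E : Type*} [NormedAddCommGroup E] [NormedSpace ℝ E]
    [FiniteDimensional ℝ E] [MeasurableSpace E] [BorelSpace E] {T : ℝ} (hT : 0 ≤ T)
    {V : ℝ → E → E} (hV : Measurable (Function.uncurry V))
    (hbound : ∫⁻ t in Icc 0 T, ⨆ x, ‖V t x‖ₑ ≠ ⊤) {S : ℝ} (hS : S ∈ Icc 0 T) {B : Set E}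
    (huniq : ∀ γ γ' : C(Icc 0 T, E),
      (∀ t, ContinuityEquation.odeDefect hT (Function.uncurry V) t γ = 0) →
      (∀ t, ContinuityEquation.odeDefect hT (Function.uncurry V) t γ' = 0) →
      γ ⟨S, hS⟩ ∈ B → γ ⟨S, hS⟩ = γ' ⟨S, hS⟩ → γ = γ')
    {μ₁ μ₂ : ℝ → Measure E} (hfin₁ : ∀ t, IsFiniteMeasure (μ₁ t))
    (hfin₂ : ∀ t, IsFiniteMeasure (μ₂ t))
    (hw₁ : ContinuityEquation.IsWeakSolutionOn (Icc 0 T) V μ₁)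
    (hw₂ : ContinuityEquation.IsWeakSolutionOn (Icc 0 T) V μ₂)
    (hprob : IsProbabilityMeasure (μ₁ S)) (hB : ∀ᵐ x ∂μ₁ S, x ∈ B) (heq : μ₁ S = μ₂ S) :
    ∀ t ∈ Icc 0 T, μ₁ t = μ₂ t := by
  have hs2 : SecondCountableTopology E := secondCountable_of_proper
  borelize C(Icc 0 T, E)
  obtain ⟨ν₁, hν₁, hode₁⟩ := hw₁.exists_path_measure hV hbound hfin₁ hS hprob hT
  obtain ⟨ν₂, hν₂, hode₂⟩ := hw₂.exists_path_measure hV hbound hfin₂ hS (heq ▸ hprob) hT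
  have heval : Continuous fun γ : C(Icc 0 T, E) => γ ⟨S, hS⟩ := continuous_eval_const _
  have hB₁ : ∀ᵐ γ : C(Icc 0 T, E) ∂ν₁, γ ⟨S, hS⟩ ∈ B :=
    ae_of_ae_map heval.measurable.aemeasurable (by rwa [hν₁])
  have hB₂ : ∀ᵐ γ : C(Icc 0 T, E) ∂ν₂, γ ⟨S, hS⟩ ∈ B :=
    ae_of_ae_map heval.measurable.aemeasurable (by rwa [hν₂, ← heq])
  have hν : ν₁ = ν₂ := ContinuityEquation.measure_ext_of_map_eq heval (hode₁.and hB₁)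
    (hode₂.and hB₂) (fun γ hγ γ' hγ' => huniq γ γ' hγ.1 hγ'.1 hγ.2)
    ((hν₁ ⟨S, hS⟩).trans (heq.trans (hν₂ ⟨S, hS⟩).symm))
  intro t ht
  rw [← hν₁ ⟨t, ht⟩, hν, hν₂]

/-- if for every `x` in a Borel set `B` there is at most one
ODE solution through `(S,x)`, and `μ` is a probability measure concentrated
on `B`, then there is at most one nonnegative-measure-valued solution of the
continuity equation with value `μ` at time `S`. -/
theorem stmt10 (d : ℕ) (T : ℝ) (hT : 0 ≤ T)
    (V : ℝ → EuclideanSpace ℝ (Fin d) → EuclideanSpace ℝ (Fin d))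
    (hV : Measurable (Function.uncurry V))
    (hbound : (∫⁻ t in Set.Icc (0:ℝ) T, ⨆ x, (‖V t x‖₊ : ℝ≥0∞)) < ⊤)
    (S : ℝ) (hS : S ∈ Set.Icc (0:ℝ) T)
    (B : Set (EuclideanSpace ℝ (Fin d))) (hB : MeasurableSet B)
    (huniq : ∀ x ∈ B, ∀ γ γ' : C(Set.Icc (0:ℝ) T, EuclideanSpace ℝ (Fin d)),
      IsSolution T hT V γ → IsSolution T hT V γ' →
      γ ⟨S, hS⟩ = x → γ' ⟨S, hS⟩ = x → γ = γ')
    (μ : Measure (EuclideanSpace ℝ (Fin d))) (hμ : IsProbabilityMeasure μ)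
    (hconc : μ Bᶜ = 0) :
    ∀ μ₁ μ₂ : ℝ → Measure (EuclideanSpace ℝ (Fin d)),
      (∀ t, IsFiniteMeasure (μ₁ t)) → (∀ t, IsFiniteMeasure (μ₂ t)) →
      IsMeasureSolution T V μ₁ → IsMeasureSolution T V μ₂ →
      μ₁ S = μ → μ₂ S = μ →
      ∀ t ∈ Set.Icc (0:ℝ) T, μ₁ t = μ₂ t := by
  intro μ₁ μ₂ hfin₁ hfin₂ hw₁ hw₂ rfl hS₂
  exact stmt10_general hT hV hbound.ne hS (fun γ γ' hγ hγ' hγB heq =>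
    huniq _ hγB γ γ' (fun t => sub_eq_zero.1 (hγ t)) (fun t => sub_eq_zero.1 (hγ' t)) rfl heq.symm)
    hfin₁ hfin₂ hw₁ hw₂ hμ (mem_ae_iff.2 hconc) hS₂.symm
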